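/- arXiv:2507.18991 — 2 statements merged into one kernel-verified Lean document; each statement's English description precedes it below -/
import Mathlib

section
/- Let u be a nonconstant harmonic polynomial on ℝ² of degree d. Then the singular set S(u) = {z ∈ ℝ² : u(z) = 0 and ∇u(z) = 0} is finite, the set {u ≠ 0} has a finite number k of connected components, and the algebraic formula k = 1 + d + ∑_{z ∈ S(u)} (ord_z(u) − 1) holds, where ord_z(u) is the order of vanishing of u at z. -/
open MeasureTheory Metric Filter

/-- The set of connected components of a subset `S` of a topological space. -/
def nodalComponents {X : Type*} [TopologicalSpace X] (S : Set X) : Set (Set X) :=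
  {C | ∃ x ∈ S, connectedComponentIn S x = C}

/-- A polynomial `P ∈ ℝ[x₁,…,xₙ]` is harmonic if `∑ i, ∂²P/∂xᵢ²` is the zero polynomial. -/
def IsHarmonicPoly {n : ℕ} (P : MvPolynomial (Fin n) ℝ) : Prop :=
  ∑ i, MvPolynomial.pderiv i (MvPolynomial.pderiv i P) = 0

/-- The polynomial function on ℝⁿ associated with `P ∈ ℝ[x₁,…,xₙ]`. -/
noncomputable def polyFun {n : ℕ} (P : MvPolynomial (Fin n) ℝ)
    (x : EuclideanSpace ℝ (Fin n)) : ℝ :=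
  MvPolynomial.eval (fun i => x i) P

/-- The singular set `S(u) = {z : u(z) = 0, ∇u(z) = 0}` of the polynomial function of `P`. -/
def singSet {n : ℕ} (P : MvPolynomial (Fin n) ℝ) : Set (EuclideanSpace ℝ (Fin n)) :=
  {z | polyFun P z = 0 ∧ ∀ i, polyFun (MvPolynomial.pderiv i P) z = 0}

/-- The order of vanishing of `P` at `z`: the smallest total degree of a nonzero term
in the expansion of `P(z + x)` in powers of `x`. -/
noncomputable def vanishOrder {n : ℕ} (P : MvPolynomial (Fin n) ℝ)
    (z : EuclideanSpace ℝ (Fin n)) : ℕ :=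
  sInf {k | MvPolynomial.homogeneousComponent k
    (MvPolynomial.aeval (fun i => MvPolynomial.X i + MvPolynomial.C (z i)) P) ≠ 0}

namespace HarmEuler
open Polynomial Topology

/-- Critical values. -/
def CV (F : ℂ[X]) : Set ℂ := F.eval '' {k | F.derivative.eval k = 0}

/-- Sections of `F` over `Q`. -/
def IsSec (F : ℂ[X]) (Q : Set ℂ) (s : ℂ → ℂ) : Prop :=
  ContinuousOn s Q ∧ ∀ w ∈ Q, F.eval (s w) = w

lemma IsSec.mono {F : ℂ[X]} {Q Q' : Set ℂ} {s : ℂ → ℂ} (h : IsSec F Q s) (hQ : Q' ⊆ Q) :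
    IsSec F Q' s := ⟨h.1.mono hQ, fun w hw => h.2 w (hQ hw)⟩

lemma exists_sec (F : ℂ[X]) {Q : Set ℂ} (hQ : IsOpen Q) {q : ℂ} (hstar : StarConvex ℝ q Q)
    (hCV : ∀ w ∈ Q, w ∉ CV F) {z : ℂ} (hz : F.eval z ∈ Q) :
    ∃ s, IsSec F Q s ∧ s (F.eval z) = z := by
  classical
  have h1 : ContractibleSpace Q := hstar.contractibleSpace ⟨_, hz⟩
  have h2 : SimplyConnectedSpace Q := SimplyConnectedSpace.ofContractible _
  have h3 := hQ.locallyPathConnectedSpace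
  obtain ⟨f, ⟨hf0, hf⟩, -⟩ := F.isCoveringMapOn_eval.existsUnique_continuousMap_lifts
    (⟨Subtype.val, continuous_subtype_val⟩ : C(Q, ℂ)) (a₀ := ⟨F.eval z, hz⟩) (e₀ := z) rfl
    (fun a => hCV a a.2)
  obtain ⟨g, hg⟩ : ∃ g : ℂ → ℂ, ∀ z : Q, g z = f z :=
    ⟨fun z ↦ if hz : z ∈ Q then f ⟨z, hz⟩ else 0, by simp⟩
  refine ⟨g, ⟨?_, ?_⟩, ?_⟩
  · rw [continuousOn_iff_continuous_domRestrict]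
    convert! map_continuous f
    ext z
    exact hg z
  · intro x hx
    lift x to Q using hx
    simpa [hg] using congrFun hf x
  · exact (hg ⟨_, hz⟩).trans hf0

lemma locinj (F : ℂ[X]) {z : ℂ} (hz : F.derivative.eval z ≠ 0) :
    ∃ N ∈ 𝓝 z, Set.InjOn (fun x => F.eval x) N := by
  have h := (F.hasStrictDerivAt z).hasStrictFDerivAt_equiv hz
  refine ⟨_, (h.toOpenPartialHomeomorph _).open_source.mem_nhds
    h.mem_toOpenPartialHomeomorph_source, ?_⟩
  exact (h.toOpenPartialHomeomorph _).injOn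

lemma sec_unique (F : ℂ[X]) {Q : Set ℂ} (hQ : IsPreconnected Q)
    (hCV : ∀ w ∈ Q, w ∉ CV F) {s t : ℂ → ℂ} (hs : IsSec F Q s) (ht : IsSec F Q t)
    {a : ℂ} (ha : a ∈ Q) (hst : s a = t a) : Set.EqOn s t Q := by
  have hne : ∀ s, IsSec F Q s → ∀ w ∈ Q, F.derivative.eval (s w) ≠ 0 := by
    intro s hs w hw h0
    exact hCV w hw ⟨s w, h0, hs.2 w hw⟩
  have inj : IsLocallyInjective (fun x : {x : ℂ // F.derivative.eval x ≠ 0} => F.eval x.1) := by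
    rw [isLocallyInjective_iff_nhds]
    intro x
    obtain ⟨N, hN, hi⟩ := locinj F x.2
    refine ⟨Subtype.val ⁻¹' N, continuous_subtype_val.continuousAt.preimage_mem_nhds hN, ?_⟩
    intro a ha b hb hab
    exact Subtype.ext (hi ha hb hab)
  have sep : IsSeparatedMap (fun x : {x : ℂ // F.derivative.eval x ≠ 0} => F.eval x.1) :=
    T2Space.isSeparatedMap _
  have : PreconnectedSpace Q := isPreconnected_iff_preconnectedSpace.1 hQ
  have := sep.eq_of_comp_eq inj (A := Q) (g₁ := fun w => ⟨s w, hne s hs w w.2⟩)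
    (g₂ := fun w => ⟨t w, hne t ht w w.2⟩)
    ((continuousOn_iff_continuous_domRestrict.1 hs.1).subtype_mk _)
    ((continuousOn_iff_continuous_domRestrict.1 ht.1).subtype_mk _)
    (by ext w; simp [hs.2 w w.2, ht.2 w w.2]) ⟨a, ha⟩ (Subtype.ext hst)
  intro w hw
  exact congrArg Subtype.val (congrFun this ⟨w, hw⟩)

/-- The part of the ray from `w0` through `v` starting at `v`. -/
def ray (w0 v : ℂ) : Set ℂ := {w | ∃ r : ℝ, 1 ≤ r ∧ w = w0 + r * (v - w0)}

lemma mem_ray_iff {w0 v w : ℂ} (h : v ≠ w0) : w ∈ ray w0 v ↔ Wbtw ℝ w0 v w := by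
  have hv : v - w0 ≠ 0 := sub_ne_zero.2 h
  constructor
  · rintro ⟨r, hr, rfl⟩
    have hr0 : (r : ℂ) ≠ 0 := by exact_mod_cast (by linarith : r ≠ 0)
    refine ⟨r⁻¹, ⟨by positivity, inv_le_one_of_one_le₀ hr⟩, ?_⟩
    simp [AffineMap.lineMap_apply]
    field_simp
    ring
  · rintro ⟨t, ⟨ht0, ht1⟩, hv'⟩
    simp [AffineMap.lineMap_apply] at hv'
    have ht : t ≠ 0 := by
      rintro rfl
      apply h; rw [← hv']; simp
    have htc : (t : ℂ) ≠ 0 := by exact_mod_cast ht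
    refine ⟨t⁻¹, (one_le_inv₀ (lt_of_le_of_ne ht0 (Ne.symm ht))).2 ht1, ?_⟩
    rw [← hv']
    push_cast
    field_simp
    ring

lemma isClosed_ray {w0 v : ℂ} (h : v ≠ w0) : IsClosed (ray w0 v) := by
  have : ray w0 v = {w | dist w0 v + dist v w = dist w0 w} := by
    ext w
    rw [mem_ray_iff h, Set.mem_ofPred_eq, dist_add_dist_eq_iff]
  rw [this]
  exact isClosed_eq (by fun_prop) (by fun_prop)

/-- The star domain. -/
def Sl (F : ℂ[X]) (w0 : ℂ) : Set ℂ := {w | ∀ v ∈ CV F, w ∉ ray w0 v}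

/-- Genericity of the base point. -/
def Gen (F : ℂ[X]) (w0 : ℂ) : Prop :=
  w0 ∉ CV F ∧ ∀ v ∈ CV F, ∀ v' ∈ CV F, v ≠ v' → ∀ r : ℝ, v' - w0 ≠ r * (v - w0)

lemma CV_finite {F : ℂ[X]} (hF : F.derivative ≠ 0) : (CV F).Finite := by
  apply Set.Finite.image
  apply (F.derivative.roots.toFinset.finite_toSet).subset
  intro x hx
  simpa [hF] using hx

lemma Gen.ne {F : ℂ[X]} {w0 v : ℂ} (h : Gen F w0) (hv : v ∈ CV F) : v ≠ w0 :=
  fun e => h.1 (e ▸ hv)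

lemma isOpen_Sl {F : ℂ[X]} {w0 : ℂ} (hF : F.derivative ≠ 0) (h : Gen F w0) :
    IsOpen (Sl F w0) := by
  have : Sl F w0 = (⋃ v ∈ CV F, ray w0 v)ᶜ := by ext; simp [Sl]
  rw [this, isOpen_compl_iff]
  exact (CV_finite hF).isClosed_biUnion fun v hv => isClosed_ray (h.ne hv)

lemma mem_ray_self (w0 v : ℂ) : v ∈ ray w0 v := ⟨1, le_refl _, by simp⟩

lemma Sl_CV {F : ℂ[X]} {w0 : ℂ} : ∀ w ∈ Sl F w0, w ∉ CV F :=
  fun w hw hv => hw w hv (mem_ray_self _ _)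

lemma w0_mem {F : ℂ[X]} {w0 : ℂ} (h : Gen F w0) : w0 ∈ Sl F w0 := by
  rintro v hv ⟨r, hr, h1⟩
  have h2 : v - w0 ≠ 0 := sub_ne_zero.2 (h.ne hv)
  have : (r : ℂ) ≠ 0 := by exact_mod_cast (by linarith : r ≠ 0)
  have h3 : (r : ℂ) * (v - w0) = 0 := by linear_combination -h1
  exact (mul_ne_zero this h2) h3

/-- Going outwards along a ray from a point on the backward segment. -/
lemma ray_star {w0 v w : ℂ} (hv : v ≠ w0) {a t : ℝ} (ha : a < 1) (ht0 : 0 ≤ t)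
    (ht1 : t ≤ 1)
    (h : (1 - t : ℝ) * (w0 + a * (v - w0)) + t * w ∈ ray w0 v) : w ∈ ray w0 v := by
  obtain ⟨r, hr, h⟩ := h
  have h2 : v - w0 ≠ 0 := sub_ne_zero.2 hv
  have ht : t ≠ 0 := by
    rintro rfl
    have : ((a : ℂ) - r) * (v - w0) = 0 := by push_cast at h; linear_combination h
    have : (a : ℂ) - r = 0 := by simpa [h2] using this
    have : a = r := by exact_mod_cast sub_eq_zero.1 this
    linarith
  have htc : (t : ℂ) ≠ 0 := by exact_mod_cast ht
  have htp : 0 < t := lt_of_le_of_ne ht0 (Ne.symm ht)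
  refine ⟨(r - (1 - t) * a) / t, ?_, ?_⟩
  · rw [le_div_iff₀ htp]; nlinarith
  · have : w = (w0 + r * (v - w0) - (1 - t : ℝ) * (w0 + a * (v - w0))) / t := by
      rw [← h]; field_simp; ring
    rw [this]; push_cast; field_simp; ring

lemma star_Sl {F : ℂ[X]} {w0 : ℂ} (h : Gen F w0) : StarConvex ℝ w0 (Sl F w0) := by
  intro w hw a b ha hb hab v hv hr
  refine hw v hv (ray_star (h.ne hv) (a := 0) (t := b) one_pos hb (by linarith) ?_)
  have : 1 - b = a := by linarith
  rw [this]
  simpa using hr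

end HarmEuler

namespace HarmEuler
open Polynomial Topology

lemma der_ne {F : ℂ[X]} (hF : F.natDegree ≠ 0) : F.derivative ≠ 0 := by
  intro h
  exact hF (derivative_eq_zero.1 h)

lemma volume_line (a b : ℂ) : volume {w : ℂ | ∃ r : ℝ, w = a + r * b} = 0 := by
  have h : {w : ℂ | ∃ r : ℝ, w = a + r * b} = (AffineSubspace.mk' a (Submodule.span ℝ {b}) : Set ℂ) := by
    ext w
    simp only [Set.mem_ofPred_eq, SetLike.mem_coe, AffineSubspace.mem_mk', vsub_eq_sub,
      Submodule.mem_span_singleton, Complex.real_smul]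
    constructor
    · rintro ⟨r, h⟩; exact ⟨r, by rw [h]; ring⟩
    · rintro ⟨r, h⟩; exact ⟨r, by rw [h]; ring⟩
  rw [h]
  apply Measure.addHaar_affineSubspace
  intro htop
  have h1 : (Submodule.span ℝ {b} : Submodule ℝ ℂ) = ⊤ := by
    have := congrArg AffineSubspace.direction htop
    simpa using this
  have h2 := finrank_span_le_card (R := ℝ) ({b} : Set ℂ)
  rw [h1, finrank_top, Complex.finrank_real_complex] at h2
  simp at h2

lemma dense_lines {T : Set (ℂ × ℂ)} (hT : T.Finite) :
    Dense {w : ℂ | ∀ x ∈ T, ∀ r : ℝ, w ≠ x.1 + r * x.2} := by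
  apply Measure.dense_of_ae (μ := (volume : Measure ℂ))
  rw [ae_ball_iff hT.countable]
  intro x hx
  have := volume_line x.1 x.2
  rw [ae_iff]
  convert this using 3
  ext w
  simp

lemma exists_gen {F : ℂ[X]} (hF : F.natDegree ≠ 0) {H : Set ℂ} (hH : IsOpen H)
    (hne : H.Nonempty) : ∃ w0 ∈ H, Gen F w0 := by
  have hfin := CV_finite (der_ne hF)
  have hT : ((fun p : ℂ × ℂ => (p.1, p.1 - p.2)) '' (CV F ×ˢ CV F)).Finite := (hfin.prod hfin).image _
  obtain ⟨w, hw, hwH⟩ := (dense_lines hT).inter_open_nonempty H hH hne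
  refine ⟨w, hw, ?_, ?_⟩
  · intro h
    exact hwH _ ⟨(w, w), ⟨h, h⟩, rfl⟩ 0 (by simp)
  · intro v hv v' hv' hne r hr
    have hr1 : (r : ℂ) - 1 ≠ 0 := by
      intro h
      apply hne
      have : (r : ℂ) = 1 := by linear_combination h
      rw [this] at hr
      linear_combination -hr
    refine hwH _ ⟨(v, v'), ⟨hv, hv'⟩, rfl⟩ (r - 1)⁻¹ ?_
    push_cast
    field_simp
    linear_combination hr

lemma dense_Sl {F : ℂ[X]} (hF : F.natDegree ≠ 0) (w0 : ℂ) : Dense (Sl F w0) := by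
  have hT : ((fun v : ℂ => (w0, v - w0)) '' (CV F)).Finite := (CV_finite (der_ne hF)).image _
  refine (dense_lines hT).mono ?_
  rintro w hw v hv ⟨r, -, h⟩
  exact hw _ ⟨v, hv, rfl⟩ r h

lemma dense_pre {F : ℂ[X]} (hF : F.natDegree ≠ 0) (w0 : ℂ) :
    Dense ((fun z => F.eval z) ⁻¹' Sl F w0) :=
  (dense_Sl hF w0).preimage (F.isOpenQuotientMap_eval hF).isOpenMap

lemma fiber_finite {F : ℂ[X]} (hF : F.natDegree ≠ 0) (v : ℂ) : {p | F.eval p = v}.Finite := by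
  have h0 : F - C v ≠ 0 := by
    intro h
    apply hF
    rw [sub_eq_zero.1 h]; simp
  apply ((F - C v).roots.toFinset.finite_toSet).subset
  intro x hx
  have hx : F.eval x = v := hx
  simp [h0, hx]

lemma fiber_near (F : ℂ[X]) (v : ℂ) {ε : ℝ} :
    0 < ε → ∃ δ > 0, ∀ z, F.eval z ∈ ball v δ → ∃ p, F.eval p = v ∧ z ∈ ball p ε := by
  intro hε
  have hK : IsClosed ((⋃ p ∈ {p | F.eval p = v}, ball p ε)ᶜ) := by
    rw [isClosed_compl_iff]
    exact isOpen_biUnion fun _ _ => isOpen_ball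
  have hc := F.isClosedMap_eval _ hK
  have hv : v ∈ (F.eval '' (⋃ p ∈ {p | F.eval p = v}, ball p ε)ᶜ)ᶜ := by
    rintro ⟨x, hx, hxv⟩
    apply hx
    simp only [Set.mem_iUnion]
    exact ⟨x, hxv, mem_ball_self hε⟩
  obtain ⟨δ, hδ, hb⟩ := Metric.isOpen_iff.1 hc.isOpen_compl v hv
  refine ⟨δ, hδ, fun z hz => ?_⟩
  by_contra hcon
  apply hb hz
  refine ⟨z, ?_, rfl⟩
  intro hz'
  simp only [Set.mem_iUnion] at hz'
  obtain ⟨p, hp, hzp⟩ := hz'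
  exact hcon ⟨p, hp, hzp⟩

/-- Good radii at a critical value. -/
structure Loc (F : ℂ[X]) (w0 v : ℂ) (ε δ : ℝ) : Prop where
  he : 0 < ε
  hd : 0 < δ
  disj : ∀ p p' x, F.eval p = v → F.eval p' = v → x ∈ ball p ε → x ∈ ball p' ε → p = p'
  cov : ∀ z, F.eval z ∈ ball v δ → ∃ p, F.eval p = v ∧ z ∈ ball p ε
  conn : IsPreconnected (Sl F w0 ∩ ball v δ)

lemma exists_loc {F : ℂ[X]} (hF : F.natDegree ≠ 0) {w0 v : ℂ} (hG : Gen F w0) (hv : v ∈ CV F) :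
    ∃ ε δ, Loc F w0 v ε δ := by
  obtain ⟨ε, he, hdisj⟩ : ∃ ε > 0, ∀ p p' x, F.eval p = v → F.eval p' = v → x ∈ ball p ε →
      x ∈ ball p' ε → p = p' := by
    have hfin := fiber_finite hF v
    have : ∀ᶠ ε in 𝓝[>] (0:ℝ), ∀ q ∈ {p | F.eval p = v} ×ˢ {p | F.eval p = v}, q.1 ≠ q.2 →
        2 * ε < dist q.1 q.2 := by
      rw [Filter.eventually_all_finite (hfin.prod hfin)]
      intro q _
      by_cases h : q.1 = q.2
      · simp [h]
      · have : Tendsto (fun ε : ℝ => 2 * ε) (𝓝[>] 0) (𝓝 (2 * 0)) :=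
          tendsto_nhdsWithin_of_tendsto_nhds (Continuous.tendsto (by fun_prop) 0)
        filter_upwards [this.eventually_lt_const (show 2 * 0 < dist q.1 q.2 by rw [mul_zero]; exact dist_pos.2 h)] with ε hε _
        exact hε
    obtain ⟨ε, h1, h2⟩ := (this.and self_mem_nhdsWithin).exists
    refine ⟨ε, h2, fun p p' x hp hp' hx hx' => ?_⟩
    by_contra hne
    have := h1 (p, p') ⟨hp, hp'⟩ hne
    have h3 := dist_triangle_left p p' x
    rw [mem_ball] at hx hx'
    simp only at this
    linarith
  obtain ⟨δ1, hδ1, hcov⟩ := fiber_near F v he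
  obtain ⟨δ2, hδ2, hray⟩ : ∃ δ > 0, ∀ w ∈ ball v δ, ∀ v' ∈ CV F, v' ≠ v → w ∉ ray w0 v' := by
    have : ∀ᶠ w in 𝓝 v, ∀ v' ∈ CV F, v' ≠ v → w ∉ ray w0 v' := by
      rw [Filter.eventually_all_finite (CV_finite (der_ne hF))]
      intro v' hv'
      by_cases h : v' = v
      · simp [h]
      · have : v ∈ (ray w0 v')ᶜ := by
          rintro ⟨r, hr, h'⟩
          exact hG.2 v' hv' v hv h r (by linear_combination h')
        filter_upwards [(isClosed_ray (hG.ne hv')).isOpen_compl.mem_nhds this] with w hw _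
        exact hw
    exact Metric.eventually_nhds_iff_ball.1 this
  have hδ : 0 < min δ1 δ2 := lt_min hδ1 hδ2
  refine ⟨ε, min δ1 δ2, he, hδ, hdisj, fun z hz => hcov z (ball_subset_ball (min_le_left _ _) hz), ?_⟩
  have : ∀ᶠ a : ℝ in 𝓝[<] 1, w0 + a * (v - w0) ∈ ball v (min δ1 δ2) := by
    have : Tendsto (fun a : ℝ => w0 + a * (v - w0)) (𝓝[<] 1) (𝓝 (w0 + (1:ℝ) * (v - w0))) :=
      tendsto_nhdsWithin_of_tendsto_nhds (Continuous.tendsto (by fun_prop) 1)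
    apply this
    simpa using ball_mem_nhds v hδ
  obtain ⟨a, ha, ha1⟩ := (this.and self_mem_nhdsWithin).exists
  have ha1 : a < 1 := ha1
  have hstar : StarConvex ℝ (w0 + a * (v - w0)) (Sl F w0 ∩ ball v (min δ1 δ2)) := by
    intro w hw b c hb hc hbc
    have hball := (convex_ball v (min δ1 δ2)).starConvex ha hw.2 hb hc hbc
    refine ⟨?_, hball⟩
    intro v' hv'
    by_cases h : v' = v
    · subst h
      intro hr
      refine hw.1 v' hv' (ray_star (a := a) (t := c) (hG.ne hv') ha1 hc (by linarith) ?_)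
      have : 1 - c = b := by linarith
      rw [this]
      simpa only [Complex.real_smul] using hr
    · exact hray _ (ball_subset_ball (min_le_right _ _) hball) v' hv' h
  rcases (Sl F w0 ∩ ball v (min δ1 δ2)).eq_empty_or_nonempty with h | h
  · rw [h]; exact isPreconnected_empty
  · exact (hstar.isPathConnected (hstar.mem h)).isConnected.isPreconnected

/-- A lift over a connected set near `v` stays in one ball. -/
lemma Loc.single {F : ℂ[X]} {w0 v : ℂ} {ε δ : ℝ} (L : Loc F w0 v ε δ) {Q : Set ℂ} {s : ℂ → ℂ}
    (hQ : IsPreconnected Q) (hne : Q.Nonempty) (hQb : Q ⊆ ball v δ) (hs : IsSec F Q s) :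
    ∃ p, F.eval p = v ∧ ∀ w ∈ Q, s w ∈ ball p ε := by
  obtain ⟨w, hw⟩ := hne
  obtain ⟨p, hp, hsp⟩ := L.cov (s w) (by rw [hs.2 w hw]; exact hQb hw)
  refine ⟨p, hp, ?_⟩
  have hpre : IsPreconnected (s '' Q) := hQ.image s hs.1
  have key : s '' Q ⊆ ball p ε := by
    refine hpre.subset_left_of_subset_union isOpen_ball
      (isOpen_biUnion (s := {p' | F.eval p' = v ∧ p' ≠ p}) (f := fun p' => ball p' ε)
        fun _ _ => isOpen_ball) ?_ ?_ ⟨s w, ⟨w, hw, rfl⟩, hsp⟩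
    · rw [Set.disjoint_left]
      intro x hx hx'
      simp only [Set.mem_iUnion] at hx'
      obtain ⟨p', ⟨hp', hne⟩, hx''⟩ := hx'
      exact hne (L.disj _ _ _ hp' hp hx'' hx)
    · rintro _ ⟨w', hw', rfl⟩
      obtain ⟨p', hp', hsp'⟩ := L.cov (s w') (by rw [hs.2 w' hw']; exact hQb hw')
      by_cases h : p' = p
      · left; rwa [← h]
      · right
        simp only [Set.mem_iUnion]
        exact ⟨p', ⟨hp', h⟩, hsp'⟩
  exact fun w hw => key ⟨w, hw, rfl⟩

lemma Loc.nonempty {F : ℂ[X]} (hF : F.natDegree ≠ 0) {w0 v : ℂ} {ε δ : ℝ} (L : Loc F w0 v ε δ) :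
    (Sl F w0 ∩ ball v δ).Nonempty := by
  obtain ⟨x, hx, hx'⟩ := (dense_Sl hF w0).inter_open_nonempty _ isOpen_ball ⟨v, mem_ball_self L.hd⟩
  exact ⟨x, hx', hx⟩

lemma Loc.lim {F : ℂ[X]} (hF : F.natDegree ≠ 0) {w0 v : ℂ} {ε δ : ℝ}
    (L : Loc F w0 v ε δ) {s : ℂ → ℂ} (hs : IsSec F (Sl F w0) s) :
    ∃ p, F.eval p = v ∧ (∀ w ∈ Sl F w0 ∩ ball v δ, s w ∈ ball p ε) ∧
      Tendsto s (𝓝[Sl F w0] v) (𝓝 p) := by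
  obtain ⟨p, hp, hb⟩ := L.single L.conn (L.nonempty hF) Set.inter_subset_right
    (hs.mono Set.inter_subset_left)
  refine ⟨p, hp, hb, ?_⟩
  rw [Metric.tendsto_nhds]
  intro ε' hε'
  obtain ⟨δ', hδ', hc⟩ := fiber_near F v (lt_min hε' L.he)
  have h1 : ball v (min δ δ') ∈ 𝓝[Sl F w0] v :=
    mem_nhdsWithin_of_mem_nhds (ball_mem_nhds _ (lt_min L.hd hδ'))
  filter_upwards [h1, self_mem_nhdsWithin] with w hw hwS
  obtain ⟨p', hp', hsp'⟩ := hc (s w) (by rw [hs.2 w hwS]; exact ball_subset_ball (min_le_right _ _) hw)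
  have := L.disj p' p _ hp' hp (ball_subset_ball (min_le_right _ _) hsp')
    (hb w ⟨hwS, ball_subset_ball (min_le_left _ _) hw⟩)
  rw [← this]
  exact ball_subset_ball (min_le_left _ _) hsp'

end HarmEuler

namespace HarmEuler
open Polynomial Topology

/-- A choice of sections through all points of the base fibre. -/
def Sheets (F : ℂ[X]) (w0 : ℂ) (s : {e : ℂ // F.eval e = w0} → ℂ → ℂ) : Prop :=
  ∀ e, IsSec F (Sl F w0) (s e) ∧ s e w0 = e

lemma exists_sheets {F : ℂ[X]} (hF : F.natDegree ≠ 0) {w0 : ℂ} (hG : Gen F w0) :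
    ∃ s, Sheets F w0 s := by
  have : ∀ e : {e : ℂ // F.eval e = w0}, ∃ s, IsSec F (Sl F w0) s ∧ s w0 = e := by
    intro e
    obtain ⟨s, hs, h⟩ := exists_sec F (isOpen_Sl (der_ne hF) hG) (star_Sl hG) Sl_CV (z := e)
      (by rw [e.2]; exact w0_mem hG)
    rw [e.2] at h
    exact ⟨s, hs, h⟩
  choose s hs using this
  exact ⟨s, hs⟩

lemma preconn_Sl {F : ℂ[X]} {w0 : ℂ} (hG : Gen F w0) : IsPreconnected (Sl F w0) :=
  ((star_Sl hG).isPathConnected (w0_mem hG)).isConnected.isPreconnected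

lemma Sheets.cover {F : ℂ[X]} (hF : F.natDegree ≠ 0) {w0 : ℂ} (hG : Gen F w0)
    {s : {e : ℂ // F.eval e = w0} → ℂ → ℂ} (hs : Sheets F w0 s) {z : ℂ}
    (hz : F.eval z ∈ Sl F w0) : ∃ e, s e (F.eval z) = z := by
  obtain ⟨t, ht, htz⟩ := exists_sec F (isOpen_Sl (der_ne hF) hG) (star_Sl hG) Sl_CV (z := z) hz
  have h0 := ht.2 w0 (w0_mem hG)
  refine ⟨⟨t w0, h0⟩, ?_⟩
  rw [sec_unique F (preconn_Sl hG) Sl_CV (hs ⟨t w0, h0⟩).1 ht (w0_mem hG) (hs _).2 hz, htz]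

lemma Sheets.inj {F : ℂ[X]} {w0 : ℂ} (hG : Gen F w0)
    {s : {e : ℂ // F.eval e = w0} → ℂ → ℂ} (hs : Sheets F w0 s) {w : ℂ} (hw : w ∈ Sl F w0)
    {e e' : {e : ℂ // F.eval e = w0}} (h : s e w = s e' w) : e = e' := by
  have := sec_unique F (preconn_Sl hG) Sl_CV (hs e).1 (hs e').1 hw h (w0_mem hG)
  rw [(hs e).2, (hs e').2] at this
  exact Subtype.ext this

/-- Limit of a sheet at `v`. -/
noncomputable def lm (F : ℂ[X]) (w0 : ℂ) (s : {e : ℂ // F.eval e = w0} → ℂ → ℂ)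
    (e : {e : ℂ // F.eval e = w0}) (v : ℂ) : ℂ := limUnder (𝓝[Sl F w0] v) (s e)

lemma nebot_Sl {F : ℂ[X]} (hF : F.natDegree ≠ 0) (w0 v : ℂ) : (𝓝[Sl F w0] v).NeBot :=
  mem_closure_iff_nhdsWithin_neBot.1 (dense_Sl hF w0 v)

lemma lm_spec {F : ℂ[X]} (hF : F.natDegree ≠ 0) {w0 v : ℂ} {ε δ : ℝ}
    (L : Loc F w0 v ε δ) {s : {e : ℂ // F.eval e = w0} → ℂ → ℂ} (hs : Sheets F w0 s)
    (e : {e : ℂ // F.eval e = w0}) :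
    F.eval (lm F w0 s e v) = v ∧ (∀ w ∈ Sl F w0 ∩ ball v δ, s e w ∈ ball (lm F w0 s e v) ε) ∧
      Tendsto (s e) (𝓝[Sl F w0] v) (𝓝 (lm F w0 s e v)) := by
  obtain ⟨p, hp, h1, h2⟩ := L.lim hF (hs e).1
  have := nebot_Sl hF w0 v
  have h : lm F w0 s e v = p := h2.limUnder_eq
  rw [h]
  exact ⟨hp, h1, h2⟩

lemma near_crit {F : ℂ[X]} (hF : F.natDegree ≠ 0) {w0 p : ℂ} (hG : Gen F w0)
    (hp : F.eval p ∈ CV F) {s : {e : ℂ // F.eval e = w0} → ℂ → ℂ} (hs : Sheets F w0 s) :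
    ∀ᶠ z in 𝓝 p, ∀ e, F.eval z ∈ Sl F w0 → s e (F.eval z) = z → lm F w0 s e (F.eval p) = p := by
  obtain ⟨ε, δ, L⟩ := exists_loc hF hG hp
  have h1 : ∀ᶠ z in 𝓝 p, F.eval z ∈ ball (F.eval p) δ :=
    F.continuous.continuousAt (ball_mem_nhds _ L.hd)
  filter_upwards [h1, ball_mem_nhds p L.he] with z hz hzp e hS hse
  obtain ⟨h2, h3, -⟩ := lm_spec hF L hs e
  have h4 := h3 _ ⟨hS, hz⟩
  rw [hse] at h4
  exact L.disj _ _ _ h2 rfl h4 hzp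

lemma near_sec {F : ℂ[X]} {Q : Set ℂ} (hQ : IsOpen Q) {s : ℂ → ℂ} (hs : IsSec F Q s)
    (hCV : ∀ w ∈ Q, w ∉ CV F) {z : ℂ} (hz : F.eval z ∈ Q) (hsz : s (F.eval z) = z) :
    ∀ᶠ x in 𝓝 z, F.eval x ∈ Q ∧ s (F.eval x) = x := by
  obtain ⟨N, hN, hi⟩ := locinj F (z := z) (fun h => hCV _ hz ⟨z, h, rfl⟩)
  have hc : ContinuousAt (fun x => s (F.eval x)) z :=
    ContinuousAt.comp (f := fun x => F.eval x) (hs.1.continuousAt (hQ.mem_nhds hz))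
      F.continuous.continuousAt
  have h1 : ∀ᶠ x in 𝓝 z, s (F.eval x) ∈ N := hc (by change N ∈ 𝓝 (s (F.eval z)); rw [hsz]; exact hN)
  have h2 : ∀ᶠ x in 𝓝 z, F.eval x ∈ Q := F.continuous.continuousAt (hQ.mem_nhds hz)
  filter_upwards [hN, h1, h2] with x hx hx1 hx2
  exact ⟨hx2, hi hx1 hx (hs.2 _ hx2)⟩

lemma near_reg {F : ℂ[X]} (hF : F.natDegree ≠ 0) {w0 z : ℂ} (hG : Gen F w0)
    {s : {e : ℂ // F.eval e = w0} → ℂ → ℂ} (hs : Sheets F w0 s) (hz : F.eval z ∈ Sl F w0)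
    {e : {e : ℂ // F.eval e = w0}} (he : s e (F.eval z) = z) :
    ∀ᶠ x in 𝓝 z, ∀ e', F.eval x ∈ Sl F w0 → s e' (F.eval x) = x → e' = e := by
  filter_upwards [near_sec (isOpen_Sl (der_ne hF) hG) (hs e).1 Sl_CV hz he] with x hx e' hS he'
  exact hs.inj hG hS (he'.trans hx.2.symm)

/-- A thin convex cone. -/
def cone (η : ℝ) : Set ℂ := {ζ | ζ.im < η * ζ.re ∧ -ζ.im < η * ζ.re}

lemma exists_cone {F : ℂ[X]} (hF : F.natDegree ≠ 0) {w0 v : ℂ} (hG : Gen F w0) (hv : v ∈ CV F) :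
    ∃ η > 0, ∀ v' ∈ CV F, (v' - w0) / (v - w0) ∈ cone η → v' = v := by
  have hu : v - w0 ≠ 0 := sub_ne_zero.2 (hG.ne hv)
  have : ∀ᶠ η in 𝓝[>] (0:ℝ), ∀ v' ∈ CV F, (v' - w0) / (v - w0) ∈ cone η → v' = v := by
    rw [Filter.eventually_all_finite (CV_finite (der_ne hF))]
    intro v' hv'
    by_cases h : v' = v
    · simp [h]
    · have him : ((v' - w0) / (v - w0)).im ≠ 0 := by
        intro h0
        apply hG.2 v hv v' hv' (Ne.symm h) ((v' - w0) / (v - w0)).re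
        have : ((((v' - w0) / (v - w0)).re : ℝ) : ℂ) = (v' - w0) / (v - w0) := by
          apply Complex.ext <;> simp [h0]
        rw [this]; field_simp
      have ht : Tendsto (fun η : ℝ => η * ((v' - w0) / (v - w0)).re) (𝓝[>] 0)
          (𝓝 (0 * ((v' - w0) / (v - w0)).re)) :=
        tendsto_nhdsWithin_of_tendsto_nhds (Continuous.tendsto (by fun_prop) 0)
      rw [zero_mul] at ht
      filter_upwards [ht.eventually_lt_const (abs_pos.2 him)] with η hη hc
      have : |((v' - w0) / (v - w0)).im| < η * ((v' - w0) / (v - w0)).re :=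
        abs_lt.2 ⟨by linarith [hc.2], hc.1⟩
      linarith
  obtain ⟨η, h1, h2⟩ := (this.and self_mem_nhdsWithin).exists
  exact ⟨η, h2, h1⟩

lemma near_slit {F : ℂ[X]} (hF : F.natDegree ≠ 0) {w0 v z : ℂ} (hG : Gen F w0)
    (hv : v ∈ CV F) {s : {e : ℂ // F.eval e = w0} → ℂ → ℂ} (hs : Sheets F w0 s)
    (hz : F.eval z ∈ ray w0 v) (hne : F.eval z ≠ v) :
    ∃ p, F.eval p = v ∧
      ∀ᶠ x in 𝓝 z, ∀ e, F.eval x ∈ Sl F w0 → s e (F.eval x) = x → lm F w0 s e v = p := by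
  obtain ⟨η, hη, hcone⟩ := exists_cone hF hG hv
  obtain ⟨ε, δ, L⟩ := exists_loc hF hG hv
  have hu : v - w0 ≠ 0 := sub_ne_zero.2 (hG.ne hv)
  set Q : Set ℂ := {w | (w - v) / (v - w0) ∈ cone η} with hQdef
  have hQo : IsOpen Q := by
    have : Q = {w | ((w - v) / (v - w0)).im < η * ((w - v) / (v - w0)).re} ∩
      {w | -((w - v) / (v - w0)).im < η * ((w - v) / (v - w0)).re} := rfl
    rw [this]
    refine (isOpen_lt ?_ ?_).inter (isOpen_lt ?_ ?_) <;> fun_prop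
  have hlin : ∀ (x y : ℂ) (a b : ℝ), a + b = 1 → (a • x + b • y - v) / (v - w0) =
      a * ((x - v) / (v - w0)) + b * ((y - v) / (v - w0)) := by
    intro x y a b hab
    have : (a : ℂ) + b = 1 := by exact_mod_cast hab
    simp only [Complex.real_smul]
    field_simp
    linear_combination v * this
  have hQc : Convex ℝ Q := by
    intro x hx y hy a b ha hb hab
    have hx : (x - v) / (v - w0) ∈ cone η := hx
    have hy : (y - v) / (v - w0) ∈ cone η := hy
    change (a • x + b • y - v) / (v - w0) ∈ cone η
    rw [hlin x y a b hab]
    generalize (x - v) / (v - w0) = X at *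
    generalize (y - v) / (v - w0) = Y at *
    obtain ⟨h1, h2⟩ := hx
    obtain ⟨h3, h4⟩ := hy
    constructor <;> simp <;> rcases ha.eq_or_lt with rfl | ha'
    · have : b = 1 := by linarith
      subst this; simpa using h3
    · nlinarith [mul_lt_mul_of_pos_left h1 ha', mul_le_mul_of_nonneg_left h3.le hb]
    · have : b = 1 := by linarith
      subst this; simpa using h4
    · nlinarith [mul_lt_mul_of_pos_left h2 ha', mul_le_mul_of_nonneg_left h4.le hb]
  have hshift : ∀ w ∈ Q, (w - w0) / (v - w0) ∈ cone η := by
    intro w hw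
    have hw : (w - v) / (v - w0) ∈ cone η := hw
    have : (w - w0) / (v - w0) = (w - v) / (v - w0) + 1 := by field_simp; ring
    rw [this]
    obtain ⟨h1, h2⟩ := hw
    constructor <;> simp <;> nlinarith
  have hvQ : v ∉ Q := by
    intro h
    have h : (v - v) / (v - w0) ∈ cone η := h
    simp [cone] at h
  have hQCV : ∀ w ∈ Q, w ∉ CV F := by
    intro w hw hwc
    have := hcone w hwc (hshift w hw)
    exact hvQ (this ▸ hw)
  have hreal : ∀ t : ℝ, 0 < t → v + t * (v - w0) ∈ Q := by
    intro t ht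
    change (v + t * (v - w0) - v) / (v - w0) ∈ cone η
    have : (v + t * (v - w0) - v) / (v - w0) = t := by field_simp; ring
    rw [this]
    simp [cone, hη, ht]
  have hzQ : F.eval z ∈ Q := by
    obtain ⟨r, hr, hz⟩ := hz
    have hr1 : r ≠ 1 := by
      rintro rfl
      apply hne; rw [hz]; simp
    have : F.eval z = v + (r - 1 : ℝ) * (v - w0) := by rw [hz]; push_cast; ring
    rw [this]
    exact hreal _ (by rcases hr.eq_or_lt with h | h; exact absurd h.symm hr1; linarith)
  obtain ⟨σ, hσ, hσz⟩ := exists_sec F hQo (hQc.starConvex hzQ) hQCV hzQ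
  have hQb : (Q ∩ ball v δ).Nonempty := by
    have ht : Tendsto (fun t : ℝ => v + t * (v - w0)) (𝓝[>] 0) (𝓝 (v + (0:ℝ) * (v - w0))) :=
      tendsto_nhdsWithin_of_tendsto_nhds (Continuous.tendsto (by fun_prop) 0)
    have : ∀ᶠ t : ℝ in 𝓝[>] 0, v + t * (v - w0) ∈ ball v δ :=
      ht (by simpa using ball_mem_nhds v L.hd)
    obtain ⟨t, h1, h2⟩ := (this.and self_mem_nhdsWithin).exists
    exact ⟨_, hreal t h2, h1⟩
  obtain ⟨p, hp, hb⟩ := L.single (hQc.inter (convex_ball v δ)).isPreconnected hQb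
    Set.inter_subset_right (hσ.mono Set.inter_subset_left)
  refine ⟨p, hp, ?_⟩
  filter_upwards [near_sec hQo hσ hQCV hzQ hσz] with x hx e hS hse
  obtain ⟨hxQ, hσx⟩ := hx
  set y := F.eval x with hy
  set J : Set ℂ := (fun τ : ℝ => v + τ * (y - v)) '' Set.Ioc 0 1 with hJ
  have hJpre : IsPreconnected J := isPreconnected_Ioc.image _ (by fun_prop)
  have hJQ : J ⊆ Q := by
    rintro _ ⟨τ, ⟨h0, h1⟩, rfl⟩
    have hyQ : (y - v) / (v - w0) ∈ cone η := hxQ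
    change (v + τ * (y - v) - v) / (v - w0) ∈ cone η
    have : (v + τ * (y - v) - v) / (v - w0) = τ * ((y - v) / (v - w0)) := by field_simp; ring
    rw [this]
    obtain ⟨h2, h3⟩ := hyQ
    constructor <;> simp <;> nlinarith
  have hJS : J ⊆ Sl F w0 := by
    rintro _ ⟨τ, ⟨h0, h1⟩, rfl⟩ v' hv' ⟨r, hr, hrr⟩
    have hr0 : (r : ℂ) ≠ 0 := by exact_mod_cast (by linarith : r ≠ 0)
    have hτ0 : (τ : ℂ) ≠ 0 := by exact_mod_cast h0.ne'
    have hc := hshift _ (hJQ ⟨τ, ⟨h0, h1⟩, rfl⟩)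
    have hrr : v + τ * (y - v) = w0 + r * (v' - w0) := hrr
    have hv'c : (v' - w0) / (v - w0) ∈ cone η := by
      have h5 : (v + τ * (y - v) - w0) / (v - w0) = r * ((v' - w0) / (v - w0)) := by
        rw [hrr]; ring
      simp only at hc
      rw [h5] at hc
      obtain ⟨h2, h3⟩ := hc
      simp at h2 h3
      constructor <;> nlinarith
    have := hcone v' hv' hv'c
    subst this
    refine hS v' hv' ⟨1 + (r - 1) / τ, ?_, ?_⟩
    · have : 0 ≤ (r - 1) / τ := div_nonneg (by linarith) h0.le
      linarith
    · push_cast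
      field_simp
      linear_combination hrr
  have hyJ : y ∈ J := ⟨1, ⟨one_pos, le_rfl⟩, by simp⟩
  have heq := sec_unique F hJpre (fun w hw => hQCV w (hJQ hw)) ((hs e).1.mono hJS) (hσ.mono hJQ)
    hyJ (hse.trans hσx.symm)
  obtain ⟨w, hwJ, hwb⟩ : ∃ w ∈ J, w ∈ ball v δ := by
    have ht : Tendsto (fun t : ℝ => v + t * (y - v)) (𝓝[>] 0) (𝓝 (v + (0:ℝ) * (y - v))) :=
      tendsto_nhdsWithin_of_tendsto_nhds (Continuous.tendsto (by fun_prop) 0)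
    have : ∀ᶠ t : ℝ in 𝓝[>] 0, v + t * (y - v) ∈ ball v δ :=
      ht (by simpa using ball_mem_nhds v L.hd)
    obtain ⟨t, h1, h2⟩ := (this.and (Ioc_mem_nhdsGT one_pos)).exists
    exact ⟨_, ⟨t, h2, rfl⟩, h1⟩
  obtain ⟨h2, h3, -⟩ := lm_spec hF L hs e
  have h4 := h3 w ⟨hJS hwJ, hwb⟩
  have h5 := hb w ⟨hJQ hwJ, hwb⟩
  rw [← heq hwJ] at h5
  exact L.disj _ _ _ h2 hp h4 h5

end HarmEuler

namespace HarmEuler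
open Polynomial Topology

lemma near_all {F : ℂ[X]} (hF : F.natDegree ≠ 0) {w0 : ℂ} (hG : Gen F w0) {H : Set ℂ}
    (hHc : Convex ℝ H) (hw0 : w0 ∈ H)
    {s : {e : ℂ // F.eval e = w0} → ℂ → ℂ} (hs : Sheets F w0 s)
    {φ : {e : ℂ // F.eval e = w0} → ℝ}
    (hφ : ∀ p, F.eval p ∈ CV F → F.eval p ∈ H → ∀ e e', lm F w0 s e (F.eval p) = p →
      lm F w0 s e' (F.eval p) = p → φ e = φ e') {z : ℂ} (hz : F.eval z ∈ H) :
    ∃ c, ∀ᶠ x in 𝓝 z, ∀ e, F.eval x ∈ Sl F w0 → s e (F.eval x) = x → φ e = c := by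
  have key : ∀ p, F.eval p ∈ CV F → F.eval p ∈ H →
      ∃ c, ∀ e, lm F w0 s e (F.eval p) = p → φ e = c := by
    intro p h1 h2
    by_cases h : ∃ e, lm F w0 s e (F.eval p) = p
    · obtain ⟨e, he⟩ := h
      exact ⟨φ e, fun e' he' => hφ p h1 h2 e' e he' he⟩
    · exact ⟨0, fun e he => absurd ⟨e, he⟩ h⟩
  by_cases hS : F.eval z ∈ Sl F w0
  · obtain ⟨e, he⟩ := hs.cover hF hG hS
    refine ⟨φ e, ?_⟩
    filter_upwards [near_reg hF hG hs hS he] with x hx e' h1 h2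
    rw [hx e' h1 h2]
  · have : ∃ v ∈ CV F, F.eval z ∈ ray w0 v := by
      by_contra hcon
      apply hS
      intro v hv hr
      exact hcon ⟨v, hv, hr⟩
    obtain ⟨v, hv, hr⟩ := this
    by_cases hzv : F.eval z = v
    · subst hzv
      obtain ⟨c, hc⟩ := key z hv hz
      refine ⟨c, ?_⟩
      filter_upwards [near_crit hF hG hv hs] with x hx e h1 h2
      exact hc e (hx e h1 h2)
    · obtain ⟨p, hp, h⟩ := near_slit hF hG hv hs hr hzv
      have hvH : v ∈ H := by
        have h1 := (mem_ray_iff (hG.ne hv)).1 hr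
        exact hHc.segment_subset hw0 hz (mem_segment_iff_wbtw.2 h1)
      obtain ⟨c, hc⟩ := key p (hp ▸ hv) (hp ▸ hvH)
      refine ⟨c, ?_⟩
      filter_upwards [h] with x hx e h1 h2
      exact hc e (by rw [hp]; exact hx e h1 h2)

lemma const_on {F : ℂ[X]} (hF : F.natDegree ≠ 0) {w0 : ℂ} (hG : Gen F w0) {H : Set ℂ}
    (hHc : Convex ℝ H) (hw0 : w0 ∈ H)
    {s : {e : ℂ // F.eval e = w0} → ℂ → ℂ} (hs : Sheets F w0 s)
    {φ : {e : ℂ // F.eval e = w0} → ℝ}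
    (hφ : ∀ p, F.eval p ∈ CV F → F.eval p ∈ H → ∀ e e', lm F w0 s e (F.eval p) = p →
      lm F w0 s e' (F.eval p) = p → φ e = φ e') {K : Set ℂ} (hK : IsPreconnected K)
    (hKH : ∀ z ∈ K, F.eval z ∈ H) {e e' : {e : ℂ // F.eval e = w0}} (he : e.1 ∈ K)
    (he' : e'.1 ∈ K) : φ e = φ e' := by
  set O : ℝ → Set ℂ := fun c => {z | ∀ᶠ x in 𝓝 z, ∀ e, F.eval x ∈ Sl F w0 →
    s e (F.eval x) = x → φ e = c} with hO
  have hopen : ∀ c, IsOpen (O c) := fun c => isOpen_setOfPred_eventually_nhds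
  have hdisj : ∀ c c' z, z ∈ O c → z ∈ O c' → c = c' := by
    intro c c' z hc hc'
    have h := (hc.and hc')
    obtain ⟨x, hxS, hx⟩ := (dense_pre hF w0).inter_nhds_nonempty h
    obtain ⟨e, he⟩ := hs.cover hF hG hxS
    rw [← hx.1 e hxS he, ← hx.2 e hxS he]
  have hmem : ∀ e : {e : ℂ // F.eval e = w0}, e.1 ∈ O (φ e) := by
    intro e
    have h1 : F.eval e.1 ∈ Sl F w0 := by rw [e.2]; exact w0_mem hG
    have h2 : s e (F.eval e.1) = e.1 := by rw [e.2]; exact (hs e).2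
    change ∀ᶠ x in 𝓝 e.1, _
    filter_upwards [near_reg hF hG hs h1 h2] with x hx e' h1 h2
    rw [hx e' h1 h2]
  have hsub : K ⊆ O (φ e) := by
    refine hK.subset_left_of_subset_union (hopen _)
      (isOpen_biUnion (s := {c | c ≠ φ e}) (f := O) fun c _ => hopen c) ?_ ?_ ⟨e.1, he, hmem e⟩
    · rw [Set.disjoint_left]
      intro x hx hx'
      simp only [Set.mem_iUnion] at hx'
      obtain ⟨c, hc, hxc⟩ := hx'
      exact hc (hdisj _ _ _ hxc hx)
    · intro z hz
      obtain ⟨c, hc⟩ := near_all hF hG hHc hw0 hs hφ (hKH z hz)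
      by_cases h : c = φ e
      · left; rw [← h]; exact hc
      · right
        simp only [Set.mem_iUnion]
        exact ⟨c, h, hc⟩
  exact hdisj _ _ _ (hsub he') (hmem e')

lemma sheet_conn {F : ℂ[X]} {w0 : ℂ} (hG : Gen F w0) {H : Set ℂ}
    (hHc : Convex ℝ H) (hw0 : w0 ∈ H)
    {s : {e : ℂ // F.eval e = w0} → ℂ → ℂ} (hs : Sheets F w0 s) (e : {e : ℂ // F.eval e = w0}) :
    IsPreconnected (s e '' (Sl F w0 ∩ H)) := by
  refine IsPreconnected.image ?_ _ ((hs e).1.1.mono Set.inter_subset_left)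
  have : StarConvex ℝ w0 (Sl F w0 ∩ H) := (star_Sl hG).inter (hHc.starConvex hw0)
  exact (this.isPathConnected ⟨w0_mem hG, hw0⟩).isConnected.isPreconnected

lemma sheet_sub {F : ℂ[X]} {w0 : ℂ} {H : Set ℂ}
    {s : {e : ℂ // F.eval e = w0} → ℂ → ℂ} (hs : Sheets F w0 s) (e : {e : ℂ // F.eval e = w0}) :
    s e '' (Sl F w0 ∩ H) ⊆ {z | F.eval z ∈ H} := by
  rintro _ ⟨w, hw, rfl⟩
  change F.eval (s e w) ∈ H
  rw [(hs e).1.2 w hw.1]; exact hw.2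

lemma base_mem {F : ℂ[X]} {w0 : ℂ} (hG : Gen F w0) {H : Set ℂ} (hw0 : w0 ∈ H)
    {s : {e : ℂ // F.eval e = w0} → ℂ → ℂ} (hs : Sheets F w0 s) (e : {e : ℂ // F.eval e = w0}) :
    e.1 ∈ s e '' (Sl F w0 ∩ H) := ⟨w0, ⟨w0_mem hG, hw0⟩, (hs e).2⟩

lemma comp_lm {F : ℂ[X]} (hF : F.natDegree ≠ 0) {w0 : ℂ} (hG : Gen F w0) {H : Set ℂ}
    (hHo : IsOpen H) (hHc : Convex ℝ H) (hw0 : w0 ∈ H)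
    {s : {e : ℂ // F.eval e = w0} → ℂ → ℂ} (hs : Sheets F w0 s) {p : ℂ} (hp : F.eval p ∈ CV F)
    (hpH : F.eval p ∈ H) {e : {e : ℂ // F.eval e = w0}} (he : lm F w0 s e (F.eval p) = p) :
    connectedComponentIn {z | F.eval z ∈ H} e.1 = connectedComponentIn {z | F.eval z ∈ H} p := by
  obtain ⟨ε, δ, L⟩ := exists_loc hF hG hp
  obtain ⟨-, -, ht⟩ := lm_spec hF L hs e
  rw [he] at ht
  have hcl : p ∈ closure (s e '' (Sl F w0 ∩ H)) := by
    have := nebot_Sl hF w0 (F.eval p)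
    refine mem_closure_of_tendsto ht ?_
    filter_upwards [self_mem_nhdsWithin, mem_nhdsWithin_of_mem_nhds (hHo.mem_nhds hpH)] with w h1 h2
    exact ⟨w, ⟨h1, h2⟩, rfl⟩
  have hpre : IsPreconnected (insert p (s e '' (Sl F w0 ∩ H))) :=
    (sheet_conn hG hHc hw0 hs e).subset_closure (Set.subset_insert _ _)
      (Set.insert_subset hcl subset_closure)
  have hsub : insert p (s e '' (Sl F w0 ∩ H)) ⊆ {z | F.eval z ∈ H} :=
    Set.insert_subset hpH (sheet_sub hs e)
  have := hpre.subset_connectedComponentIn (x := e.1) (Or.inr (base_mem hG hw0 hs e)) hsub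
  exact connectedComponentIn_eq (this (Or.inl rfl))

lemma comp_surj {F : ℂ[X]} (hF : F.natDegree ≠ 0) {w0 : ℂ} (hG : Gen F w0) {H : Set ℂ}
    (hHo : IsOpen H) (hHc : Convex ℝ H) (hw0 : w0 ∈ H) :
    nodalComponents {z | F.eval z ∈ H} =
      Set.range fun e : {e : ℂ // F.eval e = w0} => connectedComponentIn {z | F.eval z ∈ H} e.1 := by
  obtain ⟨s, hs⟩ := exists_sheets hF hG
  have hU : IsOpen {z | F.eval z ∈ H} := hHo.preimage F.continuous
  ext K
  constructor
  · rintro ⟨z, hz, rfl⟩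
    obtain ⟨x, hx, hxS⟩ := (dense_pre hF w0).inter_open_nonempty _ hU.connectedComponentIn
      ⟨z, mem_connectedComponentIn hz⟩
    obtain ⟨e, he⟩ := hs.cover hF hG hxS
    refine ⟨e, ?_⟩
    have hxU := connectedComponentIn_subset _ _ hx
    rw [connectedComponentIn_eq hx]
    have := (sheet_conn hG hHc hw0 hs e).subset_connectedComponentIn (base_mem hG hw0 hs e)
      (sheet_sub hs e)
    exact connectedComponentIn_eq (this ⟨_, ⟨hxS, hxU⟩, he⟩)
  · rintro ⟨e, rfl⟩
    exact ⟨e.1, by change F.eval e.1 ∈ H; rw [e.2]; exact hw0, rfl⟩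

lemma rels_iff {F : ℂ[X]} (hF : F.natDegree ≠ 0) {w0 : ℂ} (hG : Gen F w0) {H : Set ℂ}
    (hHo : IsOpen H) (hHc : Convex ℝ H) (hw0 : w0 ∈ H)
    {s : {e : ℂ // F.eval e = w0} → ℂ → ℂ} (hs : Sheets F w0 s)
    (φ : {e : ℂ // F.eval e = w0} → ℝ) :
    (∀ p, F.eval p ∈ CV F → F.eval p ∈ H → ∀ e e', lm F w0 s e (F.eval p) = p →
      lm F w0 s e' (F.eval p) = p → φ e = φ e') ↔
    ∀ e e' : {e : ℂ // F.eval e = w0}, connectedComponentIn {z | F.eval z ∈ H} e.1 =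
      connectedComponentIn {z | F.eval z ∈ H} e'.1 → φ e = φ e' := by
  constructor
  · intro hφ e e' h
    have hm : ∀ e : {e : ℂ // F.eval e = w0}, e.1 ∈ {z | F.eval z ∈ H} := fun e => by
      change F.eval e.1 ∈ H; rw [e.2]; exact hw0
    refine const_on hF hG hHc hw0 hs hφ (isPreconnected_connectedComponentIn (x := e.1)
      (F := {z | F.eval z ∈ H})) (fun z hz => connectedComponentIn_subset {z | F.eval z ∈ H} e.1 hz)
      (mem_connectedComponentIn (hm e)) ?_
    rw [h]; exact mem_connectedComponentIn (hm e')
  · intro h p hp hpH e e' he he'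
    exact h e e' ((comp_lm hF hG hHo hHc hw0 hs hp hpH he).trans
      (comp_lm hF hG hHo hHc hw0 hs hp hpH he').symm)

/-! ### Counting roots -/

lemma roots_fiber {F : ℂ[X]} (hF : F.natDegree ≠ 0) {w0 : ℂ} (hG : Gen F w0)
    [Fintype {e : ℂ // F.eval e = w0}]
    {s : {e : ℂ // F.eval e = w0} → ℂ → ℂ} (hs : Sheets F w0 s) {w : ℂ} (hw : w ∈ Sl F w0) :
    (F - C w).roots = Finset.univ.val.map fun e => s e w := by
  classical
  have h0 : F - C w ≠ 0 := by
    intro h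
    apply hF
    rw [sub_eq_zero.1 h]; simp
  have hnd : (F - C w).roots.Nodup := by
    rw [Multiset.nodup_iff_count_le_one]
    intro a
    rw [count_roots]
    by_contra hcon
    have h1 := (one_lt_rootMultiplicity_iff_isRoot h0).1 (not_le.1 hcon)
    have h2 : F.derivative.eval a = 0 := by simpa [IsRoot] using h1.2
    have h3 : F.eval a = w := by simpa [IsRoot, sub_eq_zero] using h1.1
    exact Sl_CV w hw ⟨a, h2, h3⟩
  rw [Multiset.Nodup.ext hnd]
  · intro a
    rw [mem_roots h0]
    simp only [IsRoot, eval_sub, eval_C, sub_eq_zero, Multiset.mem_map, Finset.mem_val,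
      Finset.mem_univ, true_and]
    constructor
    · intro h
      obtain ⟨e, he⟩ := hs.cover hF hG (z := a) (by rw [h]; exact hw)
      exact ⟨e, by rw [← h]; exact he⟩
    · rintro ⟨e, rfl⟩
      exact (hs e).1.2 w hw
  · exact Finset.univ.nodup.map fun e e' h => hs.inj hG hw h

lemma eval_fiber {F : ℂ[X]} (hF : F.natDegree ≠ 0) {w0 : ℂ} (hG : Gen F w0)
    [Fintype {e : ℂ // F.eval e = w0}]
    {s : {e : ℂ // F.eval e = w0} → ℂ → ℂ} (hs : Sheets F w0 s) {w : ℂ} (hw : w ∈ Sl F w0)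
    (x : ℂ) : F.eval x - w = F.leadingCoeff * ∏ e, (x - s e w) := by
  have h := (IsAlgClosed.splits (F - C w)).eq_prod_roots
  have hl : (F - C w).leadingCoeff = F.leadingCoeff :=
    leadingCoeff_sub_of_degree_lt (by
      refine lt_of_le_of_lt degree_C_le ?_
      exact natDegree_pos_iff_degree_pos.1 (Nat.pos_of_ne_zero hF))
  have h2 := congrArg (eval x) h
  rw [hl, roots_fiber hF hG hs hw] at h2
  simp only [eval_sub, eval_C, eval_mul, Multiset.map_map, Function.comp_def] at h2
  rw [h2]
  congr 1
  rw [eval_multiset_prod, Multiset.map_map]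
  simp only [Function.comp_def, eval_sub, eval_X, eval_C]
  rfl

lemma roots_lim {F : ℂ[X]} (hF : F.natDegree ≠ 0) {w0 : ℂ} (hG : Gen F w0)
    [Fintype {e : ℂ // F.eval e = w0}]
    {s : {e : ℂ // F.eval e = w0} → ℂ → ℂ} (hs : Sheets F w0 s) {v : ℂ} (hv : v ∈ CV F) :
    (F - C v).roots = Finset.univ.val.map fun e => lm F w0 s e v := by
  obtain ⟨ε, δ, L⟩ := exists_loc hF hG hv
  have hnb := nebot_Sl hF w0 v
  have hx : ∀ x : ℂ, F.eval x - v = F.leadingCoeff * ∏ e, (x - lm F w0 s e v) := by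
    intro x
    have h1 : Tendsto (fun w => F.eval x - w) (𝓝[Sl F w0] v) (𝓝 (F.eval x - v)) :=
      tendsto_nhdsWithin_of_tendsto_nhds (Continuous.tendsto (by fun_prop) v)
    have h2 : Tendsto (fun w => F.leadingCoeff * ∏ e, (x - s e w)) (𝓝[Sl F w0] v)
        (𝓝 (F.leadingCoeff * ∏ e, (x - lm F w0 s e v))) := by
      refine Tendsto.const_mul _ (tendsto_finsetProd _ fun e _ => ?_)
      exact tendsto_const_nhds.sub (lm_spec hF L hs e).2.2
    refine tendsto_nhds_unique h1 (h2.congr' ?_)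
    filter_upwards [self_mem_nhdsWithin] with w hw
    exact (eval_fiber hF hG hs hw x).symm
  have hpoly : F - C v = C F.leadingCoeff * ∏ e, (X - C (lm F w0 s e v)) := by
    apply Polynomial.funext
    intro x
    rw [eval_mul, eval_prod]
    simpa using hx x
  have hlc : F.leadingCoeff ≠ 0 := by
    rw [leadingCoeff_ne_zero]; rintro rfl; simp at hF
  rw [hpoly, roots_C_mul _ hlc]
  have h := roots_multiset_prod_X_sub_C (Finset.univ.val.map fun e => lm F w0 s e v)
  rw [Multiset.map_map] at h
  exact h

end HarmEuler

namespace HarmEuler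
open Polynomial Topology

/-! ### Linear algebra for the count -/

/-- Functions that are constant on each `A p`, `p ∈ T`. -/
def Vs {E ι : Type*} (A : ι → Finset E) (T : Set ι) : Submodule ℝ (E → ℝ) where
  carrier := {φ | ∀ p ∈ T, ∀ e ∈ A p, ∀ e' ∈ A p, φ e = φ e'}
  add_mem' := by
    intro a b ha hb p hp e he e' he'
    simp only [Pi.add_apply]
    rw [ha p hp e he e' he', hb p hp e he e' he']
  zero_mem' := by intro p hp e he e' he'; rfl
  smul_mem' := by
    intro c a ha p hp e he e' he'
    simp only [Pi.smul_apply]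
    rw [ha p hp e he e' he']

lemma mem_Vs {E ι : Type*} {A : ι → Finset E} {T : Set ι} {φ : E → ℝ} :
    φ ∈ Vs A T ↔ ∀ p ∈ T, ∀ e ∈ A p, ∀ e' ∈ A p, φ e = φ e' := Iff.rfl

lemma Vs_insert {E ι : Type*} [Fintype E] (A : ι → Finset E) (T : Set ι) (p : ι) :
    Module.finrank ℝ (Vs A T) ≤ Module.finrank ℝ (Vs A (insert p T)) + ((A p).card - 1) := by
  classical
  rcases (A p).eq_empty_or_nonempty with h | ⟨a, ha⟩
  · have : Vs A T ≤ Vs A (insert p T) := by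
      intro φ hφ q hq e he e' he'
      rcases hq with rfl | hq
      · rw [h] at he; simp at he
      · exact hφ q hq e he e' he'
    exact (Submodule.finrank_mono this).trans (Nat.le_add_right _ _)
  · let g : (E → ℝ) →ₗ[ℝ] (((A p).erase a : Finset E) → ℝ) :=
      { toFun := fun φ e => φ e.1 - φ a
        map_add' := by intro x y; ext e; simp; ring
        map_smul' := by intro c x; ext e; simp; ring }
    let f := g.domRestrict (Vs A T)
    have h1 := LinearMap.finrank_range_add_finrank_ker f
    have h2 : Module.finrank ℝ (LinearMap.range f) ≤ (A p).card - 1 := by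
      refine (Submodule.finrank_le _).trans ?_
      rw [Module.finrank_fintype_fun_eq_card, Fintype.card_coe, Finset.card_erase_of_mem ha]
    have h3 : Module.finrank ℝ (LinearMap.ker f) ≤ Module.finrank ℝ (Vs A (insert p T)) := by
      rw [← Submodule.finrank_map_subtype_eq]
      refine Submodule.finrank_mono ?_
      rintro _ ⟨⟨φ, hφ⟩, hk, rfl⟩
      have hk' : ∀ e ∈ A p, φ e = φ a := by
        intro e he
        by_cases hea : e = a
        · rw [hea]
        · have := congrFun (LinearMap.mem_ker.1 hk) ⟨e, Finset.mem_erase.2 ⟨hea, he⟩⟩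
          exact sub_eq_zero.1 this
      intro q hq e he e' he'
      rcases hq with rfl | hq
      · exact (hk' e he).trans (hk' e' he').symm
      · exact hφ q hq e he e' he'
    omega

lemma Vs_union {E ι : Type*} [Fintype E] (A : ι → Finset E) (T : Set ι) (S : Finset ι) :
    Module.finrank ℝ (Vs A T) ≤
      Module.finrank ℝ (Vs A (T ∪ S)) + ∑ p ∈ S, ((A p).card - 1) := by
  classical
  induction S using Finset.induction_on with
  | empty => rw [Finset.coe_empty, Set.union_empty]; simp
  | insert p S hp ih =>
    have h := Vs_insert A (T ∪ S) p
    rw [Finset.sum_insert hp, Finset.coe_insert, Set.union_insert]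
    omega

lemma Vs_empty {E ι : Type*} [Fintype E] (A : ι → Finset E) :
    Module.finrank ℝ (Vs A ∅) = Fintype.card E := by
  have : Vs A ∅ = ⊤ := by
    rw [eq_top_iff]
    intro φ _ p hp
    exact absurd hp (Set.notMem_empty p)
  rw [this, finrank_top, Module.finrank_fintype_fun_eq_card]

lemma Vs_factor {E ι Y : Type*} [Fintype E] (A : ι → Finset E) (T : Set ι) (f : E → Y)
    (h : ∀ φ : E → ℝ, φ ∈ Vs A T ↔ ∀ e e', f e = f e' → φ e = φ e') :
    Module.finrank ℝ (Vs A T) = (Set.range f).ncard := by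
  classical
  have hr : Vs A T = LinearMap.range (LinearMap.funLeft ℝ ℝ (Set.rangeFactorization f)) := by
    ext φ
    rw [h]
    constructor
    · intro hφ
      refine ⟨fun y => φ y.2.choose, ?_⟩
      ext e
      rw [LinearMap.funLeft_apply]
      exact hφ _ _ (Set.rangeFactorization f e).2.choose_spec
    · rintro ⟨ψ, rfl⟩ e e' he
      simp only [LinearMap.funLeft_apply]
      congr 1
      exact Subtype.ext he
  rw [hr, LinearMap.finrank_range_of_inj
    (LinearMap.funLeft_injective_of_surjective ℝ ℝ _ Set.rangeFactorization_surjective)]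
  rw [Module.finrank_fintype_fun_eq_card, ← Nat.card_eq_fintype_card]
  rfl

/-! ### The count -/

lemma deriv_mult {F : ℂ[X]} (hF : F.natDegree ≠ 0) (p : ℂ) :
    (F - C (F.eval p)).rootMultiplicity p = F.derivative.rootMultiplicity p + 1 := by
  have h0 : F - C (F.eval p) ≠ 0 := by
    intro h
    apply hF
    rw [sub_eq_zero.1 h]; simp
  have hr : (F - C (F.eval p)).IsRoot p := by simp [IsRoot]
  have h1 := derivative_rootMultiplicity_of_root hr
  have h2 := (rootMultiplicity_pos h0).2 hr
  simp only [derivative_sub, derivative_C, sub_zero] at h1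
  omega

lemma sum_mult (F : ℂ[X]) :
    ∑ p ∈ F.derivative.roots.toFinset, F.derivative.rootMultiplicity p = F.natDegree - 1 := by
  have h := Multiset.toFinset_sum_count_eq F.derivative.roots
  simp only [count_roots] at h
  rw [h, IsAlgClosed.card_roots_eq_natDegree, natDegree_derivative]

theorem count_comp {F : ℂ[X]} (hF : F.natDegree ≠ 0) {H : Set ℂ} [DecidablePred (· ∈ H)]
    (hHo : IsOpen H) (hHc : Convex ℝ H) (hHn : H.Nonempty) :
    (nodalComponents {z | F.eval z ∈ H}).Finite ∧
    (nodalComponents {z | F.eval z ∈ H}).ncard +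
      ∑ p ∈ F.derivative.roots.toFinset with F.eval p ∈ H, F.derivative.rootMultiplicity p
        = F.natDegree := by
  classical
  obtain ⟨w0, hw0, hG⟩ := exists_gen hF hHo hHn
  obtain ⟨s, hs⟩ := exists_sheets hF hG
  have : Finite {e : ℂ // F.eval e = w0} := fiber_finite hF w0
  let _ : Fintype {e : ℂ // F.eval e = w0} := Fintype.ofFinite _
  have hd0 : F.derivative ≠ 0 := der_ne hF
  set A : ℂ → Finset {e : ℂ // F.eval e = w0} :=
    fun p => Finset.univ.filter fun e => lm F w0 s e (F.eval p) = p with hA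
  have hmA : ∀ p e, e ∈ A p ↔ lm F w0 s e (F.eval p) = p := by simp [hA]
  have hcard : ∀ p, F.eval p ∈ CV F → (A p).card = F.derivative.rootMultiplicity p + 1 := by
    intro p hp
    rw [← deriv_mult hF, ← count_roots, roots_lim hF hG hs hp, Multiset.count_map]
    simp only [hA, Finset.card_def, Finset.filter_val]
    congr 1
    refine Multiset.filter_congr fun e _ => eq_comm
  have hcv : ∀ p ∈ F.derivative.roots, F.eval p ∈ CV F := fun p hp =>
    ⟨p, (mem_roots hd0).1 hp, rfl⟩
  have hE : Fintype.card {e : ℂ // F.eval e = w0} = F.natDegree := by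
    have h := roots_fiber hF hG hs (w0_mem hG)
    have h2 := congrArg Multiset.card h
    rw [IsAlgClosed.card_roots_eq_natDegree, natDegree_sub_C] at h2
    rw [h2]; simp
  have hV : ∀ (H : Set ℂ), IsOpen H → Convex ℝ H → w0 ∈ H → ∀ T : Set ℂ,
      (∀ p, p ∈ T ↔ p ∈ F.derivative.roots ∧ F.eval p ∈ H) →
      Module.finrank ℝ (Vs A T) = (nodalComponents {z | F.eval z ∈ H}).ncard := by
    intro H hHo hHc hw0 T hT
    rw [comp_surj hF hG hHo hHc hw0]
    apply Vs_factor
    intro φ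
    rw [← rels_iff hF hG hHo hHc hw0 hs φ, mem_Vs]
    simp only [hmA]
    constructor
    · intro h p hp hpH e e' he he'
      by_cases hr : p ∈ F.derivative.roots
      · exact h p ((hT p).2 ⟨hr, hpH⟩) e he e' he'
      · have h1 := hcard p hp
        rw [rootMultiplicity_eq_zero (fun hh => hr ((mem_roots hd0).2 hh))] at h1
        rw [Finset.card_le_one.1 h1.le e ((hmA _ _).2 he) e' ((hmA _ _).2 he')]
    · intro h p hp e he e' he'
      have := (hT p).1 hp
      exact h p (hcv p this.1) this.2 e e' he he'
  set R := F.derivative.roots.toFinset with hR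
  set RH := R.filter fun p => F.eval p ∈ H with hRH
  set RN := R.filter fun p => ¬ F.eval p ∈ H with hRN
  have e1 := hV H hHo hHc hw0 (RH : Set ℂ) (by intro p; simp [hRH, hR])
  have e2 := hV Set.univ isOpen_univ convex_univ trivial (R : Set ℂ) (by intro p; simp [hR])
  have e3 : (nodalComponents {z | F.eval z ∈ Set.univ}).ncard ≤ 1 := by
    refine (Set.ncard_le_ncard (t := {Set.univ}) ?_ (Set.finite_singleton _)).trans
      (Set.ncard_singleton _).le
    rintro _ ⟨z, -, rfl⟩
    have : {z | F.eval z ∈ Set.univ} = Set.univ := Set.eq_univ_of_forall fun z => trivial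
    rw [this, connectedComponentIn_univ, PreconnectedSpace.connectedComponent_eq_univ]
    rfl
  have f1 := Vs_union A ∅ RH
  have f2 := Vs_union A (RH : Set ℂ) RN
  have hun : (RH : Set ℂ) ∪ RN = R := by
    rw [← Finset.coe_union, Finset.filter_union_filter_not_eq]
  have hs1 : ∀ S : Finset ℂ, S ⊆ R →
      ∑ p ∈ S, ((A p).card - 1) = ∑ p ∈ S, F.derivative.rootMultiplicity p := by
    intro S hS
    refine Finset.sum_congr rfl fun p hp => ?_
    rw [hcard p (hcv p (Multiset.mem_toFinset.1 (hS hp)))]; simp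
  rw [hs1 _ (Finset.filter_subset _ _)] at f1 f2
  rw [Set.empty_union, Vs_empty, hE, e1] at f1
  rw [hun, e1, e2] at f2
  have hsum := sum_mult F
  rw [← hR, ← Finset.sum_filter_add_sum_filter_not R (fun p => F.eval p ∈ H)] at hsum
  refine ⟨?_, ?_⟩
  · rw [comp_surj hF hG hHo hHc hw0]; exact Set.finite_range _
  · simp only [← hRH, ← hRN] at f1 f2 hsum
    omega

end HarmEuler

namespace HarmEuler
open Polynomial Topology

/-! ### Harmonic polynomials are real parts of complex polynomials -/

/-- Coefficientwise real part. -/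
noncomputable def reP (Q : MvPolynomial (Fin 2) ℂ) : MvPolynomial (Fin 2) ℝ :=
  ∑ s ∈ Q.support, MvPolynomial.monomial s (MvPolynomial.coeff s Q).re

lemma coeff_reP (Q : MvPolynomial (Fin 2) ℂ) (s : Fin 2 →₀ ℕ) :
    MvPolynomial.coeff s (reP Q) = (MvPolynomial.coeff s Q).re := by
  classical
  rw [reP, MvPolynomial.coeff_sum]
  simp only [MvPolynomial.coeff_monomial, Finset.sum_ite_eq']
  split_ifs with h
  · rfl
  · rw [MvPolynomial.notMem_support_iff.1 h]; simp

lemma eval_reP (Q : MvPolynomial (Fin 2) ℂ) (x : Fin 2 → ℝ) :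
    MvPolynomial.eval x (reP Q) = (MvPolynomial.eval (fun i => (x i : ℂ)) Q).re := by
  rw [reP, map_sum, MvPolynomial.eval_eq', Complex.re_sum]
  refine Finset.sum_congr rfl fun s _ => ?_
  rw [MvPolynomial.eval_monomial, Finsupp.prod_fintype _ _ (by simp)]
  have : (∏ i, (x i : ℂ) ^ s i) = ((∏ i, x i ^ s i : ℝ) : ℂ) := by push_cast; rfl
  rw [this, Complex.re_mul_ofReal]

/-- The complex variable as a bivariate polynomial. -/
noncomputable def zeta : MvPolynomial (Fin 2) ℂ :=
  ∑ i, (![1, Complex.I] : Fin 2 → ℂ) i • MvPolynomial.X i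

lemma coeff_zeta (F : ℂ[X]) (s : Fin 2 →₀ ℕ) :
    MvPolynomial.coeff s (aeval zeta F) =
      ((s 0 + s 1).choose (s 0) : ℂ) * Complex.I ^ s 1 * F.coeff (s 0 + s 1) := by
  have hsum : s.sum (fun _ m => m) = s 0 + s 1 := by
    simp [Finsupp.sum_fintype]
  have hprod : s.prod (fun r m => (![1, Complex.I] : Fin 2 → ℂ) r ^ m) = Complex.I ^ s 1 := by
    simp [Finsupp.prod_fintype]
  have hmul : s.multinomial = (s 0 + s 1).choose (s 0) := by
    rw [← Finsupp.multinomial_of_support_subset (Finset.subset_univ _)]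
    have hu : (Finset.univ : Finset (Fin 2)) = {0, 1} := rfl
    rw [hu, Nat.binomial_eq_choose (by decide)]
  rw [aeval_eq_sum_range, MvPolynomial.coeff_sum]
  simp only [MvPolynomial.coeff_smul, zeta, MvPolynomial.coeff_linearCombination_X_pow_of_fintype,
    hsum, hprod, hmul, smul_eq_mul]
  simp only [mul_ite, mul_zero, Finset.sum_ite_eq, Finset.mem_range]
  split_ifs with h
  · ring
  · rw [coeff_eq_zero_of_natDegree_lt (by omega)]; simp

/-- The real part of a complex polynomial as a real bivariate polynomial. -/
noncomputable def RP (F : ℂ[X]) : MvPolynomial (Fin 2) ℝ := reP (aeval zeta F)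

lemma coeff_RP (F : ℂ[X]) (s : Fin 2 →₀ ℕ) :
    MvPolynomial.coeff s (RP F) =
      (((s 0 + s 1).choose (s 0) : ℂ) * Complex.I ^ s 1 * F.coeff (s 0 + s 1)).re := by
  rw [RP, coeff_reP, coeff_zeta]

lemma eval_RP (F : ℂ[X]) (x : Fin 2 → ℝ) :
    MvPolynomial.eval x (RP F) = (F.eval (⟨x 0, x 1⟩ : ℂ)).re := by
  rw [RP, eval_reP]
  congr 1
  have : MvPolynomial.eval (fun i => (x i : ℂ)) zeta = ⟨x 0, x 1⟩ := by
    simp only [zeta, Fin.sum_univ_two, map_add, MvPolynomial.smul_eval, MvPolynomial.eval_X]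
    simp only [Matrix.cons_val_zero, Matrix.cons_val_one, one_mul]
    apply Complex.ext <;> simp
  rw [← this, aeval_def, hom_eval₂]
  rw [eval₂_eq_eval_map]
  congr 1
  convert! F.map_id
  ext
  simp

lemma RP_funext {P : MvPolynomial (Fin 2) ℝ} {F : ℂ[X]}
    (h : ∀ x : Fin 2 → ℝ, MvPolynomial.eval x P = (F.eval (⟨x 0, x 1⟩ : ℂ)).re) : P = RP F :=
  MvPolynomial.funext fun x => by rw [h, eval_RP]

/-- The exponent `(i, j)`. -/
noncomputable def ex (i j : ℕ) : Fin 2 →₀ ℕ := Finsupp.single 0 i + Finsupp.single 1 j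

@[simp] lemma ex_zero (i j : ℕ) : ex i j 0 = i := by simp [ex]
@[simp] lemma ex_one (i j : ℕ) : ex i j 1 = j := by simp [ex]

lemma ex_eq (s : Fin 2 →₀ ℕ) : s = ex (s 0) (s 1) := by
  ext i; fin_cases i <;> simp

lemma harm_coeff {P : MvPolynomial (Fin 2) ℝ} (hP : IsHarmonicPoly P) (i j : ℕ) :
    ((j : ℝ) + 1) * (j + 2) * MvPolynomial.coeff (ex i (j + 2)) P =
      - (((i : ℝ) + 1) * (i + 2) * MvPolynomial.coeff (ex (i + 2) j) P) := by
  have h := congrArg (MvPolynomial.coeff (ex i j)) hP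
  rw [Fin.sum_univ_two, MvPolynomial.coeff_add] at h
  simp only [MvPolynomial.coeff_pderiv, MvPolynomial.coeff_zero] at h
  have e1 : ex i j + Finsupp.single 0 1 + Finsupp.single 0 1 = ex (i + 2) j := by
    ext k; fin_cases k <;> simp
  have e2 : ex i j + Finsupp.single 1 1 + Finsupp.single 1 1 = ex i (j + 2) := by
    ext k; fin_cases k <;> simp
  rw [e1, e2] at h
  simp at h
  linarith

lemma harm_zero {P Q : MvPolynomial (Fin 2) ℝ} (hP : IsHarmonicPoly P) (hQ : IsHarmonicPoly Q)
    (h0 : ∀ i, MvPolynomial.coeff (ex i 0) P = MvPolynomial.coeff (ex i 0) Q)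
    (h1 : ∀ i, MvPolynomial.coeff (ex i 1) P = MvPolynomial.coeff (ex i 1) Q) : P = Q := by
  have key : ∀ j i, MvPolynomial.coeff (ex i j) P = MvPolynomial.coeff (ex i j) Q := by
    intro j
    induction j using Nat.twoStepInduction with
    | zero => exact h0
    | one => exact h1
    | more j ih _ =>
      intro i
      have a := harm_coeff hP i j
      have b := harm_coeff hQ i j
      rw [ih (i + 2), ← b] at a
      exact mul_left_cancel₀ (by positivity) a
  ext s
  rw [ex_eq s]; exact key _ _

lemma pderiv_reP (Q : MvPolynomial (Fin 2) ℂ) (i : Fin 2) :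
    MvPolynomial.pderiv i (reP Q) = reP (MvPolynomial.pderiv i Q) := by
  ext s
  rw [coeff_reP, MvPolynomial.coeff_pderiv, MvPolynomial.coeff_pderiv, coeff_reP]
  have : ((s i : ℂ) + 1) = ((s i + 1 : ℝ) : ℂ) := by push_cast; rfl
  rw [this, Complex.re_mul_ofReal]

lemma pderiv_zeta (F : ℂ[X]) (i : Fin 2) :
    MvPolynomial.pderiv i (aeval zeta F) =
      aeval zeta (C ((![1, Complex.I] : Fin 2 → ℂ) i) * F.derivative) := by
  have h : MvPolynomial.pderiv i zeta = MvPolynomial.C ((![1, Complex.I] : Fin 2 → ℂ) i) := by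
    rw [zeta, map_sum]
    simp only [Derivation.map_smul, MvPolynomial.pderiv_X]
    fin_cases i <;> simp [MvPolynomial.smul_eq_C_mul]
  have h2 := (MvPolynomial.pderiv (R := ℂ) i).map_aeval F zeta
  rw [h2, h]
  simp [mul_comm]

lemma pderiv_RP (F : ℂ[X]) (i : Fin 2) :
    MvPolynomial.pderiv i (RP F) = RP (C ((![1, Complex.I] : Fin 2 → ℂ) i) * F.derivative) := by
  rw [RP, pderiv_reP, pderiv_zeta, RP]

lemma RP_harm (F : ℂ[X]) : IsHarmonicPoly (RP F) := by
  rw [IsHarmonicPoly, Fin.sum_univ_two, pderiv_RP, pderiv_RP, pderiv_RP, pderiv_RP]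
  apply MvPolynomial.funext
  intro x
  rw [map_add, eval_RP, eval_RP]
  simp

lemma exists_RP {P : MvPolynomial (Fin 2) ℝ} (hP : IsHarmonicPoly P) : ∃ F : ℂ[X], P = RP F := by
  set N := P.totalDegree with hN
  set c : ℕ → ℂ := fun k => ⟨MvPolynomial.coeff (ex k 0) P,
    -(MvPolynomial.coeff (ex (k - 1) 1) P / k)⟩ with hc
  set F : ℂ[X] := ∑ k ∈ Finset.range (N + 1), monomial k (c k) with hF
  have hz : ∀ i j, N < i + j → MvPolynomial.coeff (ex i j) P = 0 := by
    intro i j h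
    by_contra hcon
    have := MvPolynomial.le_totalDegree (MvPolynomial.mem_support_iff.2 hcon)
    rw [Finsupp.sum_fintype _ _ (by simp)] at this
    simp at this
    omega
  have hco : ∀ k, F.coeff k = c k := by
    intro k
    rw [hF, finsetSum_coeff]
    simp only [coeff_monomial, Finset.sum_ite_eq', Finset.mem_range]
    split_ifs with h
    · rfl
    · rw [hc]
      simp only
      rw [hz k 0 (by omega), hz (k - 1) 1 (by omega)]
      apply Complex.ext <;> simp
  refine ⟨F, harm_zero hP (RP_harm F) ?_ ?_⟩
  · intro i
    rw [coeff_RP, ex_zero, ex_one, hco]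
    simp [hc]
  · intro i
    rw [coeff_RP, ex_zero, ex_one, hco]
    have : (((i + 1).choose i : ℕ) : ℂ) = ((i + 1 : ℝ) : ℂ) := by
      rw [Nat.choose_succ_self_right]; push_cast; rfl
    rw [this, mul_assoc, Complex.re_ofReal_mul]
    have h0 : ((i : ℝ) + 1) ≠ 0 := by positivity
    simp [hc]
    field_simp

lemma homog_RP (F : ℂ[X]) {k : ℕ} (hk : k ≠ 0) :
    MvPolynomial.homogeneousComponent k (RP F) ≠ 0 ↔ F.coeff k ≠ 0 := by
  have hdeg : ∀ s : Fin 2 →₀ ℕ, s.degree = s 0 + s 1 := by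
    intro s; rw [Finsupp.degree_eq_sum]; simp
  rw [not_iff_not]
  constructor
  · intro h
    have h1 := congrArg (MvPolynomial.coeff (ex k 0)) h
    have h2 := congrArg (MvPolynomial.coeff (ex (k - 1) 1)) h
    have hk1 : k - 1 + 1 = k := by omega
    rw [MvPolynomial.coeff_homogeneousComponent, hdeg, coeff_RP] at h1 h2
    simp only [ex_zero, ex_one, add_zero, if_true, hk1, MvPolynomial.coeff_zero] at h1 h2
    have : ((k.choose (k - 1) : ℕ) : ℂ) = ((k : ℝ) : ℂ) := by
      rw [Nat.choose_symm_of_eq_add (b := 1) (by omega)]; simp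
    rw [this, mul_assoc, Complex.re_ofReal_mul] at h2
    have hk' : (k : ℝ) ≠ 0 := by exact_mod_cast hk
    simp [hk'] at h1 h2
    exact Complex.ext h1 h2
  · intro h
    ext s
    rw [MvPolynomial.coeff_homogeneousComponent, hdeg, coeff_RP]
    split_ifs with hs
    · rw [hs, h]; simp
    · simp

lemma homog_zero_RP (F : ℂ[X]) (h : (F.coeff 0).re = 0) :
    MvPolynomial.homogeneousComponent 0 (RP F) = 0 := by
  rw [MvPolynomial.homogeneousComponent_zero, coeff_RP]
  simp [h]

lemma totalDegree_RP (F : ℂ[X]) (h : (RP F).totalDegree ≠ 0) :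
    (RP F).totalDegree = F.natDegree := by
  apply le_antisymm
  · rw [MvPolynomial.totalDegree]
    apply Finset.sup_le
    intro s hs
    rw [Finsupp.sum_fintype _ _ (by simp), Fin.sum_univ_two]
    rw [MvPolynomial.mem_support_iff, coeff_RP] at hs
    apply le_natDegree_of_ne_zero
    intro h0
    rw [h0] at hs
    simp at hs
  · by_cases h0 : F.natDegree = 0
    · omega
    · by_contra hcon
      have h1 : F.coeff F.natDegree ≠ 0 := by
        rw [coeff_natDegree, leadingCoeff_ne_zero]; rintro rfl; simp at h0
      exact (homog_RP F h0).2 h1 (MvPolynomial.homogeneousComponent_eq_zero _ _ (not_le.1 hcon))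

lemma vanish_RP {F : ℂ[X]} (hF : F.natDegree ≠ 0) (z : EuclideanSpace ℝ (Fin 2))
    (hz : (F.eval (⟨z 0, z 1⟩ : ℂ)).re = 0) :
    vanishOrder (RP F) z = F.derivative.rootMultiplicity ⟨z 0, z 1⟩ + 1 := by
  set a : ℂ := ⟨z 0, z 1⟩ with ha
  have hT : MvPolynomial.aeval (fun i => MvPolynomial.X i + MvPolynomial.C (z i)) (RP F) =
      RP (F.comp (X + C a)) := by
    apply RP_funext
    intro x
    have : MvPolynomial.eval x (MvPolynomial.aeval
        (fun i => (MvPolynomial.X i + MvPolynomial.C (z i) : MvPolynomial (Fin 2) ℝ)) (RP F)) =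
        MvPolynomial.eval (fun i => x i + z i) (RP F) := by
      rw [← MvPolynomial.coe_aeval_eq_eval, ← MvPolynomial.coe_aeval_eq_eval]
      change ((MvPolynomial.aeval x).comp (MvPolynomial.aeval _)) (RP F) = _
      rw [MvPolynomial.comp_aeval]
      simp
    rw [this, eval_RP, eval_comp]
    congr 2
    simp only [eval_add, eval_X, eval_C]
    apply Complex.ext <;> simp [ha]
  rw [← deriv_mult hF, rootMultiplicity_eq_natTrailingDegree, vanishOrder, hT, sub_comp, C_comp]
  set G := F.comp (X + C a) with hG
  have hG0 : G.coeff 0 = F.eval a := by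
    rw [hG, coeff_zero_eq_eval_zero, eval_comp]; simp
  rw [← hG0]
  have hne : G - C (G.coeff 0) ≠ 0 := by
    intro h
    have h2 : G.natDegree = 0 := by rw [sub_eq_zero.1 h]; simp
    rw [hG, natDegree_comp] at h2
    simp at h2
    exact hF h2
  have hS : {k | MvPolynomial.homogeneousComponent k (RP G) ≠ 0} =
      {k | (G - C (G.coeff 0)).coeff k ≠ 0} := by
    ext k
    change MvPolynomial.homogeneousComponent k (RP G) ≠ 0 ↔ (G - C (G.coeff 0)).coeff k ≠ 0
    by_cases hk : k = 0
    · subst hk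
      simp [homog_zero_RP G (by rw [hG0]; exact hz)]
    · rw [homog_RP G hk, coeff_sub, coeff_C, if_neg hk, sub_zero]
  rw [hS]
  apply le_antisymm
  · apply Nat.sInf_le
    exact mt coeff_natTrailingDegree_eq_zero.1 hne
  · apply le_csInf
    · exact ⟨(G - C (G.coeff 0)).natTrailingDegree, mt coeff_natTrailingDegree_eq_zero.1 hne⟩
    · intro k hk
      exact natTrailingDegree_le_of_ne_zero hk

lemma mem_singSet_RP {F : ℂ[X]} (z : EuclideanSpace ℝ (Fin 2)) :
    z ∈ singSet (RP F) ↔ (F.eval (⟨z 0, z 1⟩ : ℂ)).re = 0 ∧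
      F.derivative.eval (⟨z 0, z 1⟩ : ℂ) = 0 := by
  change (_ ∧ _) ↔ _
  simp only [polyFun, pderiv_RP, eval_RP, Fin.forall_fin_two]
  refine and_congr Iff.rfl ?_
  simp only [eval_mul, eval_C]
  simp [Complex.ext_iff]

end HarmEuler

namespace HarmEuler
open Polynomial Topology

/-! ### Assembly -/

lemma comp_left {Y : Type*} [TopologicalSpace Y] {A B : Set Y} (hA : IsOpen A) (hB : IsOpen B)
    (hd : Disjoint A B) {x : Y} (hx : x ∈ A) :
    connectedComponentIn (A ∪ B) x = connectedComponentIn A x := by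
  have hxU : x ∈ A ∪ B := Or.inl hx
  apply Set.Subset.antisymm
  · apply isPreconnected_connectedComponentIn.subset_connectedComponentIn
      (mem_connectedComponentIn hxU)
    exact isPreconnected_connectedComponentIn.subset_left_of_subset_union hA hB hd
      (connectedComponentIn_subset _ _) ⟨x, mem_connectedComponentIn hxU, hx⟩
  · exact connectedComponentIn_mono x Set.subset_union_left

lemma nodal_union {Y : Type*} [TopologicalSpace Y] {A B : Set Y} (hA : IsOpen A) (hB : IsOpen B)
    (hd : Disjoint A B) :
    nodalComponents (A ∪ B) = nodalComponents A ∪ nodalComponents B := by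
  ext K
  constructor
  · rintro ⟨x, hx | hx, rfl⟩
    · exact Or.inl ⟨x, hx, (comp_left hA hB hd hx).symm⟩
    · refine Or.inr ⟨x, hx, ?_⟩
      rw [Set.union_comm, comp_left hB hA hd.symm hx]
  · rintro (⟨x, hx, rfl⟩ | ⟨x, hx, rfl⟩)
    · exact ⟨x, Or.inl hx, comp_left hA hB hd hx⟩
    · refine ⟨x, Or.inr hx, ?_⟩
      rw [Set.union_comm, comp_left hB hA hd.symm hx]

lemma nodal_disj {Y : Type*} [TopologicalSpace Y] {A B : Set Y} (hd : Disjoint A B) :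
    Disjoint (nodalComponents A) (nodalComponents B) := by
  rw [Set.disjoint_left]
  rintro _ ⟨x, hx, rfl⟩ ⟨y, hy, h⟩
  have h1 : x ∈ connectedComponentIn B y := by rw [h]; exact mem_connectedComponentIn hx
  exact Set.disjoint_left.1 hd hx (connectedComponentIn_subset _ _ h1)

lemma nodal_image {Y Z : Type*} [TopologicalSpace Y] [TopologicalSpace Z] (h : Y ≃ₜ Z)
    (A : Set Y) : nodalComponents (h '' A) = (fun K => h '' K) '' nodalComponents A := by
  ext K
  constructor
  · rintro ⟨_, ⟨x, hx, rfl⟩, rfl⟩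
    exact ⟨_, ⟨x, hx, rfl⟩, h.image_connectedComponentIn hx⟩
  · rintro ⟨_, ⟨x, hx, rfl⟩, rfl⟩
    exact ⟨h x, ⟨x, hx, rfl⟩, (h.image_connectedComponentIn hx).symm⟩

/-- The identification of `ℂ` with the Euclidean plane. -/
noncomputable def psi : ℂ ≃ₜ EuclideanSpace ℝ (Fin 2) :=
  Complex.orthonormalBasisOneI.repr.toHomeomorph

lemma psi_zero (z : ℂ) : psi z 0 = z.re := by
  change Complex.orthonormalBasisOneI.repr z 0 = _
  rw [Complex.orthonormalBasisOneI_repr_apply]; rfl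

lemma psi_one (z : ℂ) : psi z 1 = z.im := by
  change Complex.orthonormalBasisOneI.repr z 1 = _
  rw [Complex.orthonormalBasisOneI_repr_apply]; rfl

lemma psi_mk (z : ℂ) : (⟨psi z 0, psi z 1⟩ : ℂ) = z := by
  rw [psi_zero, psi_one]

lemma psi_image {p : EuclideanSpace ℝ (Fin 2) → Prop} {q : ℂ → Prop}
    (h : ∀ z, p (psi z) ↔ q z) : {x | p x} = psi '' {z | q z} := by
  ext x
  obtain ⟨z, rfl⟩ := psi.surjective x
  rw [psi.injective.mem_set_image]
  exact h z

theorem main_RP {F : ℂ[X]} (hF : F.natDegree ≠ 0) :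
    (singSet (RP F)).Finite ∧
    (nodalComponents {x | polyFun (RP F) x ≠ 0}).Finite ∧
    (nodalComponents {x | polyFun (RP F) x ≠ 0}).ncard =
      1 + F.natDegree + ∑ᶠ z ∈ singSet (RP F), (vanishOrder (RP F) z - 1) := by
  classical
  have hd0 : F.derivative ≠ 0 := der_ne hF
  set R := F.derivative.roots.toFinset with hR
  set R0 := R.filter fun p => (F.eval p).re = 0 with hR0
  have hsing : singSet (RP F) = psi '' (R0 : Set ℂ) := by
    ext x
    obtain ⟨z, rfl⟩ := psi.surjective x
    rw [psi.injective.mem_set_image, mem_singSet_RP, psi_mk]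
    simp only [hR0, hR, Finset.coe_filter, Multiset.mem_toFinset, mem_roots hd0]
    exact and_comm
  have hfs : ∑ᶠ z ∈ singSet (RP F), (vanishOrder (RP F) z - 1) =
      ∑ p ∈ R0, F.derivative.rootMultiplicity p := by
    rw [hsing, finsum_mem_image psi.injective.injOn, finsum_mem_coe_finset]
    refine Finset.sum_congr rfl fun p hp => ?_
    rw [vanish_RP hF, psi_mk]
    · simp
    · rw [psi_mk]; exact (Finset.mem_filter.1 hp).2
  set Hp : Set ℂ := {w | 0 < w.re} with hHp
  set Hn : Set ℂ := {w | w.re < 0} with hHn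
  have hpo : IsOpen Hp := isOpen_lt continuous_const Complex.continuous_re
  have hno : IsOpen Hn := isOpen_lt Complex.continuous_re continuous_const
  have hpc : Convex ℝ Hp := convex_halfSpace_re_gt 0
  have hnc : Convex ℝ Hn := convex_halfSpace_re_lt 0
  obtain ⟨p1, p2⟩ := count_comp hF hpo hpc ⟨1, by simp [hHp]⟩
  obtain ⟨n1, n2⟩ := count_comp hF hno hnc ⟨-1, by simp [hHn]⟩
  have hdisj : Disjoint {z | F.eval z ∈ Hp} {z | F.eval z ∈ Hn} := by
    rw [Set.disjoint_left]
    intro z h1 h2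
    exact lt_asymm (show 0 < (F.eval z).re from h1) h2
  have hset : {x | polyFun (RP F) x ≠ 0} = psi '' ({z | F.eval z ∈ Hp} ∪ {z | F.eval z ∈ Hn}) := by
    refine psi_image (p := fun x => polyFun (RP F) x ≠ 0)
      (q := fun z => F.eval z ∈ Hp ∨ F.eval z ∈ Hn) fun z => ?_
    rw [polyFun, eval_RP, psi_mk]
    change (F.eval z).re ≠ 0 ↔ 0 < (F.eval z).re ∨ (F.eval z).re < 0
    rw [ne_iff_lt_or_gt, or_comm]
  have hpU : IsOpen {z | F.eval z ∈ Hp} := hpo.preimage F.continuous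
  have hnU : IsOpen {z | F.eval z ∈ Hn} := hno.preimage F.continuous
  rw [hset, nodal_image, nodal_union hpU hnU hdisj]
  refine ⟨?_, (p1.union n1).image _, ?_⟩
  · rw [hsing]; exact R0.finite_toSet.image _
  · rw [Set.ncard_image_of_injective _ (Set.image_injective.2 psi.injective),
      Set.ncard_union_eq (nodal_disj hdisj) p1 n1, hfs]
    have hsum := sum_mult F
    have hsplit : ∑ p ∈ R, F.derivative.rootMultiplicity p =
        ∑ p ∈ R with F.eval p ∈ Hp, F.derivative.rootMultiplicity p +
        ∑ p ∈ R with F.eval p ∈ Hn, F.derivative.rootMultiplicity p +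
        ∑ p ∈ R0, F.derivative.rootMultiplicity p := by
      simp only [hR0, Finset.sum_filter, ← Finset.sum_add_distrib]
      refine Finset.sum_congr rfl fun p _ => ?_
      have hp' : F.eval p ∈ Hp ↔ 0 < (F.eval p).re := Iff.rfl
      have hn' : F.eval p ∈ Hn ↔ (F.eval p).re < 0 := Iff.rfl
      rw [if_congr hp' rfl rfl, if_congr hn' rfl rfl]
      rcases lt_trichotomy (F.eval p).re 0 with h | h | h
      · simp [h, h.not_gt, h.ne]
      · simp [h]
      · simp [h, h.not_gt, h.ne']
    rw [← hR] at hsum p2 n2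
    omega

end HarmEuler

theorem euler_formula_harmonic_polynomial (d : ℕ) (hd : 1 ≤ d)
    (P : MvPolynomial (Fin 2) ℝ) (hP : IsHarmonicPoly P) (hdeg : P.totalDegree = d) :
    (singSet P).Finite ∧
    (nodalComponents {x | polyFun P x ≠ 0}).Finite ∧
    (nodalComponents {x | polyFun P x ≠ 0}).ncard =
      1 + d + ∑ᶠ z ∈ singSet P, (vanishOrder P z - 1) := by
  obtain ⟨F, rfl⟩ := HarmEuler.exists_RP hP
  have h1 := HarmEuler.totalDegree_RP F (by omega)
  have h2 : F.natDegree ≠ 0 := by omega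
  have h3 : d = F.natDegree := by omega
  subst h3
  exact HarmEuler.main_RP h2
end

section
/- Let u be a nontrivial entire harmonic function on ℝ². Then the following are equivalent: (i) there exists k ∈ ℕ, k ≥ 1, such that the set {u ≠ 0} has exactly k connected components; (ii) the limit N∞ = lim_{t→+∞} N(0,u,t) of the Almgren frequency of u at the origin exists and is finite. -/
open MeasureTheory Metric Filter

/-- The Laplacian of `u : ℝⁿ → ℝ` at `x`, as the sum of second partial derivatives. -/
noncomputable def lapl {n : ℕ} (u : EuclideanSpace ℝ (Fin n) → ℝ)
    (x : EuclideanSpace ℝ (Fin n)) : ℝ :=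
  ∑ i, fderiv ℝ (fun y => fderiv ℝ u y (EuclideanSpace.single i 1)) x (EuclideanSpace.single i 1)

/-- `u` is harmonic on all of ℝⁿ: it is C² and its Laplacian vanishes identically. -/
def HarmonicFn {n : ℕ} (u : EuclideanSpace ℝ (Fin n) → ℝ) : Prop :=
  ContDiff ℝ 2 u ∧ ∀ x, lapl u x = 0

/-- `u` is harmonic on the (open) set `Ω`: it is C² on `Ω` and its Laplacian vanishes on `Ω`. -/
def HarmonicFnOn {n : ℕ} (u : EuclideanSpace ℝ (Fin n) → ℝ)
    (Ω : Set (EuclideanSpace ℝ (Fin n))) : Prop :=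
  ContDiffOn ℝ 2 u Ω ∧ ∀ x ∈ Ω, lapl u x = 0

/-- The Dirichlet integral `D(x₀,u,r) = ∫_{B_r(x₀)} |∇u|² dx`. -/
noncomputable def DInt {n : ℕ} (u : EuclideanSpace ℝ (Fin n) → ℝ)
    (x₀ : EuclideanSpace ℝ (Fin n)) (r : ℝ) : ℝ :=
  ∫ x in Metric.ball x₀ r, ‖gradient u x‖ ^ 2

/-- The height `H(x₀,u,r) = ∫_{∂B_r(x₀)} u² dσ`, with respect to the
`(n-1)`-dimensional Hausdorff measure on the sphere. -/
noncomputable def HInt {n : ℕ} (u : EuclideanSpace ℝ (Fin n) → ℝ)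
    (x₀ : EuclideanSpace ℝ (Fin n)) (r : ℝ) : ℝ :=
  ∫ x in Metric.sphere x₀ r, (u x) ^ 2 ∂ μH[(n : ℝ) - 1]

/-- The Almgren frequency `N(x₀,u,r) = r · D(x₀,u,r) / H(x₀,u,r)`. -/
noncomputable def freqN {n : ℕ} (u : EuclideanSpace ℝ (Fin n) → ℝ)
    (x₀ : EuclideanSpace ℝ (Fin n)) (r : ℝ) : ℝ :=
  r * DInt u x₀ r / HInt u x₀ r

/-- ratio lemma: eventually zero coefficients gives a limit -/
lemma ratio_tendsto_of_fin (b : ℕ → ℝ) (d : ℕ) (hd : b d ≠ 0) (hz : ∀ n, d < n → b n = 0) :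
    Tendsto (fun r : ℝ => (∑' n : ℕ, (n : ℝ) * b n * r ^ (2 * n)) / (∑' n : ℕ, b n * r ^ (2 * n)))
      atTop (nhds d) := by
  have h1 : ∀ r : ℝ, ∑' n : ℕ, (n : ℝ) * b n * r ^ (2 * n)
      = ∑ n ∈ Finset.range (d+1), (n : ℝ) * b n * r ^ (2 * n) := by
    intro r
    refine tsum_eq_sum fun n hn => ?_
    simp at hn
    rw [hz n (by omega)]; simp
  have h2 : ∀ r : ℝ, ∑' n : ℕ, b n * r ^ (2 * n)
      = ∑ n ∈ Finset.range (d+1), b n * r ^ (2 * n) := by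
    intro r
    refine tsum_eq_sum fun n hn => ?_
    simp at hn
    rw [hz n (by omega)]; simp
  simp only [h1, h2]
  have key : ∀ c : ℕ → ℝ, Tendsto (fun r : ℝ => (∑ n ∈ Finset.range (d+1), c n * r ^ (2 * n)) / r ^ (2*d))
      atTop (nhds (c d)) := by
    intro c
    have : Tendsto (fun r : ℝ => (∑ n ∈ Finset.range d, c n * (r ^ (2 * d - 2 * n))⁻¹) + c d)
      atTop (nhds ((∑ n ∈ Finset.range d, c n * 0) + c d)) := by
      refine Tendsto.add_const _ (tendsto_finsetSum _ fun n hn => Tendsto.const_mul _ ?_)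
      simp at hn
      exact (tendsto_pow_atTop (by omega)).inv_tendsto_atTop
    simp only [mul_zero, Finset.sum_const_zero, zero_add] at this
    refine this.congr' ?_
    filter_upwards [eventually_gt_atTop 0] with r hr
    rw [Finset.sum_range_succ, add_div, Finset.sum_div]
    congr 1
    · refine Finset.sum_congr rfl fun n hn => ?_
      simp at hn
      have : r ^ (2*d) = r ^ (2*d - 2*n) * r ^ (2*n) := by rw [← pow_add]; congr 1; omega
      rw [this]; field_simp
    · field_simp
  have := (key (fun n => n * b n)).div (key b) hd
  simp only [mul_div_assoc, div_self hd, mul_one] at this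
  refine this.congr' ?_
  filter_upwards [eventually_gt_atTop 0] with r hr
  have : r ^ (2*d) ≠ 0 := by positivity
  exact div_div_div_cancel_right₀ this _ _

lemma fin_of_ratio_tendsto (b : ℕ → ℝ) (hb : ∀ n, 0 ≤ b n)
    (hs : ∀ r : ℝ, Summable fun n : ℕ => b n * r ^ (2 * n))
    (hs' : ∀ r : ℝ, Summable fun n : ℕ => (n : ℝ) * b n * r ^ (2 * n)) (L : ℝ)
    (h : Tendsto (fun r : ℝ => (∑' n : ℕ, (n : ℝ) * b n * r ^ (2 * n)) / (∑' n : ℕ, b n * r ^ (2 * n)))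
      atTop (nhds L)) : ∃ N, ∀ n, N < n → b n = 0 := by
  by_contra! hcon
  obtain ⟨m, hm, hbm⟩ := hcon ⌈|L| + 2⌉₊
  have hm' : |L| + 2 < m := lt_of_le_of_lt (Nat.le_ceil _) (by exact_mod_cast hm)
  have hL := le_abs_self L
  have hbm' : 0 < b m := lt_of_le_of_ne (hb m) (Ne.symm hbm)
  -- polynomial positivity
  have h1 : ∀ᶠ r : ℝ in atTop, 0 < (∑ n ∈ Finset.range m, ((n : ℝ) - (L+1)) * b n * (r ^ (2 * m - 2 * n))⁻¹) + (m - (L+1)) * b m := by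
    have : Tendsto (fun r : ℝ => (∑ n ∈ Finset.range m, ((n : ℝ) - (L+1)) * b n * (r ^ (2 * m - 2 * n))⁻¹) + (m - (L+1)) * b m)
      atTop (nhds ((∑ n ∈ Finset.range m, ((n : ℝ) - (L+1)) * b n * 0) + (m - (L+1)) * b m)) := by
      refine Tendsto.add_const _ (tendsto_finsetSum _ fun n hn => Tendsto.const_mul _ ?_)
      simp at hn
      exact (tendsto_pow_atTop (by omega)).inv_tendsto_atTop
    simp only [mul_zero, Finset.sum_const_zero, zero_add] at this
    exact this.eventually (lt_mem_nhds (mul_pos (by linarith) hbm'))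
  have h2 := h.eventually (gt_mem_nhds (show L < L + 1 by linarith))
  obtain ⟨r, hr1, hr2, hr0⟩ := (h1.and (h2.and (eventually_gt_atTop 0))).exists
  have hpos : 0 < ∑' n : ℕ, b n * r ^ (2 * n) :=
    (hs r).tsum_pos (fun n => mul_nonneg (hb n) (by positivity)) m (by positivity)
  rw [div_lt_iff₀ hpos] at hr2
  have hd := ((hs' r).sub ((hs r).mul_left (L+1)))
  have e : ∑' n : ℕ, (n : ℝ) * b n * r ^ (2 * n) - (L+1) * ∑' n : ℕ, b n * r ^ (2 * n)
      = ∑' n : ℕ, ((n : ℝ) * b n * r ^ (2 * n) - (L+1) * (b n * r ^ (2*n))) := by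
    rw [(hs' r).tsum_sub ((hs r).mul_left (L+1)), tsum_mul_left]
  have le := hd.sum_le_tsum (Finset.range (m+1)) (fun n hn => by
    simp at hn
    have hn' : (m : ℝ) + 1 ≤ n := by exact_mod_cast hn
    have : (n : ℝ) * b n * r ^ (2 * n) - (L+1) * (b n * r ^ (2*n)) = (n - (L+1)) * (b n * r ^ (2*n)) := by ring
    rw [this]
    exact mul_nonneg (by linarith) (mul_nonneg (hb n) (by positivity)))
  have pos : 0 < ∑ n ∈ Finset.range (m+1), ((n : ℝ) * b n * r ^ (2 * n) - (L+1) * (b n * r ^ (2*n))) := by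
    have : ∑ n ∈ Finset.range (m+1), ((n : ℝ) * b n * r ^ (2 * n) - (L+1) * (b n * r ^ (2*n)))
      = r ^ (2*m) * ((∑ n ∈ Finset.range m, ((n : ℝ) - (L+1)) * b n * (r ^ (2 * m - 2 * n))⁻¹) + (m - (L+1)) * b m) := by
      rw [Finset.sum_range_succ, mul_add, Finset.mul_sum]
      congr 1
      · refine Finset.sum_congr rfl fun n hn => ?_
        simp at hn
        have : r ^ (2*m) = r ^ (2*m - 2*n) * r ^ (2*n) := by rw [← pow_add]; congr 1; omega
        rw [this]; field_simp
      · ring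
    rw [this]; positivity
  linarith



lemma orth_circle (r : ℝ) (n m : ℕ) :
    ∫ θ in (0:ℝ)..2 * Real.pi, (circleMap 0 r θ) ^ n * (starRingEnd ℂ) ((circleMap 0 r θ) ^ m)
      = if n = m then 2 * Real.pi * (r : ℂ) ^ (2 * n) else 0 := by
  have h : ∀ θ : ℝ, (circleMap 0 r θ) ^ n * (starRingEnd ℂ) ((circleMap 0 r θ) ^ m)
      = (r : ℂ) ^ (n + m) * Complex.exp ((((n : ℤ) - (m : ℤ) : ℤ) * Complex.I) * θ) := by
    intro θ
    simp only [circleMap, zero_add, map_pow, map_mul, Complex.conj_ofReal, ← Complex.exp_conj, Complex.conj_I, mul_pow, ← Complex.exp_nat_mul]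
    rw [mul_mul_mul_comm, ← pow_add, ← Complex.exp_add]
    congr 2
    rw [Complex.conj_natCast]
    push_cast; ring
  simp only [h, intervalIntegral.integral_const_mul]
  split_ifs with hnm
  · subst hnm; simp; ring
  · have hne : (((n : ℤ) - (m : ℤ) : ℤ) * Complex.I) ≠ 0 := by
      refine mul_ne_zero ?_ Complex.I_ne_zero
      exact Int.cast_ne_zero.2 (sub_ne_zero.2 (by exact_mod_cast hnm))
    rw [integral_exp_mul_complex hne]
    have : Complex.exp ((((n : ℤ) - (m : ℤ) : ℤ) * Complex.I) * ((2 * Real.pi : ℝ) : ℂ)) = 1 := by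
      rw [Complex.exp_eq_one_iff]
      exact ⟨(n : ℤ) - m, by push_cast; ring⟩
    rw [this]; simp

lemma summable_norm_entire (F : ℂ → ℂ) (a : ℕ → ℂ) (ha : ∀ z, HasSum (fun n => a n * z ^ n) (F z)) (r : ℝ) :
    Summable fun n => ‖a n‖ * |r| ^ n := by
  have h := (ha (2 * |r| + 1 : ℝ)).summable.tendsto_atTop_zero
  have h1 : ∀ᶠ n in atTop, ‖a n * (((2 * |r| + 1 : ℝ) : ℂ)) ^ n‖ < 1 := by
    have := h.norm
    simp only [norm_zero] at this
    exact this.eventually (gt_mem_nhds one_pos)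
  refine Summable.of_norm_bounded_eventually_nat (summable_geometric_two) ?_
  filter_upwards [h1] with n hn
  have hr := abs_nonneg r
  rw [norm_mul, norm_pow, Complex.norm_real, Real.norm_of_nonneg (by positivity)] at hn
  rw [Real.norm_of_nonneg (by positivity)]
  have e : |r| ^ n ≤ (1/2) ^ n * (2 * |r| + 1) ^ n := by
    rw [← mul_pow]; gcongr; linarith
  calc ‖a n‖ * |r| ^ n ≤ ‖a n‖ * ((1/2) ^ n * (2 * |r| + 1) ^ n) := by gcongr
    _ = (1/2)^n * (‖a n‖ * (2 * |r| + 1) ^ n) := by ring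
    _ ≤ (1/2)^n * 1 := by gcongr
    _ = _ := by ring

lemma integral_mul_conj (F : ℂ → ℂ) (hF : Continuous F) (a : ℕ → ℂ)
    (ha : ∀ z, HasSum (fun n => a n * z ^ n) (F z)) (r : ℝ) (m : ℕ) :
    ∫ θ in (0:ℝ)..2 * Real.pi, F (circleMap 0 r θ) * (starRingEnd ℂ) ((circleMap 0 r θ) ^ m)
      = a m * (2 * Real.pi * (r : ℂ) ^ (2 * m)) := by
  have hs := summable_norm_entire F a ha r
  have H := intervalIntegral.hasSum_integral_of_dominated_convergence (μ := volume) (a := 0) (b := 2 * Real.pi)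
    (F := fun n (θ : ℝ) => a n * (circleMap 0 r θ) ^ n * (starRingEnd ℂ) ((circleMap 0 r θ) ^ m))
    (f := fun θ => F (circleMap 0 r θ) * (starRingEnd ℂ) ((circleMap 0 r θ) ^ m))
    (fun n _ => ‖a n‖ * |r| ^ n * |r| ^ m)
    (fun n => by
      apply Continuous.aestronglyMeasurable
      have := continuous_circleMap (0:ℂ) r
      have := Complex.continuous_conj
      fun_prop)
    (fun n => by simp)
    (by refine Eventually.of_forall fun t _ => hs.mul_right _)
    (by simp)
    (by refine Eventually.of_forall fun t _ => (ha _).mul_right _)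
  have H2 : ∀ n, ∫ θ in (0:ℝ)..2 * Real.pi, a n * (circleMap 0 r θ) ^ n * (starRingEnd ℂ) ((circleMap 0 r θ) ^ m)
      = if n = m then a n * (2 * Real.pi * (r : ℂ) ^ (2 * n)) else 0 := by
    intro n
    simp only [mul_assoc, intervalIntegral.integral_const_mul]
    have := orth_circle r n m
    rw [this]; split_ifs <;> simp [mul_assoc]
  simp only [H2] at H
  refine H.unique ?_
  have := hasSum_single (f := fun n => if n = m then a n * (2 * Real.pi * (r : ℂ) ^ (2 * n)) else 0) m
    (fun n hn => by simp [hn])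
  simpa using this

lemma parseval (F : ℂ → ℂ) (hF : Continuous F) (a : ℕ → ℂ)
    (ha : ∀ z, HasSum (fun n => a n * z ^ n) (F z)) (r : ℝ) :
    HasSum (fun n => ‖a n‖ ^ 2 * r ^ (2 * n)) (Real.circleAverage (fun z => ‖F z‖ ^ 2) 0 r) := by
  have hs := summable_norm_entire F a ha r
  have hcc := continuous_circleMap (0:ℂ) r
  have hcj := Complex.continuous_conj
  obtain ⟨C, hC⟩ := (isCompact_sphere (0:ℂ) |r|).exists_bound_of_continuousOn hF.continuousOn
  have H := intervalIntegral.hasSum_integral_of_dominated_convergence (μ := volume) (a := 0) (b := 2 * Real.pi)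
    (F := fun n (θ : ℝ) => F (circleMap 0 r θ) * (starRingEnd ℂ) (a n * (circleMap 0 r θ) ^ n))
    (f := fun θ => F (circleMap 0 r θ) * (starRingEnd ℂ) (F (circleMap 0 r θ)))
    (fun n _ => C * (‖a n‖ * |r| ^ n))
    (fun n => by
      apply Continuous.aestronglyMeasurable
      fun_prop)
    (fun n => by
      refine Eventually.of_forall fun t _ => ?_
      rw [norm_mul, RCLike.norm_conj]
      have := hC (circleMap 0 r t) (by simp)
      simp only [norm_mul, norm_pow, norm_circleMap_zero]
      gcongr)
    (by refine Eventually.of_forall fun t _ => hs.mul_left _)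
    (by simp)
    (by refine Eventually.of_forall fun t _ => HasSum.mul_left _ ?_
        exact (Complex.hasSum_conj').2 (by simpa using ha _))
  have H2 : ∀ n, ∫ θ in (0:ℝ)..2 * Real.pi, F (circleMap 0 r θ) * (starRingEnd ℂ) (a n * (circleMap 0 r θ) ^ n)
      = ((2 * Real.pi * (‖a n‖ ^ 2 * r ^ (2 * n)) : ℝ) : ℂ) := by
    intro n
    have e : ∀ θ : ℝ, F (circleMap 0 r θ) * (starRingEnd ℂ) (a n * (circleMap 0 r θ) ^ n)
       = (starRingEnd ℂ) (a n) * (F (circleMap 0 r θ) * (starRingEnd ℂ) ((circleMap 0 r θ) ^ n)) := by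
      intro θ; rw [map_mul]; ring
    simp only [e, intervalIntegral.integral_const_mul]
    rw [integral_mul_conj F hF a ha r n, ← mul_assoc, ← Complex.normSq_eq_conj_mul_self, Complex.normSq_eq_norm_sq]
    push_cast; ring
  simp only [H2] at H
  have e2 : ∫ θ in (0:ℝ)..2 * Real.pi, F (circleMap 0 r θ) * (starRingEnd ℂ) (F (circleMap 0 r θ))
     = ((∫ θ in (0:ℝ)..2 * Real.pi, ‖F (circleMap 0 r θ)‖ ^ 2 : ℝ) : ℂ) := by
    rw [← intervalIntegral.integral_ofReal]
    congr 1; ext θ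
    rw [Complex.mul_conj, Complex.normSq_eq_norm_sq]
  rw [e2] at H
  have H3 := (Complex.hasSum_ofReal.1 H).mul_left (2 * Real.pi)⁻¹
  rw [Real.circleAverage_def, smul_eq_mul]
  have e3 : (fun n => ‖a n‖ ^ 2 * r ^ (2 * n)) = fun n => (2 * Real.pi)⁻¹ * (2 * Real.pi * (‖a n‖ ^ 2 * r ^ (2 * n))) := by
    ext n
    rw [inv_mul_cancel_left₀ (by positivity)]
  rw [e3]
  exact H3

lemma integral_ball_eq (g : ℂ → ℝ) (hg : Continuous g) (c : ℂ) (R : ℝ) (hR : 0 ≤ R) :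
    ∫ z in ball c R, g z = ∫ s in (0:ℝ)..R, 2 * Real.pi * s * Real.circleAverage g c s := by
  have e1 : ∫ z in ball c R, g z = ∫ z, (ball (0:ℂ) R).indicator (fun z => g (z + c)) z := by
    rw [← integral_indicator measurableSet_ball, ← integral_add_right_eq_self _ c]
    congr 1; ext z
    simp [Set.indicator]
  rw [e1, ← Complex.integral_comp_polarCoord_symm]
  have e2 : ∀ p ∈ polarCoord.target, p.1 • (ball (0:ℂ) R).indicator (fun z => g (z + c)) (Complex.polarCoord.symm p)
     = (Set.Iio R ×ˢ Set.univ).indicator (fun p : ℝ × ℝ => p.1 * g (circleMap c p.1 p.2)) p := by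
    rintro ⟨s, θ⟩ hp
    simp [polarCoord_target] at hp
    have hs : |s| = s := abs_of_pos hp.1
    have hx : Complex.polarCoord.symm (s, θ) = circleMap 0 s θ := by
      rw [Complex.polarCoord_symm_apply]; simp [circleMap, Complex.exp_mul_I]
    rw [hx]
    by_cases h : s < R
    · rw [Set.indicator_of_mem (by simp [hs, h]), Set.indicator_of_mem (by simp [h])]
      simp [circleMap, add_comm]
    · rw [Set.indicator_of_notMem (by simpa [hs] using h), Set.indicator_of_notMem (by simpa using h)]
      simp
  rw [setIntegral_congr_fun (by rw [polarCoord_target]; measurability) e2]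
  rw [setIntegral_indicator (by measurability), polarCoord_target, Set.prod_inter_prod, Set.inter_univ, Set.Ioi_inter_Iio]
  have hcInt : IntegrableOn (fun p : ℝ × ℝ => p.1 * g (circleMap c p.1 p.2)) (Set.Ioo 0 R ×ˢ Set.Ioo (-Real.pi) Real.pi) (volume.prod volume) := by
    have hc : Continuous (fun p : ℝ × ℝ => p.1 * g (circleMap c p.1 p.2)) := by
      unfold circleMap; fun_prop
    exact (hc.continuousOn.integrableOn_compact ((isCompact_Icc (a := (0:ℝ)) (b := R)).prod (isCompact_Icc (a := -Real.pi) (b := Real.pi)))).mono_set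
      (Set.prod_mono Set.Ioo_subset_Icc_self Set.Ioo_subset_Icc_self)
  rw [Measure.volume_eq_prod, setIntegral_prod _ hcInt, intervalIntegral.integral_of_le hR, integral_Ioc_eq_integral_Ioo]
  refine setIntegral_congr_fun measurableSet_Ioo fun s hs => ?_
  simp only
  rw [integral_const_mul, Real.circleAverage_def, smul_eq_mul, ← integral_Ioc_eq_integral_Ioo, ← intervalIntegral.integral_of_le (by linarith [Real.pi_pos])]
  have hper : Function.Periodic (fun θ => g (circleMap c s θ)) (2 * Real.pi) := (periodic_circleMap c s).comp g
  have := hper.intervalIntegral_add_eq (-Real.pi) 0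
  rw [show -Real.pi + 2 * Real.pi = Real.pi by ring, zero_add] at this
  rw [this]
  field_simp



noncomputable def tcoef (F : ℂ → ℂ) (n : ℕ) : ℂ := ((Nat.factorial n : ℕ) : ℂ)⁻¹ * iteratedDeriv n F 0

lemma tcoef_hasSum {F : ℂ → ℂ} (hF : Differentiable ℂ F) (z : ℂ) :
    HasSum (fun n => tcoef F n * z ^ n) (F z) := by
  have := Complex.hasSum_taylorSeries_of_entire hF 0 z
  simp only [sub_zero, smul_eq_mul] at this
  have e : (fun n => tcoef F n * z ^ n) = fun n : ℕ => ((Nat.factorial n : ℕ) : ℂ)⁻¹ * (z ^ n * iteratedDeriv n F 0) := by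
    ext n
    unfold tcoef; ring
  rw [e]; exact this

lemma tcoef_deriv (F : ℂ → ℂ) (n : ℕ) : tcoef (deriv F) n = (n + 1 : ℂ) * tcoef F (n + 1) := by
  unfold tcoef
  rw [iteratedDeriv_succ', Nat.factorial_succ]
  push_cast
  have h1 : (n + 1 : ℂ) ≠ 0 := Nat.cast_add_one_ne_zero n
  field_simp

lemma avg_re_sq {F : ℂ → ℂ} (hF : Differentiable ℂ F) (h0 : (F 0).im = 0) (r : ℝ) :
    Real.circleAverage (fun z => (F z).re ^ 2) 0 r
      = (Real.circleAverage (fun z => ‖F z‖ ^ 2) 0 r + ‖F 0‖ ^ 2) / 2 := by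
  have hc := hF.continuous
  have h1 : Real.circleAverage (fun z => (F z) ^ 2) 0 r = (F 0) ^ 2 :=
    DiffContOnCl.circleAverage (hF.pow 2).diffContOnCl
  have h2 : Real.circleAverage (fun z => ((F z) ^ 2).re) 0 r = ((F 0) ^ 2).re := by
    rw [← h1, Real.circleAverage_def, Real.circleAverage_def]
    rw [Complex.smul_re]
    congr 1
    have := Complex.reCLM.intervalIntegral_comp_comm (μ := volume) (a := 0) (b := 2 * Real.pi)
      (f := fun θ => F (circleMap 0 r θ) ^ 2) (Continuous.intervalIntegrable (by
        have := continuous_circleMap (0:ℂ) r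
        fun_prop) _ _)
    simpa using this
  have e : (fun z => (F z).re ^ 2) = fun z => (1/2 : ℝ) • ((fun z => ‖F z‖ ^ 2) + (fun z => ((F z) ^ 2).re)) z := by
    ext z
    simp only [Pi.add_apply, smul_eq_mul]
    rw [← Complex.normSq_eq_norm_sq, Complex.normSq_apply, pow_two (F z), Complex.mul_re]
    ring
  rw [e, Real.circleAverage_fun_smul, Real.circleAverage_add, h2, smul_eq_mul, ← Complex.normSq_eq_norm_sq (F 0), Complex.normSq_apply, pow_two (F 0), Complex.mul_re, h0]
  · ring
  · exact (Continuous.continuousOn (by fun_prop)).circleIntegrable'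
  · exact (Continuous.continuousOn (by
      have := Complex.continuous_re
      fun_prop)).circleIntegrable'

lemma HasSum.congr_fun_aux {f g : ℕ → ℝ} {x : ℝ} (h : HasSum f x) (e : ∀ n, g n = f n) : HasSum g x := by
  rw [show g = f from funext e]; exact h

lemma dirichlet_sum {F : ℂ → ℂ} (hF : Differentiable ℂ F) (r : ℝ) (hr : 0 ≤ r) :
    HasSum (fun n : ℕ => (n:ℝ) * ‖tcoef F n‖ ^ 2 * r ^ (2 * n))
      (Real.pi⁻¹ * ∫ z in ball (0:ℂ) r, ‖deriv F z‖ ^ 2) := by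
  have hd : Differentiable ℂ (deriv F) := hF.deriv
  have hP := fun s => parseval (deriv F) hd.continuous (tcoef (deriv F)) (tcoef_hasSum hd) s
  rw [integral_ball_eq _ (by have := hd.continuous; fun_prop) 0 r hr]
  have H := intervalIntegral.hasSum_integral_of_dominated_convergence (μ := volume) (a := 0) (b := r)
    (F := fun n (s : ℝ) => 2 * Real.pi * s * (‖tcoef (deriv F) n‖ ^ 2 * s ^ (2 * n)))
    (f := fun s => 2 * Real.pi * s * Real.circleAverage (fun z => ‖deriv F z‖ ^ 2) 0 s)
    (fun n _ => 2 * Real.pi * r * (‖tcoef (deriv F) n‖ ^ 2 * r ^ (2 * n)))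
    (fun n => by
      apply Continuous.aestronglyMeasurable
      fun_prop)
    (fun n => by
      refine Eventually.of_forall fun t ht => ?_
      rw [Set.uIoc_of_le hr] at ht
      have h0 := ht.1.le
      have := Real.pi_pos
      rw [Real.norm_of_nonneg (by positivity)]
      gcongr <;> exact ht.2)
    (by refine Eventually.of_forall fun t _ => (hP r).summable.mul_left _)
    (by simp)
    (by refine Eventually.of_forall fun t _ => (hP t).mul_left _)
  have H2 := H.mul_left Real.pi⁻¹
  rw [← hasSum_nat_add_iff' 1]
  simp only [Finset.sum_range_one, Nat.cast_zero, zero_mul, sub_zero]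
  refine HasSum.congr_fun_aux H2 fun n => ?_
  have e : ∀ s : ℝ, 2 * Real.pi * s * (‖tcoef (deriv F) n‖ ^ 2 * s ^ (2 * n)) = (2 * Real.pi * ‖tcoef (deriv F) n‖ ^ 2) * s ^ (2 * n + 1) := by
    intro s; ring
  simp only [e, intervalIntegral.integral_const_mul, integral_pow]
  rw [tcoef_deriv, norm_mul]
  have : ‖(n + 1 : ℂ)‖ = n + 1 := by
    have := Complex.norm_natCast (n + 1); push_cast at this; exact this
  rw [this]
  have := Real.pi_pos
  push_cast
  field_simp
  ring

theorem freq_iff {F : ℂ → ℂ} (hF : Differentiable ℂ F) (h0 : (F 0).im = 0) (hne : ∃ z, (F z).re ≠ 0)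
    {κ : ℝ} (hκ : 0 < κ) :
    (∃ L, Tendsto (fun r : ℝ => r * (∫ z in ball (0:ℂ) r, ‖deriv F z‖ ^ 2) /
      (κ * r * Real.circleAverage (fun z => (F z).re ^ 2) 0 r)) atTop (nhds L)) ↔
    ∃ N : ℕ, ∀ n, N < n → tcoef F n = 0 := by
  set b : ℕ → ℝ := fun n => ‖tcoef F n‖ ^ 2 + if n = 0 then ‖F 0‖ ^ 2 else 0 with hb
  have hH : ∀ r : ℝ, HasSum (fun n => b n * r ^ (2 * n)) (2 * Real.circleAverage (fun z => (F z).re ^ 2) 0 r) := by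
    intro r
    have h1 := parseval F hF.continuous (tcoef F) (tcoef_hasSum hF) r
    have h2 := hasSum_single (f := fun n : ℕ => (if n = 0 then ‖F 0‖ ^ 2 else 0) * r ^ (2 * n)) 0
      (fun n hn => by simp [hn])
    have h3 := h1.add h2
    rw [avg_re_sq hF h0]
    simp only [hb]
    convert h3 using 1
    · ext n; ring
    · simp; ring
  have hD : ∀ r : ℝ, 0 ≤ r → HasSum (fun n : ℕ => (n:ℝ) * b n * r ^ (2 * n))
      (Real.pi⁻¹ * ∫ z in ball (0:ℂ) r, ‖deriv F z‖ ^ 2) := by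
    intro r hr
    convert dirichlet_sum hF r hr using 2 with n
    simp only [hb]
    split_ifs with h <;> simp [h]
  have hs' : ∀ r : ℝ, Summable (fun n : ℕ => (n:ℝ) * b n * r ^ (2 * n)) := by
    intro r
    have := (hD |r| (abs_nonneg r)).summable
    simpa [pow_mul] using this
  have hb0 : ∀ n, 0 ≤ b n := by
    intro n; simp only [hb]; split_ifs <;> positivity
  have hfun : (fun r : ℝ => r * (∫ z in ball (0:ℂ) r, ‖deriv F z‖ ^ 2) /
      (κ * r * Real.circleAverage (fun z => (F z).re ^ 2) 0 r)) =ᶠ[atTop]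
      fun r => (2 * Real.pi / κ) * ((∑' n : ℕ, (n:ℝ) * b n * r ^ (2 * n)) / (∑' n, b n * r ^ (2 * n))) := by
    filter_upwards [eventually_gt_atTop 0] with r hr
    rw [(hH r).tsum_eq, (hD r hr.le).tsum_eq]
    have := Real.pi_pos
    field_simp
  have hpi := Real.pi_pos
  constructor
  · rintro ⟨L, hL⟩
    rw [tendsto_congr' hfun] at hL
    have h1 := hL.const_mul (2 * Real.pi / κ)⁻¹
    simp only [inv_mul_cancel_left₀ (show (2 * Real.pi / κ) ≠ 0 by positivity)] at h1
    obtain ⟨N, hN⟩ := fin_of_ratio_tendsto b hb0 (fun r => (hH r).summable) hs' _ h1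
    refine ⟨N, fun n hn => ?_⟩
    have := hN n hn
    simp only [hb, show n ≠ 0 by omega, if_false, add_zero] at this
    simpa using this
  · rintro ⟨N, hN⟩
    have hbN : ∀ n, N < n → b n = 0 := by
      intro n hn
      simp [hb, hN n hn, show n ≠ 0 by omega]
    have hex : ∃ n, b n ≠ 0 := by
      by_contra! hall
      obtain ⟨z, hz⟩ := hne
      have h1 : ∀ n, tcoef F n = 0 := by
        intro n
        have := hall n
        simp only [hb] at this
        have h2 : 0 ≤ (if n = 0 then ‖F 0‖ ^ 2 else 0 : ℝ) := by split_ifs <;> positivity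
        have h3 : ‖tcoef F n‖ ^ 2 = 0 := le_antisymm (by linarith) (by positivity)
        simpa using h3
      have := (tcoef_hasSum hF z).unique (a₂ := 0) (by simp only [h1, zero_mul]; exact hasSum_zero)
      apply hz; rw [this]; simp
    classical
    let S := (Finset.range (N + 1)).filter (fun n => b n ≠ 0)
    have hSne : S.Nonempty := by
      obtain ⟨n, hn⟩ := hex
      refine ⟨n, ?_⟩
      simp only [S, Finset.mem_filter, Finset.mem_range]
      refine ⟨?_, hn⟩
      by_contra h
      exact hn (hbN n (by omega))
    set d := S.max' hSne with hd
    have hdS := S.max'_mem hSne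
    rw [← hd] at hdS
    have hbd : ∀ n, d < n → b n = 0 := by
      intro n hn
      by_contra h
      have : n ∈ S := by
        simp only [S, Finset.mem_filter, Finset.mem_range]
        refine ⟨?_, h⟩
        by_contra h'
        exact h (hbN n (by omega))
      have := S.le_max' n this
      omega
    have := ratio_tendsto_of_fin b d (Finset.mem_filter.1 hdS).2 hbd
    refine ⟨_, (this.const_mul (2 * Real.pi / κ)).congr' hfun.symm⟩


section
open scoped Pointwise

lemma hm_circle_fin : μH[1] (sphere (0:ℂ) 1) < ⊤ := by
  have h1 : sphere (0:ℂ) 1 = circleMap 0 1 '' Set.Ioc 0 (2 * Real.pi) := by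
    rw [image_circleMap_Ioc]; simp
  rw [h1]
  refine (((lipschitzWith_circleMap 0 1).hausdorffMeasure_image_le zero_le_one _)).trans_lt ?_
  rw [hausdorffMeasure_real]
  simp [ENNReal.mul_lt_top]

lemma hm_circle_pos : 0 < μH[1] (sphere (0:ℂ) 1) := by
  have hl : LipschitzWith 1 (fun z : ℂ => z.re) := by
    refine LipschitzWith.of_dist_le_mul fun x y => ?_
    rw [NNReal.coe_one, one_mul, Real.dist_eq, dist_eq_norm, ← Complex.sub_re]
    exact Complex.abs_re_le_norm _
  have h := hl.hausdorffMeasure_image_le zero_le_one (sphere (0:ℂ) 1)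
  have hsub : Set.Icc (-1:ℝ) 1 ⊆ (fun z : ℂ => z.re) '' sphere (0:ℂ) 1 := by
    intro x hx
    refine ⟨circleMap 0 1 (Real.arccos x), by simp, ?_⟩
    simp [circleMap, Complex.exp_ofReal_mul_I_re, Real.cos_arccos hx.1 hx.2]
  rw [hausdorffMeasure_real] at h
  have h2 := (measure_mono hsub).trans h
  simp only [Real.volume_Icc, ENNReal.coe_one, ENNReal.one_rpow, one_mul] at h2
  refine lt_of_lt_of_le ?_ h2
  simp

lemma hm_circle_scale (r : ℝ) (hr : 0 < r) :
    μH[1] (sphere (0:ℂ) r) = ENNReal.ofReal r * μH[1] (sphere (0:ℂ) 1) := by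
  have h1 : sphere (0:ℂ) r = r • sphere (0:ℂ) 1 := by
    rw [smul_sphere' hr.ne']; simp [abs_of_pos hr]
  rw [h1, Measure.hausdorffMeasure_smul₀ zero_le_one hr.ne', NNReal.rpow_one]
  rw [ENNReal.smul_def, smul_eq_mul]
  congr 1
  rw [← enorm_eq_nnnorm, Real.enorm_eq_ofReal hr.le]

lemma circleAverage_rot (g : ℂ → ℝ) (r : ℝ) (x : ℂ) (hx : ‖x‖ = r) :
    ∫ θ in (0:ℝ)..2 * Real.pi, g (Complex.exp (θ * Complex.I) * x)
      = ∫ θ in (0:ℝ)..2 * Real.pi, g (circleMap 0 r θ) := by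
  have h : ∀ θ : ℝ, g (Complex.exp (θ * Complex.I) * x) = g (circleMap 0 r (θ + x.arg)) := by
    intro θ
    congr 1
    conv_lhs => rw [← Complex.norm_mul_exp_arg_mul_I x]
    simp only [circleMap, hx]
    push_cast
    rw [add_mul, Complex.exp_add]; ring
  simp only [h]
  rw [intervalIntegral.integral_comp_add_right (fun θ => g (circleMap 0 r θ))]
  have hper : Function.Periodic (fun θ => g (circleMap 0 r θ)) (2 * Real.pi) := (periodic_circleMap 0 r).comp g
  have := hper.intervalIntegral_add_eq (x.arg) 0
  rw [zero_add] at this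
  rw [zero_add, add_comm, this]

lemma hausdorff_circle (g : ℂ → ℝ) (hg : Continuous g) (r : ℝ) (hr : 0 < r) :
    ∫ x in sphere (0:ℂ) r, g x ∂μH[1] = (μH[1] (sphere (0:ℂ) 1)).toReal * r * Real.circleAverage g 0 r := by
  have hfin : μH[1] (sphere (0:ℂ) r) < ⊤ := by
    rw [hm_circle_scale r hr]
    exact ENNReal.mul_lt_top ENNReal.ofReal_lt_top hm_circle_fin
  set ν := (μH[1] : Measure ℂ).restrict (sphere (0:ℂ) r) with hν
  have : IsFiniteMeasure ν := ⟨by rw [hν, Measure.restrict_apply_univ]; exact hfin⟩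
  have hrot : ∀ θ : ℝ, ∫ x, g (Complex.exp (θ * Complex.I) * x) ∂ν = ∫ x, g x ∂ν := by
    intro θ
    have h1 := (rotation (Circle.exp θ)).toIsometryEquiv.measurePreserving_hausdorffMeasure 1
    have h2 := h1.restrict_preimage_emb (rotation (Circle.exp θ)).toIsometryEquiv.toHomeomorph.measurableEmbedding (sphere (0:ℂ) r)
    have h3 : (rotation (Circle.exp θ)).toIsometryEquiv ⁻¹' (sphere (0:ℂ) r) = sphere (0:ℂ) r := by
      ext z; rw [Set.mem_preimage, mem_sphere_zero_iff_norm, mem_sphere_zero_iff_norm]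
      exact iff_of_eq (by rw [LinearIsometryEquiv.coe_toIsometryEquiv, LinearIsometryEquiv.norm_map])
    rw [h3] at h2
    have h4 := h2.integral_comp (rotation (Circle.exp θ)).toIsometryEquiv.toHomeomorph.measurableEmbedding g
    rw [← h4]
    simp [rotation_apply, hν]
  obtain ⟨C, hC⟩ := (isCompact_sphere (0:ℂ) r).exists_bound_of_continuousOn hg.continuousOn
  have hmem : ∀ᵐ x ∂ν, x ∈ sphere (0:ℂ) r := ae_restrict_mem isClosed_sphere.measurableSet
  have hcInt : Integrable (Function.uncurry fun (θ : ℝ) (x : ℂ) => g (Complex.exp (θ * Complex.I) * x))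
      ((volume.restrict (Set.Ioc 0 (2 * Real.pi))).prod ν) := by
    refine Integrable.of_bound (C := C) ?_ ?_
    · apply Continuous.aestronglyMeasurable
      unfold Function.uncurry
      fun_prop
    · have : ∀ᵐ p ∂((volume.restrict (Set.Ioc 0 (2 * Real.pi))).prod ν), p.2 ∈ sphere (0:ℂ) r :=
        Measure.quasiMeasurePreserving_snd.ae hmem
      filter_upwards [this] with p hp
      apply hC
      simpa [Complex.norm_exp_ofReal_mul_I] using hp
  have hswap := integral_integral_swap hcInt
  simp only [hrot] at hswap
  have hpi := Real.pi_pos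
  have e1 : ∀ᵐ x ∂ν, (∫ θ in Set.Ioc 0 (2 * Real.pi), g (Complex.exp (θ * Complex.I) * x))
      = 2 * Real.pi * Real.circleAverage g 0 r := by
    filter_upwards [hmem] with x hx
    rw [← intervalIntegral.integral_of_le (by positivity), circleAverage_rot g r x (by simpa using hx), Real.circleAverage_def]
    rw [smul_eq_mul]; field_simp
  rw [integral_congr_ae e1] at hswap
  simp only [integral_const, smul_eq_mul, Measure.real, Measure.restrict_apply_univ, Real.volume_Ioc, sub_zero] at hswap
  rw [ENNReal.toReal_ofReal (by positivity), hν, Measure.restrict_apply_univ, hm_circle_scale r hr, ENNReal.toReal_mul, ENNReal.toReal_ofReal hr.le] at hswap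
  have h2 : (2 * Real.pi) ≠ 0 := by positivity
  refine mul_left_cancel₀ h2 ?_
  rw [hswap]; ring

end



noncomputable def eE : ℂ ≃ₗᵢ[ℝ] EuclideanSpace ℝ (Fin 2) := Complex.orthonormalBasisOneI.repr

lemma eE_one : eE 1 = EuclideanSpace.single 0 1 := by
  have := Complex.orthonormalBasisOneI.repr_self 0
  simpa [eE] using this

lemma eE_I : eE Complex.I = EuclideanSpace.single 1 1 := by
  have := Complex.orthonormalBasisOneI.repr_self 1
  simpa [eE] using this

lemma harmonic_bridge (u : EuclideanSpace ℝ (Fin 2) → ℝ) (hu : HarmonicFn u) :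
    ∃ F : ℂ → ℂ, Differentiable ℂ F ∧ (F 0).im = 0 ∧ ∀ z, (F z).re = u (eE z) := by
  have hc : ContDiff ℝ 2 (u ∘ eE) := hu.1.comp eE.contDiff
  have hH : InnerProductSpace.HarmonicOnNhd (u ∘ eE) Set.univ := by
    intro x _
    refine ⟨hc.contDiffAt, Eventually.of_forall fun z => ?_⟩
    rw [InnerProductSpace.laplacian_eq_iteratedFDeriv_complexPlane]
    have h1 := fun m => congrFun (congrArg DFunLike.coe ((eE.toContinuousLinearEquiv : ℂ →L[ℝ] _).iteratedFDeriv_comp_right hu.1 z (i := 2) le_rfl)) m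
    have h2 : ∀ v w, iteratedFDeriv ℝ 2 (u ∘ eE) z ![v, w] = fderiv ℝ (fun y => fderiv ℝ u y (eE w)) (eE z) (eE v) := by
      intro v w
      have h3 : DifferentiableAt ℝ (fderiv ℝ u) (eE z) :=
        ((hu.1.fderiv_right (m := 1) le_rfl).differentiable (by norm_num)) _
      have h4 := h1 ![v, w]
      rw [fderiv_clm_apply h3 (by fun_prop)]
      rw [ContinuousMultilinearMap.compContinuousLinearMap_apply, iteratedFDeriv_two_apply u] at h4
      simpa using h4
    have h5 := hu.2 (eE z)
    simp only [lapl, Fin.sum_univ_two] at h5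
    simp only [h2, eE_one, eE_I]
    exact h5
  obtain ⟨F, hF, hre⟩ := hH.exists_analyticOnNhd_univ_re_eq
  refine ⟨fun z => F z - (F 0).im * Complex.I, ?_, ?_, ?_⟩
  · exact (fun z => (hF z trivial).differentiableAt.sub_const _)
  · simp
  · intro z; have := congrFun hre z; simpa using this

lemma norm_grad (u : EuclideanSpace ℝ (Fin 2) → ℝ) (F : ℂ → ℂ) (hF : Differentiable ℂ F)
    (hre : ∀ z, (F z).re = u (eE z)) (z : ℂ) : ‖gradient u (eE z)‖ = ‖deriv F z‖ := by
  have hu : u = (fun z => (F z).re) ∘ eE.symm := by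
    ext x; simp [hre]
  have h0 := ((hF z).hasDerivAt.hasFDerivAt.restrictScalars ℝ)
  have h1 : HasFDerivAt (fun z => (F z).re) _ z := (Complex.reCLM.hasFDerivAt).comp z h0
  have h1' := h1
  nth_rw 2 [← eE.symm_apply_apply z] at h1'
  have h2 := h1'.comp (eE z) eE.symm.toContinuousLinearEquiv.hasFDerivAt
  rw [← hu] at h2
  have h3 := h2.fderiv
  have h4 : ‖gradient u (eE z)‖ = ‖fderiv ℝ u (eE z)‖ := by
    rw [← toDual_gradient, LinearIsometryEquiv.norm_map]
  have hap : ∀ v, fderiv ℝ u (eE z) v = (eE.symm v * deriv F z).re := by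
    intro v; rw [h3]; simp
  rw [h4]
  refine le_antisymm (ContinuousLinearMap.opNorm_le_bound _ (norm_nonneg _) fun v => ?_) ?_
  · rw [hap, Real.norm_eq_abs]
    refine (Complex.abs_re_le_norm _).trans ?_
    rw [norm_mul, LinearIsometryEquiv.norm_map, mul_comm]
  · have h5 := (fderiv ℝ u (eE z)).le_opNorm (eE ((starRingEnd ℂ) (deriv F z)))
    rw [hap, LinearIsometryEquiv.norm_map, eE.symm_apply_apply, RCLike.norm_conj, ← Complex.normSq_eq_conj_mul_self, Complex.ofReal_re, Complex.normSq_eq_norm_sq, Real.norm_of_nonneg (by positivity), pow_two] at h5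
    by_cases hz : ‖deriv F z‖ = 0
    · rw [hz]; exact norm_nonneg _
    · exact le_of_mul_le_mul_right h5 (lt_of_le_of_ne (norm_nonneg _) (Ne.symm hz))

lemma DInt_eq (u : EuclideanSpace ℝ (Fin 2) → ℝ) (F : ℂ → ℂ) (hF : Differentiable ℂ F)
    (hre : ∀ z, (F z).re = u (eE z)) (r : ℝ) : DInt u 0 r = ∫ z in ball (0:ℂ) r, ‖deriv F z‖ ^ 2 := by
  unfold DInt
  have h1 := eE.measurePreserving
  have h2 := h1.setIntegral_preimage_emb eE.toHomeomorph.measurableEmbedding (fun x => ‖gradient u x‖ ^ 2) (ball 0 r)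
  rw [← h2]
  have h3 : eE ⁻¹' ball 0 r = ball 0 r := by
    ext z; simp
  rw [h3]
  simp only [norm_grad u F hF hre]

lemma HInt_eq (u : EuclideanSpace ℝ (Fin 2) → ℝ) (F : ℂ → ℂ) (hF : Differentiable ℂ F)
    (hre : ∀ z, (F z).re = u (eE z)) (r : ℝ) (hr : 0 < r) :
    HInt u 0 r = (μH[1] (sphere (0:ℂ) 1)).toReal * r * Real.circleAverage (fun z => (F z).re ^ 2) 0 r := by
  unfold HInt
  have hc := hF.continuous
  rw [← hausdorff_circle (fun z => (F z).re ^ 2) (by have := Complex.continuous_re; fun_prop) r hr]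
  rw [show ((2:ℕ):ℝ) - 1 = 1 by norm_num]
  have h1 := eE.toIsometryEquiv.measurePreserving_hausdorffMeasure 1
  have h2 := h1.setIntegral_preimage_emb eE.toHomeomorph.measurableEmbedding (fun x => (u x) ^ 2) (sphere 0 r)
  rw [← h2]
  have h3 : eE.toIsometryEquiv ⁻¹' sphere 0 r = sphere 0 r := by
    ext z; rw [Set.mem_preimage, mem_sphere_zero_iff_norm, mem_sphere_zero_iff_norm]
    exact iff_of_eq (by rw [LinearIsometryEquiv.coe_toIsometryEquiv, LinearIsometryEquiv.norm_map])
  rw [h3]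
  simp [hre]

lemma comps_bridge (u : EuclideanSpace ℝ (Fin 2) → ℝ) (F : ℂ → ℂ) (hre : ∀ z, (F z).re = u (eE z)) :
    (nodalComponents {x | u x ≠ 0}).Finite ↔ (nodalComponents {z | (F z).re ≠ 0}).Finite := by
  have h : nodalComponents {x | u x ≠ 0} = (fun C => eE '' C) '' nodalComponents {z | (F z).re ≠ 0} := by
    have hS : eE '' {z | (F z).re ≠ 0} = {x | u x ≠ 0} := by
      ext x; constructor
      · rintro ⟨z, hz, rfl⟩; rw [Set.mem_ofPred_eq, ← hre]; exact hz
      · intro hx; exact ⟨eE.symm x, by simpa [hre] using hx, by simp⟩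
    ext C
    constructor
    · rintro ⟨x, hx, rfl⟩
      rw [← hS] at hx
      obtain ⟨z, hz, rfl⟩ := hx
      refine ⟨_, ⟨z, hz, rfl⟩, ?_⟩
      have := eE.toHomeomorph.image_connectedComponentIn hz
      rw [← hS]; exact this
    · rintro ⟨_, ⟨z, hz, rfl⟩, rfl⟩
      refine ⟨eE z, by rw [← hS]; exact ⟨z, hz, rfl⟩, ?_⟩
      have := eE.toHomeomorph.image_connectedComponentIn hz
      rw [← hS]; exact this.symm
  rw [h]
  exact Set.finite_image_iff (eE.injective.image_injective.injOn)



lemma comp_frontier {S : Set ℂ} (hS : IsOpen S) {z x : ℂ}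
    (hx : x ∈ frontier (connectedComponentIn S z)) : x ∉ S := by
  intro hxS
  have hopen : IsOpen (connectedComponentIn S z) := hS.connectedComponentIn
  have hopen' : IsOpen (connectedComponentIn S x) := hS.connectedComponentIn
  have hxx := mem_connectedComponentIn hxS
  obtain ⟨y, hy1, hy2⟩ := mem_closure_iff.1 (frontier_subset_closure hx) _ hopen' hxx
  have h1 := connectedComponentIn_eq hy1
  have h2 := connectedComponentIn_eq hy2
  rw [hopen.frontier_eq] at hx
  exact hx.2 (by rw [h2, ← h1]; exact hxx)

lemma reopen {F : ℂ → ℂ} (hF : Differentiable ℂ F) : IsOpen {z | (F z).re ≠ 0} :=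
  isOpen_ne_fun (Complex.continuous_re.comp hF.continuous) continuous_const

lemma comp_unbounded {F : ℂ → ℂ} (hF : Differentiable ℂ F) {z : ℂ} (hz : (F z).re ≠ 0) :
    ¬ Bornology.IsBounded (connectedComponentIn {z | (F z).re ≠ 0} z) := by
  intro hb
  have hfr : ∀ x ∈ frontier (connectedComponentIn {z | (F z).re ≠ 0} z), (F x).re = 0 := by
    intro x hx
    by_contra h
    exact comp_frontier (reopen hF) hx h
  have hmem : z ∈ closure (connectedComponentIn {z | (F z).re ≠ 0} z) := subset_closure (mem_connectedComponentIn hz)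
  have key : ∀ G : ℂ → ℂ, Differentiable ℂ G → (∀ x ∈ frontier (connectedComponentIn {z | (F z).re ≠ 0} z), (G x).re = 0) → (G z).re ≤ 0 := by
    intro G hG h0
    have := Complex.norm_le_of_forall_mem_frontier_norm_le hb (f := fun w => Complex.exp (G w)) (C := 1)
      (hG.cexp.diffContOnCl) (fun x hx => by simp [Complex.norm_exp, h0 x hx]) hmem
    simpa [Complex.norm_exp] using this
  have h1 := key F hF hfr
  have h2 := key (fun w => - F w) hF.neg (fun x hx => by simp [hfr x hx])
  simp at h2
  exact hz (le_antisymm h1 h2)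

lemma comp_meets {F : ℂ → ℂ} (hF : Differentiable ℂ F) {z : ℂ} (hz : (F z).re ≠ 0) {R : ℝ} (hR : ‖z‖ ≤ R) :
    ∃ w ∈ connectedComponentIn {z | (F z).re ≠ 0} z, ‖w‖ = R := by
  have hb := comp_unbounded hF hz
  have : ∃ y ∈ connectedComponentIn {z | (F z).re ≠ 0} z, R ≤ ‖y‖ := by
    by_contra! h
    apply hb
    exact (isBounded_iff_forall_norm_le.2 ⟨R, fun x hx => (h x hx).le⟩)
  obtain ⟨y, hy, hyR⟩ := this
  have hc : IsPreconnected (connectedComponentIn {z | (F z).re ≠ 0} z) := isPreconnected_connectedComponentIn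
  exact hc.intermediate_value (mem_connectedComponentIn hz) hy continuous_norm.continuousOn ⟨hR, hyR⟩

lemma circle_zeros {F : ℂ → ℂ} (hF : Differentiable ℂ F) {N : ℕ} (hN : ∀ n, N < n → tcoef F n = 0)
    {R : ℝ} (hR : 0 < R) {w : ℂ} (hw : ‖w‖ = R) (hFw : (F w).re ≠ 0) :
    ∃ Z : Finset ℂ, Z.card ≤ 2 * N ∧ ∀ z, ‖z‖ = R → (F z).re = 0 → z ∈ Z := by
  classical
  have hFs : ∀ z, F z = ∑ n ∈ Finset.range (N + 1), tcoef F n * z ^ n := by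
    intro z
    refine (tcoef_hasSum hF z).unique (hasSum_sum_of_ne_finset_zero fun n hn => ?_)
    rw [hN n (by simpa using hn), zero_mul]
  let P : Polynomial ℂ := ∑ n ∈ Finset.range (N + 1),
    (Polynomial.C (tcoef F n) * Polynomial.X ^ (N + n) + Polynomial.C ((starRingEnd ℂ) (tcoef F n) * (R:ℂ) ^ (2 * n)) * Polynomial.X ^ (N - n))
  have hP : ∀ z, ‖z‖ = R → P.eval z = z ^ N * ((2 * (F z).re : ℝ) : ℂ) := by
    intro z hz
    have hz0 : z ≠ 0 := by rintro rfl; simp at hz; linarith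
    have hzz : z * (starRingEnd ℂ) z = (R:ℂ) ^ 2 := by
      rw [Complex.mul_conj, Complex.normSq_eq_norm_sq, hz]; push_cast; rfl
    have e1 : ((2 * (F z).re : ℝ) : ℂ) = F z + (starRingEnd ℂ) (F z) := by
      rw [Complex.add_conj]
    rw [e1, hFs z, map_sum, ← Finset.sum_add_distrib, Finset.mul_sum]
    simp only [P, Polynomial.eval_finsetSum]
    refine Finset.sum_congr rfl fun n hn => ?_
    have hn' : n ≤ N := by simpa [Nat.lt_succ_iff] using hn
    simp only [Polynomial.eval_add, Polynomial.eval_mul, Polynomial.eval_C, Polynomial.eval_pow, Polynomial.eval_X, map_mul, map_pow]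
    rw [pow_mul, ← hzz, mul_pow]
    obtain ⟨k, rfl⟩ := Nat.exists_eq_add_of_le hn'
    rw [Nat.add_sub_cancel_left]
    ring
  have hP0 : P ≠ 0 := by
    intro h
    have := hP w hw
    rw [h, Polynomial.eval_zero] at this
    have hw0 : w ≠ 0 := by rintro rfl; simp at hw; linarith
    have h2 := this.symm
    rw [mul_eq_zero] at h2
    rcases h2 with h2 | h2
    · exact pow_ne_zero _ hw0 h2
    · have : 2 * (F w).re = 0 := by exact_mod_cast h2
      exact hFw (by linarith)
  refine ⟨P.roots.toFinset, ?_, ?_⟩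
  · refine (Multiset.toFinset_card_le _).trans ((Polynomial.card_roots' P).trans ?_)
    refine Polynomial.natDegree_sum_le_of_forall_le _ _ fun n hn => ?_
    have hn' : n ≤ N := by simpa [Nat.lt_succ_iff] using hn
    refine Polynomial.natDegree_add_le_of_degree_le ?_ ?_
    · exact (Polynomial.natDegree_C_mul_X_pow_le _ _).trans (by omega)
    · exact (Polynomial.natDegree_C_mul_X_pow_le _ _).trans (by omega)
  · intro z hz hre
    rw [Multiset.mem_toFinset, Polynomial.mem_roots hP0, Polynomial.IsRoot, hP z hz, hre]
    simp

lemma finite_comps {F : ℂ → ℂ} (hF : Differentiable ℂ F) {N : ℕ} (hN : ∀ n, N < n → tcoef F n = 0) :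
    (nodalComponents {z | (F z).re ≠ 0}).Finite := by
  classical
  set S := {z | (F z).re ≠ 0} with hS
  by_contra hinf
  obtain ⟨T, hT, hcard⟩ := Set.Infinite.exists_subset_card_eq hinf (2 * N + 2)
  have hch : ∀ C : T, ∃ x, (F x).re ≠ 0 ∧ connectedComponentIn S x = C := fun C => hT C.2
  choose x hx hxC using hch
  obtain ⟨R, hR0, hR⟩ : ∃ R : ℝ, 0 < R ∧ ∀ C : T, ‖x C‖ ≤ R :=
    ⟨1 + ∑ C : T, ‖x C‖, by positivity, fun C => by
      have := Finset.single_le_sum (f := fun C : T => ‖x C‖) (fun i _ => norm_nonneg _) (Finset.mem_univ C)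
      linarith⟩
  have hw : ∀ C : T, ∃ w ∈ connectedComponentIn S (x C), ‖w‖ = R := fun C => comp_meets hF (hx C) (hR C)
  choose w hwC hwR using hw
  have hwS : ∀ C, (F (w C)).re ≠ 0 := fun C => connectedComponentIn_subset _ _ (hwC C)
  have hwcomp : ∀ C : T, connectedComponentIn S (w C) = C := fun C => by
    rw [← connectedComponentIn_eq (hwC C), hxC]
  have hne : T.Nonempty := by rw [← Finset.card_pos, hcard]; omega
  obtain ⟨C0, hC0⟩ := hne
  obtain ⟨Z, hZc, hZ⟩ := circle_zeros hF hN hR0 (hwR ⟨C0, hC0⟩) (hwS ⟨C0, hC0⟩)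
  let m : T → ℕ := fun C => (Z.filter (fun ζ => ζ.arg < (w C).arg)).card
  have hm : ∀ C ∈ (Finset.univ : Finset T), m C ∈ Finset.range (2 * N + 1) := by
    intro C _
    rw [Finset.mem_range, Nat.lt_succ_iff]
    exact (Finset.card_filter_le _ _).trans hZc
  obtain ⟨C1, -, C2, -, hne, hmm⟩ := Finset.exists_ne_map_eq_of_card_lt_of_maps_to
    (by simp [hcard]) hm
  have key : ∀ A B : T, m A = m B → (w A).arg ≤ (w B).arg → A = B := by
    intro A B hAB hle
    have hpt : ∀ C : T, circleMap 0 R (w C).arg = w C := by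
      intro C
      have := Complex.norm_mul_exp_arg_mul_I (w C)
      rw [hwR] at this
      simpa [circleMap] using this
    have hno : ∀ θ ∈ Set.Icc (w A).arg (w B).arg, circleMap 0 R θ ∈ S := by
      intro θ hθ h0
      have hl : (w A).arg < θ := lt_of_le_of_ne hθ.1 (by
        intro h; apply hwS A; rw [← hpt A, h]; exact h0)
      have hr : θ < (w B).arg := lt_of_le_of_ne hθ.2 (by
        intro h; apply hwS B; rw [← hpt B, ← h]; exact h0)
      have harg : (circleMap 0 R θ).arg = θ := by
        have : circleMap 0 R θ = (R:ℂ) * Complex.exp (θ * Complex.I) := by simp [circleMap]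
        rw [this, Complex.exp_mul_I, Complex.arg_mul_cos_add_sin_mul_I hR0 ⟨(Complex.neg_pi_lt_arg _).trans hl, hr.le.trans (Complex.arg_le_pi _)⟩]
      have hmemZ : circleMap 0 R θ ∈ Z := hZ _ (by simp [abs_of_pos hR0]) h0
      have hss : Z.filter (fun ζ => ζ.arg < (w A).arg) ⊂ Z.filter (fun ζ => ζ.arg < (w B).arg) := by
        rw [Finset.ssubset_iff_of_subset]
        · refine ⟨circleMap 0 R θ, ?_, ?_⟩
          · rw [Finset.mem_filter, harg]; exact ⟨hmemZ, hr⟩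
          · rw [Finset.mem_filter, harg]; exact fun h => absurd h.2 (not_lt.2 hl.le)
        · intro ζ hζ
          rw [Finset.mem_filter] at hζ ⊢
          exact ⟨hζ.1, hζ.2.trans_le hle⟩
      exact absurd hAB (Finset.card_lt_card hss).ne
    have hcon : IsPreconnected (circleMap 0 R '' Set.Icc (w A).arg (w B).arg) :=
      isPreconnected_Icc.image _ (continuous_circleMap 0 R).continuousOn
    have hsub := hcon.subset_connectedComponentIn (F := S) (x := w A) ⟨_, Set.left_mem_Icc.2 hle, hpt A⟩
      (by rintro _ ⟨θ, hθ, rfl⟩; exact hno θ hθ)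
    have hB : w B ∈ connectedComponentIn S (w A) := hsub ⟨_, Set.right_mem_Icc.2 hle, hpt B⟩
    have := connectedComponentIn_eq hB
    rw [hwcomp, hwcomp] at this
    exact Subtype.ext this
  rcases le_total (w C1).arg (w C2).arg with h | h
  · exact hne (key _ _ hmm h)
  · exact hne (key _ _ hmm.symm h).symm



lemma log_unique {K : Set ℂ} (hK : IsPreconnected K) {f g : ℂ → ℂ} (hf : ContinuousOn f K) (hg : ContinuousOn g K)
    (h : ∀ z ∈ K, Complex.exp (f z) = Complex.exp (g z)) {x y : ℂ} (hx : x ∈ K) (hy : y ∈ K) :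
    f x - f y = g x - g y := by
  have h1 : ∀ z ∈ K, ∃ n : ℤ, f z - g z = n * (2 * Real.pi * Complex.I) := by
    intro z hz
    obtain ⟨n, hn⟩ := Complex.exp_eq_exp_iff_exists_int.1 (h z hz)
    exact ⟨n, by rw [hn]; ring⟩
  have h2 : ((fun z => f z - g z) '' K).Subsingleton := by
    have hc : ((fun z => f z - g z) '' K).Countable := by
      refine (Set.countable_range fun n : ℤ => (n : ℂ) * (2 * Real.pi * Complex.I)).mono ?_
      rintro _ ⟨z, hz, rfl⟩
      obtain ⟨n, hn⟩ := h1 z hz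
      exact ⟨n, hn.symm⟩
    have hp := hK.image _ (hf.sub hg)
    exact hc.isTotallyDisconnected _ subset_rfl hp
  have h3 := h2 ⟨x, hx, rfl⟩ ⟨y, hy, rfl⟩
  simp only at h3
  linear_combination h3

/-- There is a continuous logarithm of `z - w` on `K`. -/
def GoodPt (K : Set ℂ) (w : ℂ) : Prop := ∃ L : ℂ → ℂ, ContinuousOn L K ∧ ∀ z ∈ K, Complex.exp (L z) = z - w

lemma one_sub_slit {ζ : ℂ} (h : ‖ζ‖ < 1) : 1 - ζ ∈ Complex.slitPlane := by
  left
  have := (Complex.re_le_norm ζ).trans_lt h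
  simp; linarith

lemma good_near {K : Set ℂ} {w0 w : ℂ} (h : ∀ z ∈ K, ‖w - w0‖ < ‖z - w0‖) (hg : GoodPt K w0) : GoodPt K w := by
  obtain ⟨L, hL, hLe⟩ := hg
  have hne : ∀ z ∈ K, z - w0 ≠ 0 := by
    intro z hz h0
    have := h z hz
    rw [h0, norm_zero] at this
    exact absurd this (not_lt.2 (norm_nonneg _))
  have hsl : ∀ z ∈ K, 1 - (w - w0) / (z - w0) ∈ Complex.slitPlane := by
    intro z hz
    apply one_sub_slit
    rw [norm_div, div_lt_one (norm_pos_iff.2 (hne z hz))]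
    exact h z hz
  refine ⟨fun z => L z + Complex.log (1 - (w - w0) / (z - w0)), ?_, ?_⟩
  · refine hL.add (ContinuousOn.clog ?_ hsl)
    exact continuousOn_const.sub (continuousOn_const.div (continuousOn_id.sub continuousOn_const) hne)
  · intro z hz
    rw [Complex.exp_add, hLe z hz, Complex.exp_log (Complex.slitPlane_ne_zero (hsl z hz))]
    have := hne z hz
    field_simp
    ring

lemma good_far {K : Set ℂ} {w : ℂ} (h : ∀ z ∈ K, ‖z‖ < ‖w‖) (hw : w ≠ 0) : GoodPt K w := by
  have hsl : ∀ z ∈ K, 1 - z / w ∈ Complex.slitPlane := by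
    intro z hz
    apply one_sub_slit
    rw [norm_div, div_lt_one (norm_pos_iff.2 hw)]
    exact h z hz
  refine ⟨fun z => Complex.log (-w) + Complex.log (1 - z / w), ?_, ?_⟩
  · refine continuousOn_const.add (ContinuousOn.clog ?_ hsl)
    exact continuousOn_const.sub (continuousOn_id.div_const _)
  · intro z hz
    rw [Complex.exp_add, Complex.exp_log (neg_ne_zero.2 hw), Complex.exp_log (Complex.slitPlane_ne_zero (hsl z hz))]
    field_simp
    ring

lemma J1 {K : Set ℂ} (hK : IsCompact K) {w : ℂ} (hw : w ∉ K)
    (hub : ¬ Bornology.IsBounded (connectedComponentIn Kᶜ w)) : GoodPt K w := by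
  obtain ⟨M, hM⟩ := hK.isBounded.exists_norm_le
  have hopen : IsOpen Kᶜ := hK.isClosed.isOpen_compl
  have hnear : ∀ w0 ∈ Kᶜ, ∃ ε > 0, ball w0 ε ⊆ Kᶜ ∧ ∀ w1 ∈ ball w0 ε, (GoodPt K w0 ↔ GoodPt K w1) := by
    intro w0 hw0
    obtain ⟨ε, hε, hb⟩ := Metric.isOpen_iff.1 hopen w0 hw0
    refine ⟨ε / 2, by positivity, (ball_subset_ball (by linarith)).trans hb, fun w1 hw1 => ?_⟩
    have hd : ‖w1 - w0‖ < ε / 2 := by rwa [mem_ball_iff_norm] at hw1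
    have hz : ∀ z ∈ K, ε ≤ ‖z - w0‖ := by
      intro z hz
      by_contra hlt
      exact hb (mem_ball_iff_norm.2 (not_le.1 hlt)) hz
    constructor
    · exact good_near fun z hzK => by have := hz z hzK; linarith
    · refine good_near fun z hzK => ?_
      have h1 := hz z hzK
      have h2 : ‖z - w0‖ ≤ ‖z - w1‖ + ‖w1 - w0‖ := by
        have := norm_add_le (z - w1) (w1 - w0); simpa using this
      rw [norm_sub_rev w0 w1]
      linarith
  have hU : IsOpen {w | w ∈ Kᶜ ∧ GoodPt K w} := by
    rw [Metric.isOpen_iff]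
    rintro w0 ⟨h1, h2⟩
    obtain ⟨ε, hε, hb, hi⟩ := hnear w0 h1
    exact ⟨ε, hε, fun w1 h => ⟨hb h, (hi w1 h).1 h2⟩⟩
  have hV : IsOpen {w | w ∈ Kᶜ ∧ ¬ GoodPt K w} := by
    rw [Metric.isOpen_iff]
    rintro w0 ⟨h1, h2⟩
    obtain ⟨ε, hε, hb, hi⟩ := hnear w0 h1
    exact ⟨ε, hε, fun w1 h => ⟨hb h, fun h' => h2 ((hi w1 h).2 h')⟩⟩
  have hsub : connectedComponentIn Kᶜ w ⊆ {w | w ∈ Kᶜ ∧ GoodPt K w} := by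
    refine isPreconnected_connectedComponentIn.subset_left_of_subset_union hU hV ?_ ?_ ?_
    · rw [Set.disjoint_left]; rintro x ⟨_, h1⟩ ⟨_, h2⟩; exact h2 h1
    · intro x hx
      have := connectedComponentIn_subset _ _ hx
      by_cases h : GoodPt K x
      · left; exact ⟨this, h⟩
      · right; exact ⟨this, h⟩
    · have : ∃ y ∈ connectedComponentIn Kᶜ w, max M 0 < ‖y‖ := by
        by_contra! h
        exact hub (isBounded_iff_forall_norm_le.2 ⟨_, h⟩)
      obtain ⟨y, hy, hyM⟩ := this
      refine ⟨y, hy, connectedComponentIn_subset _ _ hy, good_far (fun z hz => ?_) ?_⟩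
      · exact ((hM z hz).trans (le_max_left _ _)).trans_lt hyM
      · rw [← norm_pos_iff]; exact (le_max_right _ _).trans_lt hyM
  exact (hsub (mem_connectedComponentIn hw)).2

lemma J2 {K : Set ℂ} (hK : IsPreconnected K) {δ : ℝ} (hδ : 0 < δ) (hd : ∀ z ∈ K, δ ≤ ‖z‖)
    (hp : (δ : ℂ) ∈ K) (hn : (-δ : ℂ) ∈ K)
    (h1 : GoodPt (K ∪ (fun t : ℝ => (t : ℂ)) '' Set.Icc (-δ) δ) (Complex.I * (δ / 2 : ℝ)))
    (h2 : GoodPt (K ∪ (fun t : ℝ => (t : ℂ)) '' Set.Icc (-δ) δ) (-(Complex.I * (δ / 2 : ℝ)))) : False := by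
  obtain ⟨L1, hL1, hE1⟩ := h1
  obtain ⟨L2, hL2, hE2⟩ := h2
  set η : ℝ := δ / 2 with hη
  have hη0 : 0 < η := by positivity
  set J := (fun t : ℝ => (t : ℂ)) '' Set.Icc (-δ) δ with hJ
  have hJp : IsPreconnected J := isPreconnected_Icc.image _ Complex.continuous_ofReal.continuousOn
  set q : ℂ → ℂ := fun z => (z - Complex.I * η) / (z + Complex.I * η) with hq
  have hne2 : ∀ z ∈ K ∪ J, z + Complex.I * η ≠ 0 := by
    intro z hz h
    have := hE2 z hz
    rw [sub_neg_eq_add, h] at this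
    exact Complex.exp_ne_zero _ this
  have hne1 : ∀ z ∈ K ∪ J, z - Complex.I * η ≠ 0 := by
    intro z hz h
    have := hE1 z hz
    rw [h] at this
    exact Complex.exp_ne_zero _ this
  have hqc : ContinuousOn q (K ∪ J) :=
    (continuousOn_id.sub continuousOn_const).div (continuousOn_id.add continuousOn_const) hne2
  have hq0 : ∀ z ∈ K ∪ J, q z ≠ 0 := fun z hz => div_ne_zero (hne1 z hz) (hne2 z hz)
  have hexp : ∀ z ∈ K ∪ J, Complex.exp (L1 z - L2 z) = q z := by
    intro z hz
    rw [Complex.exp_sub, hE1 z hz, hE2 z hz, sub_neg_eq_add]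
  have hslK : ∀ z ∈ K, q z ∈ Complex.slitPlane := by
    intro z hz
    rw [Complex.mem_slitPlane_iff_not_le_zero]
    intro hle
    have hle' := Complex.le_def.1 hle
    have hreal : q z = (((q z).re : ℝ) : ℂ) := Complex.ext (by simp) (by simpa using hle'.2)
    set t := (q z).re with ht
    have ht0 : t ≤ 0 := by simpa using hle'.1
    have hz2 := hne2 z (Or.inl hz)
    have e : z - Complex.I * η = t * (z + Complex.I * η) := by
      rw [← hreal, hq]; field_simp
    have e2 : z * ((1 - t : ℝ) : ℂ) = Complex.I * ((η * (1 + t) : ℝ) : ℂ) := by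
      push_cast; linear_combination e
    have e3 := congrArg norm e2
    rw [norm_mul, norm_mul, Complex.norm_I, one_mul, Complex.norm_real, Complex.norm_real, Real.norm_of_nonneg (by linarith), Real.norm_eq_abs, abs_mul, abs_of_pos hη0] at e3
    have h3 := hd z hz
    have h4 : |1 + t| ≤ 1 - t := by rw [abs_le]; constructor <;> linarith
    have h5 : δ * (1 - t) ≤ η * (1 - t) := by
      calc δ * (1 - t) ≤ ‖z‖ * (1 - t) := by gcongr; linarith
        _ = η * |1 + t| := e3
        _ ≤ η * (1 - t) := by gcongr
    have : δ ≤ η := le_of_mul_le_mul_right h5 (by linarith)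
    linarith
  have hslJ : ∀ z ∈ J, - q z ∈ Complex.slitPlane := by
    rintro _ ⟨x, hx, rfl⟩
    rw [Complex.mem_slitPlane_iff_not_le_zero]
    intro hle
    have hle' := Complex.le_def.1 hle
    have hreal : q x = (((q x).re : ℝ) : ℂ) := Complex.ext (by simp) (by simpa using hle'.2)
    set t := (q x).re with ht
    have ht0 : 0 ≤ t := by simpa using hle'.1
    have hz2 := hne2 x (Or.inr ⟨x, hx, rfl⟩)
    have e : (x:ℂ) - Complex.I * η = t * (x + Complex.I * η) := by
      rw [← hreal, hq]; field_simp
    have e2 := congrArg Complex.im e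
    simp at e2
    nlinarith
  have hJδ : (δ : ℂ) ∈ J := ⟨δ, by constructor <;> linarith, rfl⟩
  have hJδ' : (-δ : ℂ) ∈ J := ⟨-δ, by constructor <;> linarith, by simp⟩
  have c1 := log_unique hK (f := fun z => L1 z - L2 z) (g := fun z => Complex.log (q z))
    ((hL1.sub hL2).mono Set.subset_union_left) ((hqc.mono Set.subset_union_left).clog hslK)
    (fun z hz => by rw [hexp z (Or.inl hz), Complex.exp_log (hq0 z (Or.inl hz))]) hp hn
  have c2 := log_unique hJp (f := fun z => L1 z - L2 z) (g := fun z => Complex.log (- q z) + Real.pi * Complex.I)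
    ((hL1.sub hL2).mono Set.subset_union_right) (((hqc.mono Set.subset_union_right).neg.clog hslJ).add continuousOn_const)
    (fun z hz => by rw [hexp z (Or.inr hz), Complex.exp_add, Complex.exp_log (neg_ne_zero.2 (hq0 z (Or.inr hz))), Complex.exp_pi_mul_I]; ring) hJδ hJδ'
  have c3 := congrArg Complex.im (c1.symm.trans c2)
  simp only [Complex.sub_im, Complex.add_im, Complex.log_im] at c3
  have him : ∀ x : ℝ, (q x).im = -(2 * x * η) / Complex.normSq (x + Complex.I * η) := by
    intro x
    simp only [hq, Complex.div_im]
    simp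
    ring
  have hpos1 : 0 < Complex.normSq ((δ:ℂ) + Complex.I * η) := Complex.normSq_pos.2 (hne2 _ (Or.inl hp))
  have hpos2 : 0 < Complex.normSq (-(δ:ℂ) + Complex.I * η) := Complex.normSq_pos.2 (hne2 _ (Or.inl hn))
  have i1 : (q δ).im < 0 := by
    rw [him, neg_div, neg_lt_zero]
    positivity
  have i2 : 0 < (q (-δ)).im := by
    have := him (-δ)
    push_cast at this
    rw [this]
    apply div_pos _ hpos2
    have : 0 < δ * η := by positivity
    linarith
  have a1 : (q δ).arg < 0 := Complex.arg_neg_iff.2 i1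
  have a2 : 0 ≤ (q (-δ)).arg := Complex.arg_nonneg_iff.2 i2.le
  have a3 : 0 ≤ (-q δ).arg := Complex.arg_nonneg_iff.2 (by simp; linarith)
  have a4 : (-q (-δ)).arg < 0 := Complex.arg_neg_iff.2 (by simp; linarith)
  linarith



/-- the ray argument -/
lemma ray_arg {G : ℂ → ℂ} (hG : Differentiable ℂ G) {K : Set ℂ} (hK : IsCompact K)
    (h0 : ∀ z ∈ K, (G z).re = 0 → G z = 0) {w : ℂ}
    (hb : Bornology.IsBounded (connectedComponentIn Kᶜ w)) {z' : ℂ} (hz' : z' ∈ connectedComponentIn Kᶜ w)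
    (hre : (G z').re = 0) (hne : G z' ≠ 0) (hnc : ∃ z, G z ≠ G z') : False := by
  set C := connectedComponentIn Kᶜ w with hC
  have hKo : IsOpen Kᶜ := hK.isClosed.isOpen_compl
  have hCo : IsOpen C := hKo.connectedComponentIn
  have hfr : ∀ x ∈ closure C, x ∉ C → x ∈ K := by
    intro x hx hxC
    by_contra hxK
    refine comp_frontier hKo (z := w) (x := x) ?_ hxK
    rw [hCo.frontier_eq]; exact ⟨hx, hxC⟩
  have hcl : IsCompact (closure C) := hb.isCompact_closure
  have hopen : IsOpen (G '' C) := by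
    have ha : AnalyticOnNhd ℂ G Set.univ := fun z _ => hG.analyticAt z
    rcases ha.is_constant_or_isOpenMap with h | h
    · exfalso
      obtain ⟨c, hc⟩ := h
      obtain ⟨z, hz⟩ := hnc
      exact hz (by rw [hc z, hc z'])
    · exact h C hCo
  have hcomp : IsCompact (G '' closure C) := hcl.image hG.continuous
  let f : ℝ → ℂ := fun t => t * G z'
  have hf : Continuous f := by fun_prop
  have hT : Set.Ioi (0:ℝ) ⊆ f ⁻¹' (G '' C) := by
    refine isPreconnected_Ioi.subset_left_of_subset_union (hopen.preimage hf) (hcomp.isClosed.isOpen_compl.preimage hf) ?_ ?_ ?_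
    · rw [Set.disjoint_left]
      intro t h1 h2
      exact h2 (Set.image_mono subset_closure h1)
    · intro t ht
      by_cases h : f t ∈ G '' closure C
      · left
        obtain ⟨x, hx, hxt⟩ := h
        by_cases hxC : x ∈ C
        · exact ⟨x, hxC, hxt⟩
        · exfalso
          have h1 := h0 x (hfr x hx hxC) (by rw [hxt]; simp [f, hre])
          rw [h1] at hxt
          have : (t:ℂ) * G z' = 0 := hxt.symm
          rcases mul_eq_zero.1 this with h | h
          · have : t = 0 := by exact_mod_cast h
            exact (ne_of_gt ht) this
          · exact hne h
      · right; exact h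
    · exact ⟨1, by simp, z', hz', by simp [f]⟩
  obtain ⟨M, hM⟩ := hcomp.isBounded.exists_norm_le
  have hpos : 0 < ‖G z'‖ := norm_pos_iff.2 hne
  have h1 := hM _ (Set.image_mono subset_closure (hT (show (|M| + 1) / ‖G z'‖ ∈ Set.Ioi (0:ℝ) from Set.mem_Ioi.2 (by positivity))))
  simp only [f, norm_mul, Complex.norm_real] at h1
  rw [Real.norm_of_nonneg (by positivity), div_mul_cancel₀ _ hpos.ne'] at h1
  have := le_abs_self M
  linarith

lemma J3 {G : ℂ → ℂ} (hG : Differentiable ℂ G) (hG0 : G 0 = 0) {K : Set ℂ} (hKc : IsCompact K) (hKp : IsPreconnected K)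
    {δ : ℝ} (hδ : 0 < δ) (hd : ∀ z ∈ K, δ ≤ ‖z‖) (hp : (δ : ℂ) ∈ K) (hn : (-δ : ℂ) ∈ K)
    (hK0 : ∀ z ∈ K, (G z).re = 0 → G z = 0)
    (hpos : ∀ t : ℝ, 0 < t → t ≤ δ → 0 < (G t).re) (hneg : ∀ t : ℝ, 0 < t → t ≤ δ → (G (-t)).re < 0)
    (hnz : ∀ z, z ≠ 0 → ‖z‖ < δ → G z ≠ 0) : False := by
  set J := (fun t : ℝ => (t : ℂ)) '' Set.Icc (-δ) δ with hJ
  have hJc : IsCompact J := isCompact_Icc.image Complex.continuous_ofReal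
  have hKJ : IsCompact (K ∪ J) := hKc.union hJc
  have h0 : ∀ z ∈ K ∪ J, (G z).re = 0 → G z = 0 := by
    rintro z (hz | ⟨t, ht, rfl⟩) hre
    · exact hK0 z hz hre
    · rcases lt_trichotomy t 0 with h | h | h
      · have := hneg (-t) (by linarith) (by linarith [ht.1])
        simp at this
        linarith
      · simp [h, hG0]
      · have := hpos t h ht.2
        linarith
  have hη0 : 0 < δ / 2 := by positivity
  have main : ∀ σ : ℝ, (σ = 1 ∨ σ = -1) →
      ¬ Bornology.IsBounded (connectedComponentIn (K ∪ J)ᶜ ((σ:ℂ) * (Complex.I * (δ / 2 : ℝ)))) := by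
    intro σ hσ hb
    have hσσ : σ * σ = 1 := by rcases hσ with rfl | rfl <;> norm_num
    have hσabs : |σ| = 1 := by rcases hσ with rfl | rfl <;> norm_num
    let c : ℝ → ℂ := fun θ => (δ / 2 : ℝ) * Complex.exp ((σ * θ : ℝ) * Complex.I)
    have hc : Continuous c := by fun_prop
    have hcn : ∀ θ, ‖c θ‖ = δ / 2 := by
      intro θ
      simp only [c, norm_mul, Complex.norm_exp_ofReal_mul_I, Complex.norm_real, mul_one, Real.norm_of_nonneg hη0.le]
    have hcim : ∀ θ ∈ Set.Ioo 0 Real.pi, (c θ).im ≠ 0 := by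
      intro θ hθ
      have := Real.sin_pos_of_pos_of_lt_pi hθ.1 hθ.2
      simp only [c, Complex.im_ofReal_mul, Complex.exp_ofReal_mul_I_im]
      rcases hσ with rfl | rfl
      · rw [one_mul]; positivity
      · rw [neg_one_mul, Real.sin_neg]; exact mul_ne_zero hη0.ne' (by linarith)
    have hcK : ∀ θ ∈ Set.Ioo 0 Real.pi, c θ ∈ (K ∪ J)ᶜ := by
      intro θ hθ hmem
      rcases hmem with hmem | ⟨t, ht, hte⟩
      · have := hd _ hmem
        rw [hcn] at this; linarith
      · apply hcim θ hθ
        rw [← hte]; simp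
    have hcmid : c (Real.pi / 2) = (σ:ℂ) * (Complex.I * (δ / 2 : ℝ)) := by
      simp only [c]
      rcases hσ with rfl | rfl
      · have : Complex.exp (((1 * (Real.pi / 2) : ℝ) : ℂ) * Complex.I) = Complex.I := by
          rw [one_mul]; push_cast; exact Complex.exp_pi_div_two_mul_I
        rw [this]; push_cast; ring
      · have : Complex.exp (((-1 * (Real.pi / 2) : ℝ) : ℂ) * Complex.I) = -Complex.I := by
          rw [neg_one_mul]; push_cast
          rw [neg_mul, Complex.exp_neg, Complex.exp_pi_div_two_mul_I, Complex.inv_I]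
        rw [this]; push_cast; ring
    have hpi := Real.pi_pos
    have harc : c '' Set.Ioo 0 Real.pi ⊆ connectedComponentIn (K ∪ J)ᶜ ((σ:ℂ) * (Complex.I * (δ / 2 : ℝ))) := by
      refine (isPreconnected_Ioo.image _ hc.continuousOn).subset_connectedComponentIn ?_ ?_
      · exact ⟨Real.pi / 2, by constructor <;> linarith, hcmid⟩
      · rintro _ ⟨θ, hθ, rfl⟩; exact hcK θ hθ
    have hc0 : c 0 = (δ / 2 : ℝ) := by simp [c]
    have hcpi : c Real.pi = -((δ / 2 : ℝ) : ℂ) := by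
      simp only [c]
      rcases hσ with rfl | rfl
      · rw [one_mul, Complex.exp_pi_mul_I]; ring
      · rw [neg_one_mul]; push_cast
        rw [neg_mul, Complex.exp_neg, Complex.exp_pi_mul_I]; norm_num
    have hg : ContinuousOn (fun θ => (G (c θ)).re) (Set.Icc 0 Real.pi) :=
      (Complex.continuous_re.comp (hG.continuous.comp hc)).continuousOn
    have h1 : 0 < (G (c 0)).re := by rw [hc0]; exact hpos _ hη0 (by linarith)
    have h2 : (G (c Real.pi)).re < 0 := by rw [hcpi]; exact hneg _ hη0 (by linarith)
    obtain ⟨θ, hθ, hθ0⟩ := intermediate_value_Icc' hpi.le hg ⟨h2.le, h1.le⟩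
    simp only at hθ0
    have hθ' : θ ∈ Set.Ioo 0 Real.pi := by
      refine ⟨lt_of_le_of_ne hθ.1 ?_, lt_of_le_of_ne hθ.2 ?_⟩
      · rintro rfl; linarith
      · rintro rfl; linarith
    have hcne : c θ ≠ 0 := by rw [← norm_pos_iff, hcn]; exact hη0
    have hGc : G (c θ) ≠ 0 := hnz _ hcne (by rw [hcn]; linarith)
    exact ray_arg hG hKJ h0 hb (harc ⟨θ, hθ', rfl⟩) hθ0 hGc ⟨0, by rw [hG0]; exact hGc.symm⟩
  have hnot : ∀ σ : ℝ, (σ = 1 ∨ σ = -1) → (σ:ℂ) * (Complex.I * (δ / 2 : ℝ)) ∉ K ∪ J := by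
    rintro σ hσ (h | ⟨t, ht, hte⟩)
    · have := hd _ h
      rw [norm_mul, norm_mul, Complex.norm_I, Complex.norm_real, Complex.norm_real, Real.norm_of_nonneg hη0.le] at this
      rcases hσ with rfl | rfl <;> norm_num at this <;> linarith
    · have := congrArg Complex.im hte
      rcases hσ with rfl | rfl
      · norm_num at this; linarith
      · norm_num at this; linarith
  have g1 := J1 hKJ (hnot 1 (Or.inl rfl)) (main 1 (Or.inl rfl))
  have g2 := J1 hKJ (hnot (-1) (Or.inr rfl)) (main (-1) (Or.inr rfl))
  refine J2 hKp hδ hd hp hn ?_ ?_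
  · simpa using g1
  · simpa using g2



def LocPt (F : ℂ → ℂ) (a : ℂ) (δ : ℝ) : Prop :=
  0 < δ ∧ ∀ z : ℂ, ‖z‖ ≤ δ → ‖F (a + (deriv F a)⁻¹ * z) - F a - z‖ ≤ ‖z‖ / 2

lemma exists_locPt {F : ℂ → ℂ} (hF : Differentiable ℂ F) {a : ℂ} (ha : deriv F a ≠ 0) :
    ∃ δ, LocPt F a δ := by
  have h1 : HasDerivAt (fun z : ℂ => F (a + (deriv F a)⁻¹ * z)) 1 0 := by
    have h2 : HasDerivAt (fun z : ℂ => a + (deriv F a)⁻¹ * z) (deriv F a)⁻¹ 0 := by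
      simpa using ((hasDerivAt_id (0:ℂ)).const_mul (deriv F a)⁻¹).const_add a
    have h3 : HasDerivAt F (deriv F a) (a + (deriv F a)⁻¹ * 0) := by
      simpa using (hF a).hasDerivAt
    have := h3.comp (0:ℂ) h2
    rwa [mul_inv_cancel₀ ha] at this
  have h2 := (hasDerivAt_iff_isLittleO.1 h1).def (show (0:ℝ) < 1/2 by norm_num)
  obtain ⟨ε, hε, h3⟩ := Metric.eventually_nhds_iff.1 h2
  refine ⟨ε / 2, by positivity, fun z hz => ?_⟩
  have := h3 (y := z) (by rw [dist_zero_right]; linarith)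
  simp at this
  linarith

lemma LocPt.re {F : ℂ → ℂ} {a : ℂ} {δ : ℝ} (h : LocPt F a δ) (h0 : (F a).re = 0) {t : ℝ} (ht : |t| ≤ δ) :
    |(F (a + (deriv F a)⁻¹ * t)).re - t| ≤ |t| / 2 := by
  have h1 := h.2 t (by simpa using ht)
  have h2 := (Complex.abs_re_le_norm _).trans h1
  simpa [h0] using h2

lemma LocPt.pos {F : ℂ → ℂ} {a : ℂ} {δ : ℝ} (h : LocPt F a δ) (h0 : (F a).re = 0) {t : ℝ} (ht0 : 0 < t) (ht : t ≤ δ) :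
    0 < (F (a + (deriv F a)⁻¹ * t)).re := by
  have := abs_le.1 (h.re h0 (t := t) (by rwa [abs_of_pos ht0]))
  rw [abs_of_pos ht0] at this
  linarith

lemma LocPt.neg {F : ℂ → ℂ} {a : ℂ} {δ : ℝ} (h : LocPt F a δ) (h0 : (F a).re = 0) {t : ℝ} (ht0 : 0 < t) (ht : t ≤ δ) :
    (F (a + (deriv F a)⁻¹ * (-t))).re < 0 := by
  have := abs_le.1 (h.re h0 (t := -t) (by rwa [abs_neg, abs_of_pos ht0]))
  rw [abs_neg, abs_of_pos ht0] at this
  push_cast at this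
  linarith

lemma LocPt.ne {F : ℂ → ℂ} {a : ℂ} {δ : ℝ} (h : LocPt F a δ) {z : ℂ} (hz : z ≠ 0) (hz2 : ‖z‖ ≤ δ) :
    F (a + (deriv F a)⁻¹ * z) - F a ≠ 0 := by
  intro h1
  have := h.2 z hz2
  rw [h1, zero_sub, norm_neg] at this
  have := norm_pos_iff.2 hz
  linarith

/-- a compact connected set inside a component joining two points -/
lemma comp_path {F : ℂ → ℂ} (hF : Differentiable ℂ F) {x y : ℂ} (hx : (F x).re ≠ 0) (hy : (F y).re ≠ 0)
    (h : connectedComponentIn {z | (F z).re ≠ 0} x = connectedComponentIn {z | (F z).re ≠ 0} y) :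
    ∃ γ : Set ℂ, IsCompact γ ∧ IsPreconnected γ ∧ x ∈ γ ∧ y ∈ γ ∧ ∀ z ∈ γ, (F z).re ≠ 0 := by
  have hxm : x ∈ {z | (F z).re ≠ 0} := hx
  have hym : y ∈ {z | (F z).re ≠ 0} := hy
  have ho : IsOpen (connectedComponentIn {z | (F z).re ≠ 0} x) := (reopen hF).connectedComponentIn
  have hc : IsConnected (connectedComponentIn {z | (F z).re ≠ 0} x) := isConnected_connectedComponentIn_iff.2 hxm
  have hp := (ho.isConnected_iff_isPathConnected).1 hc
  obtain ⟨p, hp⟩ := hp.joinedIn x (mem_connectedComponentIn hxm) y (h ▸ mem_connectedComponentIn hym)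
  refine ⟨Set.range p, isCompact_range p.continuous, isPreconnected_range p.continuous, ⟨0, p.source⟩, ⟨1, p.target⟩, ?_⟩
  rintro z ⟨t, rfl⟩
  exact connectedComponentIn_subset _ _ (hp t)

lemma claimA {F : ℂ → ℂ} (hF : Differentiable ℂ F) {a b : ℂ} {δa δb : ℝ} (ha : LocPt F a δa) (hb : LocPt F b δb)
    (ha' : deriv F a ≠ 0) (h0 : (F a).re = 0) (hab : F a = F b)
    (hP : connectedComponentIn {z | (F z).re ≠ 0} (a + (deriv F a)⁻¹ * (δa : ℝ)) =
      connectedComponentIn {z | (F z).re ≠ 0} (b + (deriv F b)⁻¹ * (δb : ℝ)))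
    (hN : connectedComponentIn {z | (F z).re ≠ 0} (a + (deriv F a)⁻¹ * (-(δa : ℝ))) =
      connectedComponentIn {z | (F z).re ≠ 0} (b + (deriv F b)⁻¹ * (-(δb : ℝ)))) : a = b := by
  by_contra hne
  have h0b : (F b).re = 0 := hab ▸ h0
  obtain ⟨γp, pc, pp, pa, pb, pr⟩ := comp_path hF (ha.pos h0 ha.1 le_rfl).ne' (hb.pos h0b hb.1 le_rfl).ne' hP
  obtain ⟨γn, nc, np, na, nb, nr⟩ := comp_path hF (ha.neg h0 ha.1 le_rfl).ne (hb.neg h0b hb.1 le_rfl).ne hN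
  -- segment through b
  set sb : Set ℂ := (fun t : ℝ => b + (deriv F b)⁻¹ * t) '' Set.Icc (-δb) δb with hsb
  have sbcont : Continuous (fun t : ℝ => b + (deriv F b)⁻¹ * t) := by fun_prop
  have sc : IsCompact sb := isCompact_Icc.image sbcont
  have sp : IsPreconnected sb := isPreconnected_Icc.image _ sbcont.continuousOn
  have sr : ∀ z ∈ sb, (F z).re = 0 → z = b := by
    rintro z ⟨t, ht, rfl⟩ hz
    have ht' : |t| ≤ δb := abs_le.2 ht
    have h2 := hb.re h0b ht'
    simp only [hz, zero_sub, abs_neg] at h2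
    have : t = 0 := abs_eq_zero.1 (by linarith [abs_nonneg t])
    simp [this]
  have spb : b + (deriv F b)⁻¹ * (δb : ℝ) ∈ sb := ⟨δb, ⟨by linarith [hb.1], le_rfl⟩, rfl⟩
  have snb : b + (deriv F b)⁻¹ * (-(δb : ℝ)) ∈ sb := ⟨-δb, ⟨le_rfl, by linarith [hb.1]⟩, by simp⟩
  set Γ : Set ℂ := (γp ∪ sb) ∪ γn with hΓ
  have Γc : IsCompact Γ := (pc.union sc).union nc
  have Γp : IsPreconnected Γ := (pp.union _ pb spb sp).union _ (Or.inr snb) nb np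
  have Γr : ∀ z ∈ Γ, (F z).re = 0 → z = b := by
    rintro z ((h | h) | h) hz
    · exact absurd hz (pr z h)
    · exact sr z h hz
    · exact absurd hz (nr z h)
  have aΓ : a ∉ Γ := fun h => hne (Γr a h h0)
  -- transported set
  set d := (deriv F a)⁻¹ with hd
  have hd0 : d ≠ 0 := inv_ne_zero ha'
  set φ : ℂ → ℂ := fun w => d⁻¹ * (w - a) with hφ
  have φc : Continuous φ := by fun_prop
  have φi : ∀ w, a + d * φ w = w := by intro w; simp only [hφ]; field_simp; ring
  have φi2 : ∀ z, φ (a + d * z) = z := by intro z; simp only [hφ]; field_simp; ring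
  have K0c : IsCompact (φ '' Γ) := Γc.image φc
  have K0n : (0:ℂ) ∉ φ '' Γ := by
    rintro ⟨w, hw, h⟩
    have := φi w
    rw [h] at this
    simp at this
    exact aΓ (this ▸ hw)
  obtain ⟨ε, hε, hball⟩ := Metric.isOpen_iff.1 K0c.isClosed.isOpen_compl 0 K0n
  obtain ⟨δ, hδ, hδε, hδa⟩ : ∃ δ : ℝ, 0 < δ ∧ δ ≤ ε ∧ δ ≤ δa :=
    ⟨min ε δa, lt_min hε ha.1, min_le_left _ _, min_le_right _ _⟩
  set S1 : Set ℂ := (fun t : ℝ => (t : ℂ)) '' Set.Icc δ δa with hS1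
  set S2 : Set ℂ := (fun t : ℝ => (-t : ℂ)) '' Set.Icc δ δa with hS2
  have c1 : Continuous (fun t : ℝ => (t : ℂ)) := by fun_prop
  have c2 : Continuous (fun t : ℝ => (-t : ℂ)) := by fun_prop
  have m1 : (δa : ℂ) ∈ S1 := ⟨δa, ⟨hδa, le_rfl⟩, rfl⟩
  have m2 : (-δa : ℂ) ∈ S2 := ⟨δa, ⟨hδa, le_rfl⟩, rfl⟩
  have m3 : (δa : ℂ) ∈ φ '' Γ := ⟨_, Or.inl (Or.inl pa), φi2 _⟩
  have m4 : (-δa : ℂ) ∈ φ '' Γ := ⟨_, Or.inr na, φi2 _⟩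
  set K : Set ℂ := (φ '' Γ ∪ S1) ∪ S2 with hK
  refine J3 (G := fun z => F (a + d * z) - F a) (K := K) (δ := δ) ?_ (by simp) ?_ ?_ hδ ?_ ?_ ?_ ?_ ?_ ?_ ?_
  · exact (hF.comp (by fun_prop : Differentiable ℂ fun z => a + d * z)).sub_const _
  · exact (K0c.union (isCompact_Icc.image c1)).union (isCompact_Icc.image c2)
  · exact ((Γp.image _ φc.continuousOn).union _ m3 m1 (isPreconnected_Icc.image _ c1.continuousOn)).union _
      (Or.inl m4) m2 (isPreconnected_Icc.image _ c2.continuousOn)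
  · rintro z ((h | ⟨t, ht, rfl⟩) | ⟨t, ht, rfl⟩)
    · by_contra! hlt
      exact hball (by simpa using hlt.trans_le hδε) h
    · simp only [Complex.norm_real, Real.norm_eq_abs]
      exact ht.1.trans (le_abs_self _)
    · simp only [norm_neg, Complex.norm_real, Real.norm_eq_abs]
      exact ht.1.trans (le_abs_self _)
  · exact Or.inl (Or.inr ⟨δ, ⟨le_rfl, hδa⟩, rfl⟩)
  · exact Or.inr ⟨δ, ⟨le_rfl, hδa⟩, rfl⟩
  · rintro z ((⟨w, hw, rfl⟩ | ⟨t, ht, rfl⟩) | ⟨t, ht, rfl⟩) hz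
    · simp only [φi, Complex.sub_re, h0, sub_zero] at hz ⊢
      rw [Γr w hw hz, hab, sub_self]
    · have := ha.pos h0 (hδ.trans_le ht.1) ht.2
      simp only [Complex.sub_re, h0, sub_zero] at hz
      exact absurd hz this.ne'
    · have := ha.neg h0 (hδ.trans_le ht.1) ht.2
      simp only [Complex.sub_re, h0, sub_zero] at hz
      exact absurd hz this.ne
  · intro t ht ht2
    simpa [h0] using ha.pos h0 ht (ht2.trans hδa)
  · intro t ht ht2
    simpa [h0] using ha.neg h0 ht (ht2.trans hδa)
  · intro z hz hz2
    exact ha.ne hz (hz2.le.trans hδa)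

/-- counting: simple solutions of `F z = w`, `Re w = 0`. -/
lemma count_simple {F : ℂ → ℂ} (hF : Differentiable ℂ F) (hfin : (nodalComponents {z | (F z).re ≠ 0}).Finite) :
    ∃ M : ℕ, ∀ w : ℂ, w.re = 0 → {z | F z = w ∧ deriv F z ≠ 0}.Finite ∧
      {z | F z = w ∧ deriv F z ≠ 0}.ncard ≤ M := by
  classical
  set 𝒞 := nodalComponents {z | (F z).re ≠ 0} with h𝒞
  refine ⟨(𝒞 ×ˢ 𝒞).ncard, fun w hw => ?_⟩
  set δf : ℂ → ℝ := fun z => if h : deriv F z ≠ 0 then (exists_locPt hF h).choose else 1 with hδf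
  have hloc : ∀ z, deriv F z ≠ 0 → LocPt F z (δf z) := by
    intro z hz
    simp only [hδf, dif_pos hz]
    exact (exists_locPt hF hz).choose_spec
  set Φ : ℂ → Set ℂ × Set ℂ := fun z =>
    (connectedComponentIn {z | (F z).re ≠ 0} (z + (deriv F z)⁻¹ * (δf z : ℝ)),
     connectedComponentIn {z | (F z).re ≠ 0} (z + (deriv F z)⁻¹ * (-(δf z : ℝ)))) with hΦ
  have hmaps : Set.MapsTo Φ {z | F z = w ∧ deriv F z ≠ 0} (𝒞 ×ˢ 𝒞) := by
    rintro z ⟨h1, h2⟩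
    have hl := hloc z h2
    have h0 : (F z).re = 0 := by rw [h1, hw]
    exact ⟨⟨_, (hl.pos h0 hl.1 le_rfl).ne', rfl⟩, ⟨_, (hl.neg h0 hl.1 le_rfl).ne, rfl⟩⟩
  have hinj : Set.InjOn Φ {z | F z = w ∧ deriv F z ≠ 0} := by
    rintro z ⟨h1, h2⟩ z' ⟨h1', h2'⟩ he
    have he' := Prod.ext_iff.1 he
    exact claimA hF (hloc z h2) (hloc z' h2') h2 (by rw [h1, hw]) (h1.trans h1'.symm) he'.1 he'.2
  have hf2 : (𝒞 ×ˢ 𝒞).Finite := hfin.prod hfin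
  exact ⟨Set.Finite.of_injOn hmaps hinj hf2, Set.ncard_le_ncard_of_injOn Φ hmaps hinj hf2⟩



lemma zeros_countable {G : ℂ → ℂ} (hG : Differentiable ℂ G) (hne : ∃ z, G z ≠ 0) : {z | G z = 0}.Countable := by
  have han : AnalyticOnNhd ℂ G Set.univ := fun z _ => hG.analyticAt z
  have hiso : ∀ x ∈ {z | G z = 0}, ({x} : Set ℂ) ∈ nhdsWithin x {z | G z = 0} := by
    intro x hx
    rcases (hG.analyticAt x).eventually_eq_zero_or_eventually_ne_zero with h | h
    · exfalso
      obtain ⟨z, hz⟩ := hne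
      exact hz (han.eqOn_zero_of_preconnected_of_eventuallyEq_zero isPreconnected_univ (Set.mem_univ x) h (Set.mem_univ z))
    · rw [eventually_nhdsWithin_iff] at h
      rw [mem_nhdsWithin_iff_eventually]
      filter_upwards [h] with y hy hy2
      by_contra h3
      exact hy h3 hy2
  obtain ⟨t, _, htc, hcov⟩ := TopologicalSpace.countable_cover_nhdsWithin hiso
  refine htc.mono (fun z hz => ?_)
  have := hcov hz
  simpa using this

lemma order_bound {A : ℂ → ℂ} (hA : Differentiable ℂ A) (hne : ∃ z, A z ≠ 0) (c z : ℂ)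
    (hcrit : c * A z = 1 → deriv A z ≠ 0) :
    (MeromorphicOn.divisor (fun z => (A z)⁻¹ - c) Set.univ z) ≤ if c * A z = 1 then 1 else 0 := by
  have han : AnalyticOnNhd ℂ A Set.univ := fun z _ => hA.analyticAt z
  have hM : MeromorphicOn (fun z => (A z)⁻¹ - c) Set.univ := fun z _ =>
    (hA.analyticAt z).meromorphicAt.inv.sub (MeromorphicAt.const c z)
  rw [MeromorphicOn.divisor_apply hM (Set.mem_univ z)]
  set h : ℂ → ℂ := fun z => 1 - c * A z with hh
  have hdiff : Differentiable ℂ h := by fun_prop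
  have hne0 : ∀ᶠ y in nhdsWithin z {z}ᶜ, A y ≠ 0 := by
    rcases (hA.analyticAt z).eventually_eq_zero_or_eventually_ne_zero with h | h
    · exfalso
      obtain ⟨w, hw⟩ := hne
      exact hw (han.eqOn_zero_of_preconnected_of_eventuallyEq_zero isPreconnected_univ (Set.mem_univ z) h (Set.mem_univ w))
    · exact h
  have hcongr : (fun z => (A z)⁻¹ - c) =ᶠ[nhdsWithin z {z}ᶜ] (h * A⁻¹) := by
    filter_upwards [hne0] with y hy
    simp only [hh, Pi.mul_apply, Pi.inv_apply]
    field_simp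
  rw [meromorphicOrderAt_congr hcongr, meromorphicOrderAt_mul (hdiff.analyticAt z).meromorphicAt
    (hA.analyticAt z).meromorphicAt.inv, meromorphicOrderAt_inv]
  have hAt : meromorphicOrderAt A z ≠ ⊤ := by
    rw [ne_eq, meromorphicOrderAt_eq_top_iff]
    intro h1
    obtain ⟨y, hy1, hy2⟩ := (h1.and hne0).exists
    exact hy2 hy1
  have hAnn : 0 ≤ (meromorphicOrderAt A z).untop₀ := by
    have := (hA.analyticAt z).meromorphicOrderAt_nonneg
    lift meromorphicOrderAt A z to ℤ using hAt with m
    simpa using this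
  have key : ∀ k : ℤ, meromorphicOrderAt h z = k →
      (meromorphicOrderAt h z + -meromorphicOrderAt A z).untop₀ ≤ k := by
    intro k hk
    rw [hk]
    lift meromorphicOrderAt A z to ℤ using hAt with m
    have : ((k : WithTop ℤ) + -(m : WithTop ℤ)) = ((k - m : ℤ) : WithTop ℤ) := by
      rfl
    rw [this, WithTop.untop₀_coe]
    rw [WithTop.untop₀_coe] at hAnn
    omega
  split_ifs with hc
  · refine key 1 ?_
    have hz : h z = 0 := by simp [hh, hc]
    have hd : deriv h z ≠ 0 := by
      have : HasDerivAt h (-(c * deriv A z)) z := by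
        simpa using ((hA z).hasDerivAt.const_mul c).const_sub 1
      rw [this.deriv]
      exact neg_ne_zero.2 (mul_ne_zero (by rintro rfl; simp at hc) (hcrit hc))
    rw [(hdiff.analyticAt z).meromorphicOrderAt_eq,
      (hdiff.analyticAt z).analyticOrderAt_eq_one_of_zero_deriv_ne_zero hz hd]
    rfl
  · refine key 0 ?_
    have hz : h z ≠ 0 := by
      simp only [hh]; intro h; exact hc (sub_eq_zero.1 h).symm
    rw [(hdiff.analyticAt z).meromorphicOrderAt_eq, analyticOrderAt_eq_zero.2 (Or.inr hz)]
    rfl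

open Function.locallyFinsuppWithin in
lemma logCounting_diff_le (D : Function.locallyFinsupp ℂ ℤ) (h0 : 0 ≤ D) (h1 : ∀ z, D z ≤ 1)
    (hf : D.support.Finite) {R : ℝ} (hR : 1 ≤ R) :
    logCounting D R - logCounting D 1 ≤ D.support.ncard * Real.log R := by
  classical
  have hsum := sum_apply_smul_single_eq_self_on_univ hf
  have e : ∀ r, logCounting D r = ∑ z ∈ hf.toFinset, logCounting (single z (D z)) r := by
    intro r
    conv_lhs => rw [← hsum]
    rw [map_sum, Finset.sum_apply]
  rw [e R, e 1, ← Finset.sum_sub_distrib, Set.ncard_eq_toFinset_card _ hf, ← nsmul_eq_mul]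
  refine Finset.sum_le_card_nsmul _ _ _ (fun z hz => ?_)
  have hz' : D z ≠ 0 := by simpa using hz
  have hz1 : D z = 1 := le_antisymm (h1 z) (by have := h0 z; simp at this; omega)
  rw [hz1]
  have hnn : (0 : Function.locallyFinsupp ℂ ℤ) ≤ single z 1 := by
    intro x
    simp only [single_apply]
    split_ifs <;> simp
  have hn1 : 0 ≤ logCounting (single z (1:ℤ)) 1 := logCounting_nonneg hnn le_rfl
  have hlog : 0 ≤ Real.log R := Real.log_nonneg hR
  by_cases hzR : ‖z‖ ≤ R
  · by_cases hz1 : ‖z‖ ≤ 1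
    · rw [logCounting_single_eq_log_sub_const hzR, logCounting_single_eq_log_sub_const hz1]
      simp
    · rw [logCounting_single_eq_log_sub_const hzR]
      have := Real.log_nonneg (not_le.1 hz1).le
      simp
      linarith
  · have h2 := logCounting_mono hnn (show R ∈ Set.Ioi (0:ℝ) from by simp; linarith)
      (show ‖z‖ ∈ Set.Ioi (0:ℝ) from by simp; rintro rfl; simp at hzR; linarith) (not_le.1 hzR).le
    rw [logCounting_single_eq_log_sub_const (r := ‖z‖) le_rfl] at h2
    simp at h2
    linarith



lemma re_moebius {a : ℂ} (ha : ‖a‖ = 1) : ((1 - a) / (1 + a)).re = 0 := by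
  have h : a.re * a.re + a.im * a.im = 1 := by
    have := Complex.normSq_eq_norm_sq a
    rw [ha, Complex.normSq_apply] at this
    simpa using this
  rw [Complex.div_re]
  simp only [Complex.sub_re, Complex.add_re, Complex.sub_im, Complex.add_im, Complex.one_re, Complex.one_im]
  rw [← add_div]
  have : (1 - a.re) * (1 + a.re) + (0 - a.im) * (0 + a.im) = 0 := by ring_nf; linarith
  rw [this, zero_div]

lemma logCounting_good {F : ℂ → ℂ} (hF : Differentiable ℂ F) (hnc : ∃ z, deriv F z ≠ 0) {M : ℕ}
    (hM : ∀ w : ℂ, w.re = 0 → {z | F z = w ∧ deriv F z ≠ 0}.Finite ∧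
      {z | F z = w ∧ deriv F z ≠ 0}.ncard ≤ M) {a : ℂ} (ha : ‖a‖ = 1) (ha1 : a ≠ -1)
    (hcrit : ∀ z, F z = (1 - a) / (1 + a) → deriv F z ≠ 0) {R : ℝ} (hR : 1 ≤ R) :
    ValueDistribution.logCounting (fun z => ((1 + F z) / 2)⁻¹ - 1) a R ≤ 
    ValueDistribution.logCounting (fun z => ((1 + F z) / 2)⁻¹ - 1) a 1 + M * Real.log R := by
  have hda : ∀ z, HasDerivAt (fun z => (1 + F z) / 2) (deriv F z / 2) z := fun z =>
    ((hF z).hasDerivAt.const_add 1).div_const 2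
  have h1a : 1 + a ≠ 0 := fun h => ha1 (by linear_combination h)
  have hiff : ∀ z, (1 + a) * ((1 + F z) / 2) = 1 ↔ F z = (1 - a) / (1 + a) := by
    intro z
    rw [eq_div_iff h1a]
    constructor
    · intro h; linear_combination 2 * h
    · intro h; linear_combination h / 2
  have hA : Differentiable ℂ (fun z => (1 + F z) / 2) := fun z => (hda z).differentiableAt
  have hAne : ∃ z, (1 + F z) / 2 ≠ 0 := by
    by_contra! h
    obtain ⟨z, hz⟩ := hnc
    have h2 := hda z
    rw [funext h] at h2
    have := h2.unique (hasDerivAt_const z 0)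
    exact hz (by simpa using this)
  rw [ValueDistribution.logCounting_coe]
  set D := (MeromorphicOn.divisor (fun z => ((1 + F z) / 2)⁻¹ - 1 - a) Set.univ)⁺ with hD
  have hb : ∀ z, D z ≤ if F z = (1 - a) / (1 + a) then 1 else 0 := by
    intro z
    have := order_bound hA hAne (1 + a) z (by
      intro h
      rw [(hda z).deriv]
      exact div_ne_zero (hcrit z ((hiff z).1 h)) two_ne_zero)
    simp only [hiff, ← sub_sub] at this
    rw [hD, Function.locallyFinsuppWithin.posPart_apply]
    rw [posPart_def]
    refine sup_le ?_ ?_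
    · exact this
    · split_ifs <;> simp
  have hnn : 0 ≤ D := posPart_nonneg _
  have hsub : D.support ⊆ {z | F z = (1 - a) / (1 + a) ∧ deriv F z ≠ 0} := by
    intro z hz
    have hz' : D z ≠ 0 := hz
    have h1 := hb z
    have h2 := hnn z
    by_cases h : F z = (1 - a) / (1 + a)
    · exact ⟨h, hcrit z h⟩
    · rw [if_neg h] at h1
      exact absurd (le_antisymm h1 h2) hz'
  obtain ⟨hfin, hcard⟩ := hM _ (re_moebius ha)
  have h3 := logCounting_diff_le D hnn (fun z => (hb z).trans (by split_ifs <;> simp)) (hfin.subset hsub) hR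
  have h4 : (D.support.ncard : ℝ) ≤ M := by
    exact_mod_cast (Set.ncard_le_ncard hsub hfin).trans hcard
  have h5 := mul_le_mul_of_nonneg_right h4 (Real.log_nonneg hR)
  linarith

lemma char_bound {F : ℂ → ℂ} (hF : Differentiable ℂ F) (hnc : ∃ z, deriv F z ≠ 0) {M : ℕ}
    (hM : ∀ w : ℂ, w.re = 0 → {z | F z = w ∧ deriv F z ≠ 0}.Finite ∧
      {z | F z = w ∧ deriv F z ≠ 0}.ncard ≤ M) :
    ∃ C, ∀ R, 1 ≤ R → Real.circleAverage (fun z => Real.posLog ‖(1 + F z) / 2‖) 0 R ≤ M * Real.log R + C := by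
  set A : ℂ → ℂ := fun z => (1 + F z) / 2 with hAdef
  have hA : Differentiable ℂ A := by fun_prop
  have hAm : Meromorphic A := fun z => (hA.analyticAt z).meromorphicAt
  have hAim : Meromorphic A⁻¹ := fun z => (hAm z).inv
  set f : ℂ → ℂ := fun z => (A z)⁻¹ - 1 with hf
  have hfm : Meromorphic f := fun z => (hAm z).inv.sub (MeromorphicAt.const 1 z)
  -- countable bad set
  have hdF : Differentiable ℂ (deriv F) := hF.contDiff.differentiable_deriv_two
  set B : Set ℂ := {-1} ∪ (fun w => (1 - w) / (1 + w)) '' (F '' {z | deriv F z = 0}) with hB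
  have hBc : B.Countable := (Set.countable_singleton _).union (((zeros_countable hdF hnc).image _).image _)
  have hgood : ∀ a, ‖a‖ = 1 → a ∉ B → ∀ R, 1 ≤ R →
      ValueDistribution.logCounting f a R ≤ ValueDistribution.logCounting f a 1 + M * Real.log R := by
    intro a ha haB R hR
    have ha1 : a ≠ -1 := fun h => haB (Or.inl h)
    have h1a : 1 + a ≠ 0 := fun h => ha1 (by linear_combination h)
    refine logCounting_good hF hnc hM ha ha1 ?_ hR
    intro z hz hdz
    refine haB (Or.inr ⟨F z, ⟨z, hdz, rfl⟩, ?_⟩)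
    simp only [hz]
    have : 1 + (1 - a) / (1 + a) = 2 / (1 + a) := by field_simp; ring
    rw [this]
    field_simp
    ring
  obtain ⟨κ, hκ⟩ := ValueDistribution.characteristic_top_eq_circleAverage_add_const hfm
  refine ⟨Real.circleAverage (fun a => ValueDistribution.logCounting f a 1) 0 1 + κ +
    (Real.posLog ‖(1:ℂ)‖ + Real.log 2) + max |Real.log ‖A 0‖| |Real.log ‖meromorphicTrailingCoeffAt A 0‖|, fun R hR => ?_⟩
  have i1 := ValueDistribution.circleIntegrable_logCounting (R := R) hfm
  have i2 := ValueDistribution.circleIntegrable_logCounting (R := 1) hfm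
  have i3 : CircleIntegrable (fun _ : ℂ => (M * Real.log R : ℝ)) 0 1 := circleIntegrable_const _ _ _
  have hmono : Real.circleAverage (fun a => ValueDistribution.logCounting f a R) 0 1 ≤
      Real.circleAverage (fun a => ValueDistribution.logCounting f a 1) 0 1 + M * Real.log R := by
    have e : Real.circleAverage (fun a : ℂ => ValueDistribution.logCounting f a 1 + M * Real.log R) 0 1 =
        Real.circleAverage (fun a => ValueDistribution.logCounting f a 1) 0 1 + M * Real.log R := by
      have := Real.circleAverage_fun_add i2 i3
      rw [this, Real.circleAverage_const]
    rw [← e]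
    unfold Real.circleAverage
    rw [smul_eq_mul, smul_eq_mul]
    refine mul_le_mul_of_nonneg_left ?_ (by positivity)
    refine intervalIntegral.integral_mono_ae (by positivity) i1 (i2.add i3) ?_
    have hae := (hBc.preimage_circleMap 0 one_ne_zero).ae_notMem volume
    filter_upwards [hae] with θ hθ
    exact hgood _ (by simp) hθ R hR
  have e1 := hκ R (by linarith)
  have e2 := ValueDistribution.abs_characteristic_sub_characteristic_shift_le (a₀ := (1:ℂ)) (r := R) hAim
  have e3 := ValueDistribution.characteristic_sub_characteristic_inv_le (R := R) hAm
  have e4 : ValueDistribution.characteristic A ⊤ R = ValueDistribution.proximity A ⊤ R + ValueDistribution.logCounting A ⊤ R := rfl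
  have e5 := ValueDistribution.logCounting_nonneg (f := A) (e := ⊤) hR
  rw [ValueDistribution.proximity_top] at e4
  have e6 : ValueDistribution.characteristic (fun x => A⁻¹ x - 1) ⊤ R = ValueDistribution.characteristic f ⊤ R := rfl
  rw [e6] at e2
  have e2' := (abs_le.1 e2).2
  have e3' := (abs_le.1 e3).2
  linarith



lemma submean {A : ℂ → ℂ} (hA : Differentiable ℂ A) (w : ℂ) {s : ℝ} (hs : 0 ≤ s) :
    Real.log ‖A w‖ ≤ Real.circleAverage (fun z => Real.posLog ‖A z‖) w s := by
  have hcont : Continuous (fun z => Real.posLog ‖A z‖) := Real.continuous_posLog.comp hA.continuous.norm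
  rcases hs.eq_or_lt with rfl | hs
  · rw [Real.circleAverage_zero]; exact le_max_right _ _
  have hi2 : CircleIntegrable (fun z => Real.posLog ‖A z‖) w s := hcont.continuousOn.circleIntegrable hs.le
  by_cases h0 : A w = 0
  · rw [h0, norm_zero, Real.log_zero]
    exact Real.circleAverage_nonneg_of_nonneg (fun z _ => Real.posLog_nonneg)
  have han : AnalyticOnNhd ℂ A (closedBall w |s|) := fun z _ => hA.analyticAt z
  have hj := AnalyticOnNhd.circleAverage_log_norm hs.ne' han h0
  have hi1 : CircleIntegrable (fun z => Real.log ‖A z‖) w s :=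
    MeromorphicOn.circleIntegrable_log_norm (fun z _ => (hA.analyticAt z).meromorphicAt)
  have hm : Real.circleAverage (fun z => Real.log ‖A z‖) w s ≤ Real.circleAverage (fun z => Real.posLog ‖A z‖) w s :=
    Real.circleAverage_mono hi1 hi2 (fun z _ => le_max_right _ _)
  refine le_trans ?_ hm
  rw [hj]
  refine le_add_of_nonneg_left (finsum_nonneg (fun u => ?_))
  by_cases hu : u ∈ closedBall w |s|
  · have h1 : (0:ℤ) ≤ MeromorphicOn.divisor A (closedBall w |s|) u := MeromorphicOn.AnalyticOnNhd.divisor_nonneg han u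
    refine mul_nonneg (by exact_mod_cast h1) ?_
    rcases eq_or_ne u w with rfl | hne
    · simp
    · have : 0 < ‖w - u‖ := norm_pos_iff.2 (sub_ne_zero.2 hne.symm)
      refine Real.log_nonneg ?_
      rw [← div_eq_mul_inv, le_div_iff₀ this, one_mul, ← dist_eq_norm, dist_comm]
      rwa [mem_closedBall, abs_of_pos hs] at hu
  · rw [Function.locallyFinsuppWithin.apply_eq_zero_of_notMem _ hu]; simp

lemma growth {A : ℂ → ℂ} (hA : Differentiable ℂ A) {M : ℕ} {C : ℝ}
    (h : ∀ R, 1 ≤ R → Real.circleAverage (fun z => Real.posLog ‖A z‖) 0 R ≤ M * Real.log R + C) :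
    ∃ K : ℝ, 0 ≤ K ∧ ∀ w, 1 ≤ ‖w‖ → Real.log ‖A w‖ ≤ 4 * (M * Real.log (2 * ‖w‖) + K) := by
  have hcont : Continuous (fun z => Real.posLog ‖A z‖) := Real.continuous_posLog.comp hA.continuous.norm
  obtain ⟨C1, hC1⟩ := (isCompact_closedBall (0:ℂ) 1).exists_bound_of_continuousOn hcont.continuousOn
  refine ⟨max 0 (max C C1), le_max_left _ _, fun w hw => ?_⟩
  set K := max 0 (max C C1) with hK
  set r := ‖w‖ with hr
  have hr0 : 0 < r := by linarith
  set T := M * Real.log (2 * r) + K with hT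
  have hav : ∀ s, 0 ≤ s → s ≤ 2 * r → Real.circleAverage (fun z => Real.posLog ‖A z‖) 0 s ≤ T := by
    intro s hs hs2
    have hKC : C ≤ K := (le_max_left _ _).trans (le_max_right _ _)
    have hKC1 : C1 ≤ K := (le_max_right _ _).trans (le_max_right _ _)
    rcases le_total 1 s with h1 | h1
    · refine (h s h1).trans ?_
      have : Real.log s ≤ Real.log (2 * r) := Real.log_le_log (by linarith) hs2
      rw [hT]
      gcongr
    · have : Real.circleAverage (fun z => Real.posLog ‖A z‖) 0 s ≤ C1 := by
        refine Real.circleAverage_mono_on_of_le_circle (hcont.continuousOn.circleIntegrable hs) (fun z hz => ?_)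
        refine (le_abs_self _).trans (hC1 z ?_)
        rw [abs_of_nonneg hs] at hz
        exact closedBall_subset_closedBall h1 (sphere_subset_closedBall hz)
      have h2 : 0 ≤ Real.log (2 * r) := Real.log_nonneg (by linarith)
      have h3 : 0 ≤ M * Real.log (2 * r) := by positivity
      linarith
  have hcInt : ∀ c : ℂ, Continuous (fun s : ℝ => Real.circleAverage (fun z => Real.posLog ‖A z‖) c s) := by
    intro c
    have hc : Continuous (fun s : ℝ => ∫ θ in (0:ℝ)..(2 * Real.pi), Real.posLog ‖A (circleMap c s θ)‖) := by
      refine intervalIntegral.continuous_parametric_intervalIntegral_of_continuous' (μ := volume) ?_ _ _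
      have h2 : Continuous (fun p : ℝ × ℝ => circleMap c p.1 p.2) := by
        unfold circleMap
        fun_prop
      exact hcont.comp h2
    exact hc.const_smul ((2 * Real.pi)⁻¹ : ℝ)
  have lin : ∀ R c : ℝ, ∫ s in (0:ℝ)..R, 2 * Real.pi * s * c = Real.pi * R ^ 2 * c := by
    intro R c
    have e : (fun s : ℝ => 2 * Real.pi * s * c) = fun s => (2 * Real.pi * c) * s := by ext s; ring
    rw [e, intervalIntegral.integral_const_mul, integral_id]
    ring
  have b1 : Real.pi * r ^ 2 * Real.log ‖A w‖ ≤ ∫ z in ball w r, Real.posLog ‖A z‖ := by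
    rw [integral_ball_eq _ hcont w r hr0.le, ← lin]
    refine intervalIntegral.integral_mono_on hr0.le (by apply Continuous.intervalIntegrable; fun_prop)
      (by apply Continuous.intervalIntegrable; have := hcInt w; fun_prop) (fun s hs => ?_)
    exact mul_le_mul_of_nonneg_left (submean hA w hs.1) (mul_nonneg (by positivity) hs.1)
  have b2 : ∫ z in ball w r, Real.posLog ‖A z‖ ≤ ∫ z in ball 0 (2 * r), Real.posLog ‖A z‖ := by
    refine setIntegral_mono_set ?_ (ae_of_all _ fun z => Real.posLog_nonneg) ?_
    · exact (hcont.continuousOn.integrableOn_compact (isCompact_closedBall (0:ℂ) (2*r))).mono_set ball_subset_closedBall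
    · refine (ball_subset_ball' ?_).eventuallyLE
      rw [dist_zero_right]; linarith
  have b3 : ∫ z in ball 0 (2 * r), Real.posLog ‖A z‖ ≤ Real.pi * (2 * r) ^ 2 * T := by
    rw [integral_ball_eq _ hcont 0 (2 * r) (by positivity), ← lin]
    refine intervalIntegral.integral_mono_on (by positivity)
      (by apply Continuous.intervalIntegrable; have := hcInt 0; fun_prop)  (by apply Continuous.intervalIntegrable; fun_prop) (fun s hs => ?_)
    exact mul_le_mul_of_nonneg_left (hav s hs.1 hs.2) (mul_nonneg (by positivity) hs.1)
  have hpos : 0 < Real.pi * r ^ 2 := by positivity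
  refine le_of_mul_le_mul_left ?_ hpos
  linarith

lemma poly_of_growth {F : ℂ → ℂ} (hF : Differentiable ℂ F) {K : ℝ} {m : ℕ}
    (h : ∀ z, 1 ≤ ‖z‖ → ‖F z‖ ≤ K * ‖z‖ ^ m) : ∀ n, m < n → tcoef F n = 0 := by
  intro n hn
  have hb : ∀ R : ℝ, 1 ≤ R → ‖tcoef F n‖ * R ≤ K := by
    intro R hR
    have hR0 : 0 < R := by linarith
    have h1 := Complex.norm_iteratedDeriv_le_of_forall_mem_sphere_norm_le n (c := 0) (C := K * R ^ m) hR0 hF.diffContOnCl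
      (fun z hz => by
        have hz' : ‖z‖ = R := by simpa using hz
        have := h z (by rw [hz']; exact hR)
        rwa [hz'] at this)
    have h2 : ‖tcoef F n‖ ≤ K * R ^ m / R ^ n := by
      unfold tcoef
      rw [norm_mul, norm_inv, Complex.norm_natCast]
      have : (0:ℝ) < (n.factorial : ℝ) := by exact_mod_cast n.factorial_pos
      rw [inv_mul_le_iff₀ this, ← mul_div_assoc]
      exact h1
    rw [le_div_iff₀ (by positivity)] at h2
    obtain ⟨j, rfl⟩ : ∃ j, n = m + 1 + j := ⟨n - (m+1), by omega⟩
    have h3 : ‖tcoef F (m+1+j)‖ * R * R ^ m ≤ K * R ^ m := by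
      refine le_trans ?_ h2
      have : R ^ (m+1+j) = R * R ^ m * R ^ j := by ring
      rw [this, mul_assoc]
      refine mul_le_mul_of_nonneg_left ?_ (norm_nonneg _)
      exact le_mul_of_one_le_right (by positivity) (one_le_pow₀ hR)
    exact le_of_mul_le_mul_right h3 (by positivity)
  by_contra hne
  have hp : 0 < ‖tcoef F n‖ := norm_pos_iff.2 hne
  have h1 := hb (max 1 ((K + 1) / ‖tcoef F n‖)) (le_max_left _ _)
  have h2 : (K + 1) / ‖tcoef F n‖ ≤ max 1 ((K + 1) / ‖tcoef F n‖) := le_max_right _ _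
  rw [div_le_iff₀ hp] at h2
  linarith

lemma poly_of_finite {F : ℂ → ℂ} (hF : Differentiable ℂ F)
    (hfin : (nodalComponents {z | (F z).re ≠ 0}).Finite) : ∃ N, ∀ n, N < n → tcoef F n = 0 := by
  by_cases hnc : ∃ z, deriv F z ≠ 0
  swap
  · push Not at hnc
    have hc : ∀ z, F z = F 0 := fun z => is_const_of_deriv_eq_zero hF hnc z 0
    exact ⟨0, poly_of_growth hF (K := ‖F 0‖) (m := 0) (fun z _ => by rw [hc z]; simp)⟩
  obtain ⟨M, hM⟩ := count_simple hF hfin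
  obtain ⟨C, hC⟩ := char_bound hF hnc hM
  obtain ⟨K, hK0, hK⟩ := growth (A := fun z => (1 + F z) / 2) (by fun_prop) hC
  refine ⟨4 * M, poly_of_growth hF (K := 3 * (Real.exp (4 * K) * 2 ^ (4 * M))) ?_⟩
  intro z hz
  have hz0 : 0 < ‖z‖ := by linarith
  have h1 : ‖(1 + F z) / 2‖ ≤ Real.exp (4 * K) * (2 * ‖z‖) ^ (4 * M) := by
    rcases eq_or_ne ((1 + F z) / 2) 0 with h0 | h0
    · rw [h0, norm_zero]; positivity
    rw [← Real.log_le_log_iff (norm_pos_iff.2 h0) (by positivity), Real.log_mul (Real.exp_pos _).ne' (by positivity),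
      Real.log_exp, Real.log_pow]
    have := hK z hz
    push_cast
    linarith
  have h2 : 1 ≤ Real.exp (4 * K) * (2 * ‖z‖) ^ (4 * M) :=
    one_le_mul_of_one_le_of_one_le (Real.one_le_exp (by positivity)) (one_le_pow₀ (by linarith))
  have h3 : ‖F z‖ ≤ 2 * ‖(1 + F z) / 2‖ + 1 := by
    have e : F z = 2 * ((1 + F z) / 2) - 1 := by ring
    calc ‖F z‖ = ‖2 * ((1 + F z) / 2) - 1‖ := by rw [← e]
      _ ≤ ‖2 * ((1 + F z) / 2)‖ + ‖(1:ℂ)‖ := norm_sub_le _ _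
      _ = _ := by rw [norm_mul]; simp
  rw [mul_pow] at h1 h2
  nlinarith

/-- **Proposition 5.3 (equivalence part)**: for a nontrivial entire harmonic function on ℝ²,
having finitely many nodal regions is equivalent to the Almgren frequency at the origin
having a finite limit at infinity. -/
theorem components_iff_finite_frequency
    (u : EuclideanSpace ℝ (Fin 2) → ℝ) (hu : HarmonicFn u) (hu0 : ∃ x, u x ≠ 0) :
    (∃ k : ℕ, 1 ≤ k ∧ (nodalComponents {x | u x ≠ 0}).Finite ∧
        (nodalComponents {x | u x ≠ 0}).ncard = k) ↔
      (∃ Ninf : ℝ, Tendsto (fun t => freqN u 0 t) atTop (nhds Ninf)) := by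
  obtain ⟨F, hF, h0, hre⟩ := harmonic_bridge u hu
  have hne : ∃ z, (F z).re ≠ 0 := by
    obtain ⟨x, hx⟩ := hu0
    exact ⟨eE.symm x, by rw [hre]; simpa using hx⟩
  have hκ : 0 < (μH[1] (sphere (0:ℂ) 1)).toReal := ENNReal.toReal_pos hm_circle_pos.ne' hm_circle_fin.ne
  have hfreq : (∃ L, Tendsto (fun t => freqN u 0 t) atTop (nhds L)) ↔ ∃ N, ∀ n, N < n → tcoef F n = 0 := by
    rw [← freq_iff hF h0 hne hκ]
    refine exists_congr fun L => tendsto_congr' ?_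
    filter_upwards [eventually_gt_atTop 0] with r hr
    unfold freqN
    rw [DInt_eq u F hF hre r, HInt_eq u F hF hre r hr]
  rw [hfreq]
  constructor
  · rintro ⟨k, _, hfin, _⟩
    exact poly_of_finite hF ((comps_bridge u F hre).1 hfin)
  · rintro ⟨N, hN⟩
    have hfin := (comps_bridge u F hre).2 (finite_comps hF hN)
    refine ⟨_, ?_, hfin, rfl⟩
    obtain ⟨x, hx⟩ := hu0
    exact (Set.ncard_pos hfin).2 ⟨_, x, hx, rfl⟩
end
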